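/- ∫₀^∞ I₀(2t)·I₀(t)·[K₀(t)]³·t dt = 3·∫₀^∞ K₀(2t)·[I₀(t)]²·[K₀(t)]²·t dt, and both quantities admit the closed forms ∫₀^∞ I₀(2t)·I₀(t)·[K₀(t)]³·t dt = (3π/2^{20/3})·(Γ(1/3)/√π)⁶ and ∫₀^∞ K₀(2t)·[I₀(t)]²·[K₀(t)]²·t dt = (π/2^{20/3})·(Γ(1/3)/√π)⁶. -/

import Mathlib

open Real MeasureTheory Set

/-- Modified Bessel function `I₀(t) = (1/π)∫₀^π exp(t cos θ) dθ`. -/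
noncomputable def I0 (t : ℝ) : ℝ := (1 / π) * ∫ θ in (0:ℝ)..π, exp (t * cos θ)

/-- Modified Bessel function `K₀(t) = ∫₀^∞ exp(−t cosh u) du`. -/
noncomputable def K0 (t : ℝ) : ℝ := ∫ u in Ioi (0:ℝ), exp (-(t * Real.cosh u))

/-- Rising factorial `(a)ₙ = a(a+1)⋯(a+n−1)`. -/
noncomputable def ris (a : ℝ) (n : ℕ) : ℝ := ∏ k ∈ Finset.range n, (a + k)

/-- Generalized hypergeometric series `ₚF_q(a; b | x)`. -/
noncomputable def pFq (a b : List ℝ) (x : ℝ) : ℝ :=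
  ∑' n : ℕ, ((a.map fun p => ris p n).prod / (b.map fun q => ris q n).prod) * x ^ n
    / (n.factorial : ℝ)

open scoped ENNReal

/-!
All integrands are nonnegative, so the integrals are taken in `[0, ∞]`, where Tonelli's theorem
applies freely. Graf's addition formula turns each product `K₀(at) I₀(bt)` into an angular average
of `K₀`, and Schwinger's representation evaluates the remaining moments of `K₀` as momentum
integrals of rational functions. The angular and momentum integrals are elementary up to the last
two: 16 times the first moment becomes the plane period
`P = ∬ dT dU / √((1 + T²)(1 + U²)(1 + (T - U)²))`, and the second moment becomes the integral of
`1 / √((1 - T²)(1 - U²)(1 - (T - U)²))` over the hexagon `|T|, |U|, |T - U| < 1`. Algebraic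
substitutions bring both to a common elliptic period `E`: the second moment is `E / 6` and
`P = 8 E`, which gives the ratio 3.

For the closed form, Schwinger parametrisation in projective coordinates brings both `P` and
`√3 ∬ |z³ - 1|⁻¹` to `∬ dX dY / √(X Y (1 + X + Y) (X + Y + X Y))` over the positive quadrant. The
covering `z ↦ z³` turns `∬ |z³ - 1|⁻¹` into the two-point integral `∬ |z|^(-4/3) |z - 1|⁻¹`, a
product of Gamma values.
-/

/-! ### Lebesgue integrals -/

section LebesgueIntegral

variable {α : Type*} [MeasurableSpace α] {μ : Measure α} {s : Set α}

lemma ofReal_mul_lintegral_ofReal {c : ℝ} (hc : 0 ≤ c) (f : α → ℝ) :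
    ENNReal.ofReal c * ∫⁻ x, ENNReal.ofReal (f x) ∂μ = ∫⁻ x, ENNReal.ofReal (c * f x) ∂μ := by
  rw [← lintegral_const_mul' _ _ ENNReal.ofReal_ne_top]
  simp only [ENNReal.ofReal_mul hc]

lemma setLIntegral_ofReal_eq_ofReal_setIntegral (hs : MeasurableSet s) {f : α → ℝ}
    (hf : IntegrableOn f s μ) (hf0 : ∀ x ∈ s, 0 ≤ f x) :
    ∫⁻ x in s, ENNReal.ofReal (f x) ∂μ = ENNReal.ofReal (∫ x in s, f x ∂μ) :=
  (ofReal_integral_eq_lintegral_ofReal hf (ae_restrict_of_forall_mem hs hf0)).symm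

lemma setLIntegral_ofReal_mul_lintegral_ofReal {β : Type*} [MeasurableSpace β] {ν : Measure β}
    (hs : MeasurableSet s) {f : α → ℝ} {g : β → ℝ} (hf : Measurable f) (hf0 : ∀ x ∈ s, 0 ≤ f x) :
    (∫⁻ a in s, ENNReal.ofReal (f a) ∂μ) * (∫⁻ b, ENNReal.ofReal (g b) ∂ν)
      = ∫⁻ a in s, ∫⁻ b, ENNReal.ofReal (f a * g b) ∂ν ∂μ := by
  rw [← lintegral_mul_const _ hf.ennreal_ofReal]
  exact setLIntegral_congr_fun hs fun a ha ↦ ofReal_mul_lintegral_ofReal (hf0 a ha) g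

lemma setLIntegral_ofReal_mul_mul {β γ : Type*} [MeasurableSpace β] [MeasurableSpace γ]
    {ν : Measure β} {ρ : Measure γ} {t : Set β} (hs : MeasurableSet s) (ht : MeasurableSet t)
    {f : α → ℝ} {g : β → ℝ} {h : γ → ℝ} (hf : Measurable f) (hg : Measurable g)
    (hf0 : ∀ x ∈ s, 0 ≤ f x) (hg0 : ∀ x ∈ t, 0 ≤ g x) :
    (∫⁻ a in s, ENNReal.ofReal (f a) ∂μ) *
        ((∫⁻ b in t, ENNReal.ofReal (g b) ∂ν) * ∫⁻ c, ENNReal.ofReal (h c) ∂ρ)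
      = ∫⁻ a in s, ∫⁻ b in t, ∫⁻ c, ENNReal.ofReal (f a * (g b * h c)) ∂ρ ∂ν ∂μ := by
  rw [setLIntegral_ofReal_mul_lintegral_ofReal ht hg hg0,
    ← lintegral_mul_const _ hf.ennreal_ofReal]
  refine setLIntegral_congr_fun hs fun a ha ↦ ?_
  simp only [← lintegral_const_mul' _ _ ENNReal.ofReal_ne_top, ← ENNReal.ofReal_mul (hf0 a ha)]

lemma setLIntegral_setLIntegral_eq_lintegral_indicator {β : Type*} [MeasurableSpace β]
    {ν : Measure β} {a : α → Set β} (hs : MeasurableSet s) (ha : ∀ x, MeasurableSet (a x))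
    (f : α → β → ℝ≥0∞) :
    ∫⁻ x in s, ∫⁻ y in a x, f x y ∂ν ∂μ = ∫⁻ x, ∫⁻ y,
      {p : α × β | p.1 ∈ s ∧ p.2 ∈ a p.1}.indicator (fun p ↦ f p.1 p.2) (x, y) ∂ν ∂μ := by
  rw [← lintegral_indicator hs]
  refine lintegral_congr fun x ↦ ?_
  by_cases hx : x ∈ s
  · rw [indicator_of_mem hx, ← lintegral_indicator (ha x)]
    refine lintegral_congr fun y ↦ ?_
    by_cases hy : y ∈ a x <;> simp [indicator, hx, hy]
  · simp [indicator, hx]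

end LebesgueIntegral

section Fubini

variable {α β γ δ ε ζ : Type*} [MeasurableSpace α] [MeasurableSpace β] [MeasurableSpace γ]
  [MeasurableSpace δ] [MeasurableSpace ε] [MeasurableSpace ζ]
  {μ : Measure α} {ν : Measure β} {ρ : Measure γ} {σ : Measure δ} {τ : Measure ε} {υ : Measure ζ}
  [SFinite μ] [SFinite ν] [SFinite ρ] [SFinite σ] [SFinite τ] [SFinite υ]

lemma lintegral_rotate₃ (f : α → β → γ → ℝ≥0∞)
    (hf : Measurable fun p : α × β × γ ↦ f p.1 p.2.1 p.2.2) :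
    ∫⁻ a, ∫⁻ b, ∫⁻ c, f a b c ∂ρ ∂ν ∂μ = ∫⁻ b, ∫⁻ c, ∫⁻ a, f a b c ∂μ ∂ρ ∂ν := by
  have hf_inner : Measurable fun q : (α × β) × γ ↦ f q.1.1 q.1.2 q.2 :=
    hf.comp (by fun_prop : Measurable fun q : (α × β) × γ ↦ (q.1.1, q.1.2, q.2))
  rw [lintegral_lintegral_swap hf_inner.lintegral_prod_right'.aemeasurable]
  refine lintegral_congr fun b ↦ lintegral_lintegral_swap (Measurable.aemeasurable ?_)
  exact hf.comp (by fun_prop : Measurable fun q : α × γ ↦ (q.1, b, q.2))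

lemma lintegral_rotate₄ (f : α → β → γ → δ → ℝ≥0∞)
    (hf : Measurable fun p : α × β × γ × δ ↦ f p.1 p.2.1 p.2.2.1 p.2.2.2) :
    ∫⁻ a, ∫⁻ b, ∫⁻ c, ∫⁻ d, f a b c d ∂σ ∂ρ ∂ν ∂μ
      = ∫⁻ b, ∫⁻ c, ∫⁻ d, ∫⁻ a, f a b c d ∂μ ∂σ ∂ρ ∂ν := by
  have hf_inner : Measurable fun q : (α × β × γ) × δ ↦ f q.1.1 q.1.2.1 q.1.2.2 q.2 :=
    hf.comp (by fun_prop :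
      Measurable fun q : (α × β × γ) × δ ↦ (q.1.1, q.1.2.1, q.1.2.2, q.2))
  rw [lintegral_rotate₃ _ hf_inner.lintegral_prod_right']
  refine lintegral_congr fun b ↦ lintegral_congr fun c ↦
    lintegral_lintegral_swap (Measurable.aemeasurable ?_)
  exact hf.comp (by fun_prop : Measurable fun q : α × δ ↦ (q.1, b, c, q.2))

lemma lintegral_swap_two_three (f : α → β → γ → δ → ε → ℝ≥0∞)
    (hf : Measurable fun p : α × β × γ × δ × ε ↦ f p.1 p.2.1 p.2.2.1 p.2.2.2.1 p.2.2.2.2) :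
    ∫⁻ a, ∫⁻ b, ∫⁻ c, ∫⁻ d, ∫⁻ e, f a b c d e ∂τ ∂σ ∂ρ ∂ν ∂μ
      = ∫⁻ c, ∫⁻ d, ∫⁻ e, ∫⁻ a, ∫⁻ b, f a b c d e ∂ν ∂μ ∂τ ∂σ ∂ρ := by
  have rotate_inner (a : α) : ∫⁻ b, ∫⁻ c, ∫⁻ d, ∫⁻ e, f a b c d e ∂τ ∂σ ∂ρ ∂ν
      = ∫⁻ c, ∫⁻ d, ∫⁻ e, ∫⁻ b, f a b c d e ∂ν ∂τ ∂σ ∂ρ :=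
    lintegral_rotate₄ (f a) (hf.comp (by fun_prop : Measurable fun q : β × γ × δ × ε ↦ (a, q)))
  simp only [rotate_inner]
  have hf_inner : Measurable fun q : (α × γ × δ × ε) × β ↦
      f q.1.1 q.2 q.1.2.1 q.1.2.2.1 q.1.2.2.2 :=
    hf.comp (by fun_prop : Measurable fun q : (α × γ × δ × ε) × β ↦ (q.1.1, q.2, q.1.2))
  exact lintegral_rotate₄ _ hf_inner.lintegral_prod_right'

lemma lintegral_swap_three_three (f : α → β → γ → δ → ε → ζ → ℝ≥0∞)
    (hf : Measurable fun p : α × β × γ × δ × ε × ζ ↦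
      f p.1 p.2.1 p.2.2.1 p.2.2.2.1 p.2.2.2.2.1 p.2.2.2.2.2) :
    ∫⁻ a, ∫⁻ b, ∫⁻ c, ∫⁻ x, ∫⁻ y, ∫⁻ z, f a b c x y z ∂υ ∂τ ∂σ ∂ρ ∂ν ∂μ
      = ∫⁻ x, ∫⁻ y, ∫⁻ z, ∫⁻ a, ∫⁻ b, ∫⁻ c, f a b c x y z ∂ρ ∂ν ∂μ ∂υ ∂τ ∂σ := by
  have swap_inner (a : α) : ∫⁻ b, ∫⁻ c, ∫⁻ x, ∫⁻ y, ∫⁻ z, f a b c x y z ∂υ ∂τ ∂σ ∂ρ ∂ν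
      = ∫⁻ x, ∫⁻ y, ∫⁻ z, ∫⁻ b, ∫⁻ c, f a b c x y z ∂ρ ∂ν ∂υ ∂τ ∂σ :=
    lintegral_swap_two_three (f a)
      (hf.comp (by fun_prop : Measurable fun q : β × γ × δ × ε × ζ ↦ (a, q)))
  simp only [swap_inner]
  have hf_inner : Measurable fun q : ((α × δ × ε × ζ) × β) × γ ↦
      f q.1.1.1 q.1.2 q.2 q.1.1.2.1 q.1.1.2.2.1 q.1.1.2.2.2 :=
    hf.comp (by fun_prop : Measurable fun q : ((α × δ × ε × ζ) × β) × γ ↦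
      (q.1.1.1, q.1.2, q.2, q.1.1.2))
  exact lintegral_rotate₄ _ hf_inner.lintegral_prod_right'.lintegral_prod_right'

lemma setLIntegral_setLIntegral_swap {s : Set α} {t : Set β} {a : α → Set β} {b : β → Set α}
    {f : α → β → ℝ≥0∞} (hs : MeasurableSet s) (ht : MeasurableSet t)
    (ha : ∀ x, MeasurableSet (a x)) (hb : ∀ y, MeasurableSet (b y))
    (hsa : MeasurableSet {p : α × β | p.1 ∈ s ∧ p.2 ∈ a p.1})
    (h : ∀ x y, x ∈ s ∧ y ∈ a x ↔ y ∈ t ∧ x ∈ b y) (hf : Measurable fun p : α × β ↦ f p.1 p.2) :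
    ∫⁻ x in s, ∫⁻ y in a x, f x y ∂ν ∂μ = ∫⁻ y in t, ∫⁻ x in b y, f x y ∂μ ∂ν := by
  rw [setLIntegral_setLIntegral_eq_lintegral_indicator hs ha,
    setLIntegral_setLIntegral_eq_lintegral_indicator ht hb (fun y x ↦ f x y),
    lintegral_lintegral_swap (f := fun x y ↦ {p : α × β | p.1 ∈ s ∧ p.2 ∈ a p.1}.indicator
      (fun p ↦ f p.1 p.2) (x, y)) (hf.indicator hsa).aemeasurable]
  refine lintegral_congr fun y ↦ lintegral_congr fun x ↦ ?_
  by_cases hxy : y ∈ t ∧ x ∈ b y <;> simp [indicator, h, hxy]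

lemma measurable_setLIntegral_of_measurableSet {a : α → Set β} {f : α → β → ℝ≥0∞}
    (ha : MeasurableSet {p : α × β | p.2 ∈ a p.1}) (hf : Measurable fun p : α × β ↦ f p.1 p.2) :
    Measurable fun x ↦ ∫⁻ y in a x, f x y ∂ν := by
  have h_section (x : α) : MeasurableSet (a x) := ha.preimage measurable_prodMk_left
  simp_rw [← lintegral_indicator (h_section _)]
  exact Measurable.lintegral_prod_right' (hf.indicator ha)

end Fubini

section ChangeOfVariables

lemma setLIntegral_eq_of_invOn {φ φ' ψ : ℝ → ℝ} {s t : Set ℝ} (hs : MeasurableSet s)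
    (hd : ∀ x ∈ s, HasDerivAt φ (φ' x) x) (hφ : MapsTo φ s t) (hψ : MapsTo ψ t s)
    (hinv : InvOn ψ φ s t) (f : ℝ → ℝ≥0∞) :
    ∫⁻ y in t, f y = ∫⁻ x in s, ENNReal.ofReal |φ' x| * f (φ x) := by
  have hbij : BijOn φ s t := hinv.bijOn hφ hψ
  rw [← hbij.image_eq]
  exact lintegral_image_eq_lintegral_abs_deriv_mul hs
    (fun x hx ↦ (hd x hx).hasDerivWithinAt) hbij.injOn f

lemma setLIntegral_eq_of_invOn_of_deriv_nonneg {φ φ' ψ : ℝ → ℝ} {s t : Set ℝ}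
    (hs : MeasurableSet s) (hd : ∀ x ∈ s, HasDerivAt φ (φ' x) x) (hφ' : ∀ x ∈ s, 0 ≤ φ' x)
    (hφ : MapsTo φ s t) (hψ : MapsTo ψ t s) (hinv : InvOn ψ φ s t) (f : ℝ → ℝ≥0∞) :
    ∫⁻ y in t, f y = ∫⁻ x in s, ENNReal.ofReal (φ' x) * f (φ x) := by
  rw [setLIntegral_eq_of_invOn hs hd hφ hψ hinv]
  exact setLIntegral_congr_fun hs fun x hx ↦ by rw [abs_of_nonneg (hφ' x hx)]

lemma setLIntegral_Ioo_comp_neg (a b : ℝ) (f : ℝ → ℝ≥0∞) :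
    ∫⁻ x in Ioo a b, f (-x) = ∫⁻ x in Ioo (-b) (-a), f x := by
  have := (Measure.measurePreserving_neg (volume : Measure ℝ)).setLIntegral_comp_preimage_emb
    (MeasurableEquiv.neg ℝ).measurableEmbedding f (Ioo (-b) (-a))
  simpa using this

lemma setLIntegral_Ioo_comp_add_right (a b c : ℝ) (f : ℝ → ℝ≥0∞) :
    ∫⁻ x in Ioo a b, f (x + c) = ∫⁻ x in Ioo (a + c) (b + c), f x := by
  have := (measurePreserving_add_right volume c).setLIntegral_comp_preimage_emb
    (MeasurableEquiv.addRight c).measurableEmbedding f (Ioo (a + c) (b + c))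
  simpa using this

lemma lintegral_of_even {f : ℝ → ℝ≥0∞} (hf : ∀ x, f (-x) = f x) :
    ∫⁻ x, f x = 2 * ∫⁻ x in Ioi (0 : ℝ), f x := by
  have h_neg : ∫⁻ x in Iio (0 : ℝ), f x = ∫⁻ x in Ioi (0 : ℝ), f x := by
    have := (Measure.measurePreserving_neg (volume : Measure ℝ)).setLIntegral_comp_preimage_emb
      (MeasurableEquiv.neg ℝ).measurableEmbedding f (Iio 0)
    simpa [hf] using this.symm
  rw [← lintegral_add_compl f (measurableSet_Iic (a := (0 : ℝ))), compl_Iic,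
    setLIntegral_congr Iio_ae_eq_Iic.symm, h_neg, two_mul]

lemma lintegral_lintegral_of_even {f : ℝ → ℝ → ℝ≥0∞} (hf₁ : ∀ x y, f (-x) y = f x y)
    (hf₂ : ∀ x y, f x (-y) = f x y) :
    ∫⁻ x, ∫⁻ y, f x y = 4 * ∫⁻ x in Ioi (0 : ℝ), ∫⁻ y in Ioi (0 : ℝ), f x y := by
  rw [lintegral_of_even fun x ↦ by simp only [hf₁]]
  simp only [lintegral_of_even (hf₂ _)]
  rw [lintegral_const_mul' _ _ (by norm_num), ← mul_assoc]
  norm_num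

lemma setLIntegral_Ioo_neg_self_of_even (c : ℝ) {f : ℝ → ℝ≥0∞} (hf : ∀ x, f (-x) = f x) :
    ∫⁻ x in Ioo (-c) c, f x = 2 * ∫⁻ x in Ioo 0 c, f x := by
  have h_even : ∀ x, (Ioo (-c) c).indicator f (-x) = (Ioo (-c) c).indicator f x := fun x ↦ by
    simp only [indicator_apply, mem_Ioo, hf, neg_lt_neg_iff, neg_lt (a := x), and_comm]
  rw [← lintegral_indicator measurableSet_Ioo, lintegral_of_even h_even,
    setLIntegral_indicator measurableSet_Ioo]
  congr 3
  ext x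
  simp only [mem_inter_iff, mem_Ioo, mem_Ioi]
  exact ⟨fun ⟨⟨_, hxc⟩, hx⟩ ↦ ⟨hx, hxc⟩, fun ⟨hx, hxc⟩ ↦ ⟨⟨by linarith, hxc⟩, hx⟩⟩

lemma lintegral_eq_ofReal_mul_lintegral_comp_mul_left {c : ℝ} (hc : 0 < c) (f : ℝ → ℝ≥0∞) :
    ∫⁻ x, f x = ENNReal.ofReal c * ∫⁻ x, f (c * x) := by
  rw [← lintegral_const_mul' _ _ ENNReal.ofReal_ne_top]
  have := setLIntegral_eq_of_invOn_of_deriv_nonneg (φ := fun x ↦ c * x) (φ' := fun _ ↦ c)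
    (ψ := fun x ↦ c⁻¹ * x) MeasurableSet.univ
    (fun x _ ↦ by simpa using (hasDerivAt_id x).const_mul c) (fun _ _ ↦ hc.le)
    (mapsTo_univ _ univ) (mapsTo_univ _ _)
    ⟨fun x _ ↦ by field_simp, fun x _ ↦ by field_simp⟩ f
  simpa only [Measure.restrict_univ] using this

lemma setLIntegral_Ioi_eq_ofReal_mul_comp_mul_left {c : ℝ} (hc : 0 < c) (f : ℝ → ℝ≥0∞) :
    ∫⁻ x in Ioi (0 : ℝ), f x = ENNReal.ofReal c * ∫⁻ x in Ioi (0 : ℝ), f (c * x) := by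
  rw [← lintegral_const_mul' _ _ ENNReal.ofReal_ne_top]
  exact setLIntegral_eq_of_invOn_of_deriv_nonneg (ψ := fun x ↦ c⁻¹ * x) measurableSet_Ioi
    (fun x _ ↦ by simpa using (hasDerivAt_id x).const_mul c) (fun _ _ ↦ hc.le)
    (fun _ hx ↦ mul_pos hc hx) (fun _ hx ↦ mul_pos (inv_pos.2 hc) hx)
    ⟨fun x _ ↦ by field_simp, fun x _ ↦ by field_simp⟩ f

lemma lintegral_lintegral_eq_two_mul_comp_add_sub {f : ℝ → ℝ → ℝ≥0∞}
    (hf : Measurable fun p : ℝ × ℝ ↦ f p.1 p.2) :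
    ∫⁻ x, ∫⁻ y, f x y = 2 * ∫⁻ a, ∫⁻ b, f (a + b) (a - b) := by
  have inner_eq (x : ℝ) : ∫⁻ y, f x y = 2 * ∫⁻ b, f x (x - 2 * b) := by
    rw [← lintegral_sub_left_eq_self (f x) x,
      lintegral_eq_ofReal_mul_lintegral_comp_mul_left two_pos, ENNReal.ofReal_ofNat]
  have shift_eq (b : ℝ) : ∫⁻ x, f x (x - 2 * b) = ∫⁻ a, f (a + b) (a - b) := by
    rw [← lintegral_add_right_eq_self _ b]
    exact lintegral_congr fun a ↦ by ring_nf
  simp_rw [inner_eq]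
  rw [lintegral_const_mul' _ _ (by norm_num), lintegral_lintegral_swap]
  · simp only [shift_eq]
    rw [lintegral_lintegral_swap]
    exact (hf.comp (by fun_prop :
      Measurable fun p : ℝ × ℝ ↦ (p.2 + p.1, p.2 - p.1))).aemeasurable
  · exact (hf.comp (by fun_prop :
      Measurable fun p : ℝ × ℝ ↦ (p.1, p.1 - 2 * p.2))).aemeasurable

lemma lintegral_lintegral_eq_polar {f : ℝ → ℝ → ℝ≥0∞}
    (hf : Measurable fun p : ℝ × ℝ ↦ f p.1 p.2) :
    ∫⁻ x, ∫⁻ y, f x y = ∫⁻ r in Ioi (0 : ℝ), ∫⁻ θ in Ioo (-π) π,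
      ENNReal.ofReal r * f (r * cos θ) (r * sin θ) := by
  have h := lintegral_comp_polarCoord_symm (fun p : ℝ × ℝ ↦ f p.1 p.2)
  rw [Measure.volume_eq_prod, lintegral_prod _ hf.aemeasurable] at h
  rw [← h, polarCoord_target, ← Measure.prod_restrict, lintegral_prod]
  · simp only [polarCoord_symm_apply, smul_eq_mul]
  · simp only [polarCoord_symm_apply, smul_eq_mul]
    have := hf.comp (by fun_prop : Measurable fun p : ℝ × ℝ ↦ (p.1 * cos p.2, p.1 * sin p.2))
    exact (Measurable.mul (by fun_prop) this).aemeasurable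

lemma setLIntegral_Ioo_add_Ioo {a b c : ℝ} (hab : a < b) (hbc : b < c) (f : ℝ → ℝ≥0∞) :
    (∫⁻ x in Ioo a b, f x) + ∫⁻ x in Ioo b c, f x = ∫⁻ x in Ioo a c, f x := by
  rw [setLIntegral_congr (Ioo_ae_eq_Ioc (a := a) (b := b)), ← lintegral_union measurableSet_Ioo
    (Set.disjoint_left.2 fun _ hx hy ↦ hy.1.not_ge hx.2), Ioc_union_Ioo_eq_Ioo hab.le hbc]

lemma setLIntegral_triangle_swap (a b : ℝ) {f : ℝ → ℝ → ℝ≥0∞}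
    (hf : Measurable fun p : ℝ × ℝ ↦ f p.1 p.2) :
    ∫⁻ x in Ioo a b, ∫⁻ y in Ioo x b, f x y = ∫⁻ y in Ioo a b, ∫⁻ x in Ioo a y, f x y :=
  setLIntegral_setLIntegral_swap measurableSet_Ioo measurableSet_Ioo (fun _ ↦ measurableSet_Ioo)
    (fun _ ↦ measurableSet_Ioo) (by simp only [mem_Ioo]; measurability)
    (fun x y ↦ by simp only [mem_Ioo]; grind) hf

lemma setLIntegral_square_of_symm (a b : ℝ) {f : ℝ → ℝ → ℝ≥0∞}
    (hf : Measurable fun p : ℝ × ℝ ↦ f p.1 p.2) (hsymm : ∀ x y, f x y = f y x) :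
    ∫⁻ x in Ioo a b, ∫⁻ y in Ioo a b, f x y
      = 2 * ∫⁻ x in Ioo a b, ∫⁻ y in Ioo a x, f x y := by
  have h_upper : ∫⁻ x in Ioo a b, ∫⁻ y in Ioo x b, f x y
      = ∫⁻ x in Ioo a b, ∫⁻ y in Ioo a x, f x y := by
    rw [setLIntegral_triangle_swap a b hf]
    simp only [hsymm]
  rw [two_mul]
  nth_rw 2 [← h_upper]
  rw [← lintegral_add_left (measurable_setLIntegral_of_measurableSet
    (by simp only [mem_Ioo]; measurability) hf)]
  exact setLIntegral_congr_fun measurableSet_Ioo fun x hx ↦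
    (setLIntegral_Ioo_add_Ioo hx.1 hx.2 _).symm

lemma setLIntegral_Ioo_add_eq_of_periodic {f : ℝ → ℝ≥0∞} {T : ℝ} (hT : 0 < T)
    (hf : Function.Periodic f T) (a b : ℝ) :
    ∫⁻ x in Ioo a (a + T), f x = ∫⁻ x in Ioo b (b + T), f x := by
  rw [setLIntegral_congr Ioo_ae_eq_Ioc, setLIntegral_congr Ioo_ae_eq_Ioc]
  have : VAddInvariantMeasure (AddSubgroup.zmultiples T) ℝ volume :=
    ⟨fun _ _ _ ↦ measure_preimage_add _ _ _⟩
  exact (isAddFundamentalDomain_Ioc hT a).setLIntegral_eq (isAddFundamentalDomain_Ioc hT b) f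
    hf.map_vadd_zmultiples

lemma setLIntegral_Ioo_nat_mul_of_periodic {f : ℝ → ℝ≥0∞} {T : ℝ} (hT : 0 < T)
    (hf : Function.Periodic f T) (n : ℕ) :
    ∫⁻ x in Ioo 0 (n * T), f x = n * ∫⁻ x in Ioo 0 T, f x := by
  induction n with
  | zero => simp
  | succ n ih =>
    rcases n.eq_zero_or_pos with rfl | hn
    · simp
    have h_last := setLIntegral_Ioo_add_eq_of_periodic hT hf (n * T) 0
    rw [zero_add] at h_last
    rw [Nat.cast_succ, add_one_mul (n : ℝ), ← setLIntegral_Ioo_add_Ioo (b := n * T) (by positivity)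
      (lt_add_of_pos_right _ hT), ih, h_last, Nat.cast_succ, add_one_mul]

lemma setLIntegral_Ioo_comp_nat_mul_of_periodic {f : ℝ → ℝ≥0∞} {T : ℝ} (hT : 0 < T)
    (hf : Function.Periodic f T) {n : ℕ} (hn : n ≠ 0) (a : ℝ) :
    ∫⁻ x in Ioo a (a + T), f (n * x) = ∫⁻ x in Ioo a (a + T), f x := by
  have hn_pos : (0 : ℝ) < n := by positivity
  have hf_comp : Function.Periodic (fun x ↦ f (n * x)) T := fun x ↦ by
    simpa only [mul_add, nsmul_eq_mul] using hf.nsmul n (n * x)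
  have h_scale : ∫⁻ x in Ioo 0 (n * T), f x = n * ∫⁻ x in Ioo 0 T, f (n * x) := by
    rw [setLIntegral_eq_of_invOn_of_deriv_nonneg (s := Ioo 0 T) (t := Ioo 0 (n * T))
      (φ := fun x ↦ n * x) (φ' := fun _ ↦ n) (ψ := fun x ↦ x / n)
      measurableSet_Ioo
      (fun x _ ↦ by simpa using (hasDerivAt_id x).const_mul (n : ℝ)) (fun _ _ ↦ hn_pos.le)
      (fun x hx ↦ ⟨mul_pos hn_pos hx.1, mul_lt_mul_of_pos_left hx.2 hn_pos⟩)
      (fun x hx ↦ ⟨div_pos hx.1 hn_pos, (div_lt_iff₀' hn_pos).2 hx.2⟩)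
      ⟨fun x _ ↦ by field_simp, fun x _ ↦ by field_simp⟩,
      lintegral_const_mul' _ _ ENNReal.ofReal_ne_top, ENNReal.ofReal_natCast]
  rw [setLIntegral_Ioo_add_eq_of_periodic hT hf_comp a 0,
    setLIntegral_Ioo_add_eq_of_periodic hT hf a 0, zero_add,
    ← ENNReal.mul_right_inj (a := n) (by simpa using hn) (ENNReal.natCast_ne_top n), ← h_scale,
    setLIntegral_Ioo_nat_mul_of_periodic hT hf]

lemma setLIntegral_Ioi_eq_comp_pow {n : ℕ} (hn : n ≠ 0) (f : ℝ → ℝ≥0∞) :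
    ∫⁻ x in Ioi (0 : ℝ), f x
      = ∫⁻ x in Ioi (0 : ℝ), ENNReal.ofReal (n * x ^ (n - 1)) * f (x ^ n) :=
  setLIntegral_eq_of_invOn_of_deriv_nonneg (ψ := fun x ↦ x ^ (n : ℝ)⁻¹) measurableSet_Ioi
    (fun x _ ↦ hasDerivAt_pow n x) (fun x (hx : 0 < x) ↦ by positivity)
    (fun x hx ↦ pow_pos hx n) (fun x hx ↦ rpow_pos_of_pos hx _)
    ⟨fun x (hx : 0 < x) ↦ pow_rpow_inv_natCast hx.le hn,
      fun x (hx : 0 < x) ↦ rpow_inv_natCast_pow hx.le hn⟩ f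

end ChangeOfVariables

section StandardIntegrals

lemma setLIntegral_rpow_mul_exp_neg_mul_rpow {p q c : ℝ} (hp : 0 < p) (hq : -1 < q) (hc : 0 < c) :
    ∫⁻ x in Ioi (0 : ℝ), ENNReal.ofReal (x ^ q * exp (-c * x ^ p))
      = ENNReal.ofReal (c ^ (-(q + 1) / p) * (1 / p) * Gamma ((q + 1) / p)) := by
  rw [← integral_rpow_mul_exp_neg_mul_rpow hp hq hc]
  exact setLIntegral_ofReal_eq_ofReal_setIntegral measurableSet_Ioi
    (integrableOn_rpow_mul_exp_neg_mul_rpow hq hp hc) fun x (hx : 0 < x) ↦ by positivity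

lemma setLIntegral_rpow_sub_one_mul_exp_neg_mul {p c : ℝ} (hp : 0 < p) (hc : 0 < c) :
    ∫⁻ x in Ioi (0 : ℝ), ENNReal.ofReal (x ^ (p - 1) * exp (-(c * x)))
      = ENNReal.ofReal (Gamma p * c ^ (-p)) := by
  simpa [mul_comm] using
    setLIntegral_rpow_mul_exp_neg_mul_rpow one_pos (by linarith : -1 < p - 1) hc

lemma setLIntegral_exp_neg_mul {c : ℝ} (hc : 0 < c) :
    ∫⁻ x in Ioi (0 : ℝ), ENNReal.ofReal (exp (-(c * x))) = ENNReal.ofReal (1 / c) := by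
  simpa [rpow_neg_one] using setLIntegral_rpow_sub_one_mul_exp_neg_mul one_pos hc

lemma setLIntegral_mul_exp_neg_mul_sq {c : ℝ} (hc : 0 < c) :
    ∫⁻ x in Ioi (0 : ℝ), ENNReal.ofReal (x * exp (-(c * x ^ 2)))
      = ENNReal.ofReal (1 / (2 * c)) := by
  have h := setLIntegral_rpow_mul_exp_neg_mul_rpow two_pos (by norm_num : (-1 : ℝ) < 1) hc
  norm_num [rpow_neg_one] at h
  simpa [mul_comm] using h

lemma lintegral_exp_neg_mul_sub_sq {c : ℝ} (hc : 0 < c) (d : ℝ) :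
    ∫⁻ x, ENNReal.ofReal (exp (-(c * (x - d) ^ 2))) = ENNReal.ofReal (√(π / c)) := by
  rw [lintegral_sub_right_eq_self (fun x ↦ ENNReal.ofReal (exp (-(c * x ^ 2)))) d,
    ← integral_gaussian c, ofReal_integral_eq_lintegral_ofReal (integrable_exp_neg_mul_sq hc)
    (.of_forall fun x ↦ (exp_pos _).le)]
  simp only [neg_mul]

lemma cos_lt_one_of_mem_Ioo {θ : ℝ} (hθ : θ ∈ Ioo 0 π) : cos θ < 1 := by
  simpa using cos_lt_cos_of_nonneg_of_le_pi le_rfl hθ.2.le hθ.1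

lemma setLIntegral_eq_two_mul_arctan (f : ℝ → ℝ≥0∞) :
    ∫⁻ θ in Ioo 0 π, f θ
      = ∫⁻ x in Ioi (0 : ℝ), ENNReal.ofReal (2 * (1 / (1 + x ^ 2))) * f (2 * arctan x) := by
  refine setLIntegral_eq_of_invOn_of_deriv_nonneg (ψ := fun θ ↦ tan (θ / 2)) measurableSet_Ioi
    (fun x _ ↦ (hasDerivAt_arctan x).const_mul 2) (fun x _ ↦ by positivity) (fun x hx ↦ ?_)
    (fun θ hθ ↦ ?_) ⟨fun x _ ↦ by simp [tan_arctan], fun θ hθ ↦ ?_⟩ f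
  · exact ⟨by linarith [arctan_pos.2 hx], by linarith [arctan_lt_pi_div_two x]⟩
  · exact tan_pos_of_pos_of_lt_pi_div_two (by linarith [hθ.1]) (by linarith [hθ.2])
  · simp only [arctan_tan (by linarith [hθ.1, pi_pos] : -(π / 2) < θ / 2)
      (by linarith [hθ.2] : θ / 2 < π / 2), mul_div_cancel₀ θ two_ne_zero]

lemma setLIntegral_one_div_sub_mul_cos {p q : ℝ} (hq : 0 ≤ q) (hqp : q < p) :
    ∫⁻ θ in Ioo 0 π, ENNReal.ofReal (1 / (p - q * cos θ))
      = ENNReal.ofReal (π / √(p ^ 2 - q ^ 2)) := by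
  have h_sub : 0 < p - q := sub_pos.2 hqp
  have h_add : 0 < p + q := by linarith
  set c := √((p - q) / (p + q)) with hc
  have hc0 : 0 < c := sqrt_pos.2 (by positivity)
  have hc2 : c ^ 2 * (p + q) = p - q := by
    rw [hc, sq_sqrt (by positivity)]
    field_simp
  have integrand_eq (x : ℝ) : ENNReal.ofReal (2 * (1 / (1 + (c * x) ^ 2)))
        * ENNReal.ofReal (1 / (p - q * cos (2 * arctan (c * x))))
      = ENNReal.ofReal (2 / (p - q) * (1 + x ^ 2)⁻¹) := by
    have h_denom : p - q * (2 * (1 / (1 + (c * x) ^ 2)) - 1)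
        = (p - q) * (1 + x ^ 2) / (1 + (c * x) ^ 2) := by
      field_simp
      linear_combination x ^ 2 * hc2
    rw [← ENNReal.ofReal_mul (by positivity), cos_two_mul, cos_sq_arctan, h_denom]
    congr 1
    field_simp
  have sqrt_eq : √(p ^ 2 - q ^ 2) = c * (p + q) := by
    rw [show p ^ 2 - q ^ 2 = (c * (p + q)) ^ 2 by linear_combination (-(p + q)) * hc2]
    exact sqrt_sq (by positivity)
  rw [setLIntegral_eq_two_mul_arctan, setLIntegral_Ioi_eq_ofReal_mul_comp_mul_left hc0]
  simp only [integrand_eq]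
  rw [← ofReal_mul_lintegral_ofReal (by positivity),
    setLIntegral_ofReal_eq_ofReal_setIntegral measurableSet_Ioi
      integrable_inv_one_add_sq.integrableOn (fun x _ ↦ by positivity),
    integral_Ioi_inv_one_add_sq, arctan_zero, ← ENNReal.ofReal_mul (by positivity),
    ← ENNReal.ofReal_mul hc0.le, sqrt_eq, ← hc2]
  congr 1
  field_simp
  ring

end StandardIntegrals

/-! ### Bessel functions -/

section BesselFunctions

lemma sq_div_four_le_cosh (u : ℝ) : u ^ 2 / 4 ≤ cosh u := by
  rw [← Real.cosh_abs, ← sq_abs, Real.cosh_eq]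
  linarith [Real.quadratic_le_exp_of_nonneg (abs_nonneg u), exp_pos (-|u|), abs_nonneg u]

lemma integrable_exp_neg_mul_cosh {x : ℝ} (hx : 0 < x) :
    Integrable fun u : ℝ ↦ exp (-(x * cosh u)) := by
  refine (integrable_exp_neg_mul_sq (b := x / 4) (by positivity)).mono'
    (Continuous.aestronglyMeasurable (by fun_prop)) (.of_forall fun u ↦ ?_)
  rw [norm_of_nonneg (exp_pos _).le, exp_le_exp]
  linarith [mul_le_mul_of_nonneg_left (sq_div_four_le_cosh u) hx.le]

lemma integral_exp_neg_mul_cosh (x : ℝ) : ∫ u, exp (-(x * cosh u)) = 2 * K0 x := by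
  simpa [K0] using integral_comp_abs (f := fun u ↦ exp (-(x * cosh u)))

lemma ofReal_K0 {x : ℝ} (hx : 0 < x) :
    ENNReal.ofReal (K0 x) = ∫⁻ u in Ioi (0 : ℝ), ENNReal.ofReal (exp (-(x * cosh u))) :=
  (setLIntegral_ofReal_eq_ofReal_setIntegral measurableSet_Ioi
    (integrable_exp_neg_mul_cosh hx).integrableOn fun _ _ ↦ (exp_pos _).le).symm

lemma two_mul_ofReal_K0 {x : ℝ} (hx : 0 < x) :
    2 * ENNReal.ofReal (K0 x) = ∫⁻ u, ENNReal.ofReal (exp (-(x * cosh u))) := by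
  rw [lintegral_of_even (by simp), ofReal_K0 hx]

lemma K0_nonneg (x : ℝ) : 0 ≤ K0 x :=
  setIntegral_nonneg measurableSet_Ioi fun _ _ ↦ (exp_pos _).le

lemma I0_nonneg (x : ℝ) : 0 ≤ I0 x :=
  mul_nonneg (by positivity)
    (intervalIntegral.integral_nonneg pi_pos.le fun _ _ ↦ (exp_pos _).le)

lemma measurable_K0 : Measurable K0 :=
  (StronglyMeasurable.integral_prod_right (ν := volume.restrict (Ioi 0))
    (Continuous.stronglyMeasurable (by fun_prop :
      Continuous fun p : ℝ × ℝ ↦ exp (-(p.1 * cosh p.2))))).measurable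

lemma I0_eq_setIntegral (x : ℝ) : I0 x = (1 / π) * ∫ θ in Ioo (0 : ℝ) π, exp (x * cos θ) := by
  rw [I0, intervalIntegral.integral_of_le pi_pos.le, integral_Ioc_eq_integral_Ioo]

lemma measurable_I0 : Measurable I0 := by
  rw [funext I0_eq_setIntegral]
  exact (StronglyMeasurable.integral_prod_right (ν := volume.restrict (Ioo 0 π))
    (Continuous.stronglyMeasurable (by fun_prop :
      Continuous fun p : ℝ × ℝ ↦ exp (p.1 * cos p.2)))).measurable.const_mul _

lemma ofReal_I0 (x : ℝ) : ENNReal.ofReal (I0 x)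
    = ENNReal.ofReal (1 / π) * ∫⁻ θ in Ioo (0 : ℝ) π, ENNReal.ofReal (exp (x * cos θ)) := by
  have h_cont : Continuous fun θ ↦ exp (x * cos θ) := by fun_prop
  rw [I0_eq_setIntegral, ENNReal.ofReal_mul (by positivity),
    setLIntegral_ofReal_eq_ofReal_setIntegral measurableSet_Ioo
      (h_cont.integrableOn_Icc.mono_set Ioo_subset_Icc_self) fun _ _ ↦ (exp_pos _).le]

/-- The integrand in Schwinger's representation `2 K₀(at) = ∫₀^∞ α⁻¹ exp(-(αa² + t²/(4α))) dα`. -/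
noncomputable def schwingerKernel (a t α : ℝ) : ℝ :=
  α⁻¹ * exp (-(α * a ^ 2 + t ^ 2 / (4 * α)))

lemma schwingerKernel_nonneg (a t : ℝ) {α : ℝ} (hα : 0 < α) : 0 ≤ schwingerKernel a t α := by
  unfold schwingerKernel
  positivity

lemma two_mul_ofReal_K0_mul {a t : ℝ} (ha : 0 < a) (ht : 0 < t) :
    2 * ENNReal.ofReal (K0 (a * t)) 
      = ∫⁻ α in Ioi (0 : ℝ), ENNReal.ofReal (schwingerKernel a t α) := by
  have hc : 0 < t / (2 * a) := by positivity
  rw [two_mul_ofReal_K0 (by positivity), ← setLIntegral_univ,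
    setLIntegral_eq_of_invOn_of_deriv_nonneg (t := Ioi 0) (φ := fun u ↦ t / (2 * a) * exp u)
      (ψ := fun y ↦ log (y / (t / (2 * a)))) MeasurableSet.univ
      (fun u _ ↦ (Real.hasDerivAt_exp u).const_mul _) (fun u _ ↦ by positivity)
      (fun u _ ↦ mul_pos hc (exp_pos u)) (mapsTo_univ _ _)
      ⟨fun u _ ↦ by simp only [mul_div_cancel_left₀ _ hc.ne', log_exp],
        fun y hy ↦ by simp only [exp_log (div_pos hy hc), mul_div_cancel₀ _ hc.ne']⟩]
  refine lintegral_congr fun u ↦ ?_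
  have h_pos : 0 < t / (2 * a) * exp u := by positivity
  rw [← ENNReal.ofReal_mul h_pos.le, schwingerKernel, mul_inv_cancel_left₀ h_pos.ne']
  congr 3
  rw [Real.cosh_eq, exp_neg]
  field_simp
  ring

lemma ofReal_K0_sq {t : ℝ} (ht : 0 < t) :
    ENNReal.ofReal (K0 t ^ 2)
      = 2 * ∫⁻ v in Ioi (0 : ℝ), ENNReal.ofReal (K0 (2 * t * cosh v)) := by
  refine (ENNReal.mul_right_inj (a := 4) (by norm_num) (by norm_num)).1 ?_
  calc 4 * ENNReal.ofReal (K0 t ^ 2)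
      = (2 * ENNReal.ofReal (K0 t)) * (2 * ENNReal.ofReal (K0 t)) := by
        rw [sq, ENNReal.ofReal_mul (K0_nonneg t)]
        ring
    _ = ∫⁻ x, ∫⁻ y, ENNReal.ofReal (exp (-(t * cosh x)) * exp (-(t * cosh y))) := by
        rw [two_mul_ofReal_K0 ht]
        simpa only [Measure.restrict_univ] using setLIntegral_ofReal_mul_lintegral_ofReal
          (μ := volume) (ν := volume) MeasurableSet.univ
          (by fun_prop : Measurable fun x ↦ exp (-(t * cosh x))) fun _ _ ↦ (exp_pos _).le
    _ = 2 * ∫⁻ a, ∫⁻ b, ENNReal.ofReal (exp (-(2 * t * cosh a * cosh b))) := by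
        rw [lintegral_lintegral_eq_two_mul_comp_add_sub (by fun_prop)]
        congr! 6 with a b
        rw [← exp_add, Real.cosh_add, Real.cosh_sub]
        ring_nf
    _ = 2 * ∫⁻ a, 2 * ENNReal.ofReal (K0 (2 * t * cosh a)) := by
        congr! 3 with a
        rw [two_mul_ofReal_K0 (by positivity)]
    _ = 4 * (2 * ∫⁻ v in Ioi (0 : ℝ), ENNReal.ofReal (K0 (2 * t * cosh v))) := by
        rw [lintegral_const_mul' _ _ (by norm_num), lintegral_of_even (by simp)]
        ring

end BesselFunctions

/-! ### Graf's addition formula -/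

section Graf

open Filter Topology

lemma integral_add_mul_I_eq_integral {f : ℂ → ℂ} (hf : Differentiable ℂ f) {c : ℝ}
    (h_base : Integrable fun x : ℝ ↦ f x) (h_line : Integrable fun x : ℝ ↦ f (x + c * Complex.I))
    (h_top : Tendsto (fun R : ℝ ↦ ∫ y in (0 : ℝ)..c, f (R + y * Complex.I)) atTop (𝓝 0))
    (h_bot : Tendsto (fun R : ℝ ↦ ∫ y in (0 : ℝ)..c, f (R + y * Complex.I)) atBot (𝓝 0)) :
    ∫ x : ℝ, f (x + c * Complex.I) = ∫ x : ℝ, f x := by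
  have lim_base := intervalIntegral_tendsto_integral h_base tendsto_neg_atTop_atBot tendsto_id
  have lim_line := intervalIntegral_tendsto_integral h_line tendsto_neg_atTop_atBot tendsto_id
  have lim_boundary := ((lim_base.sub lim_line).add (h_top.const_smul Complex.I)).sub
    ((h_bot.comp tendsto_neg_atTop_atBot).const_smul Complex.I)
  have boundary_eq_zero (R : ℝ) := Complex.integral_boundary_rect_eq_zero_of_differentiableOn f
    ((-R : ℝ) : ℂ) (R + c * Complex.I) hf.differentiableOn
  have := tendsto_nhds_unique lim_boundary <| tendsto_const_nhds.congr fun R ↦ by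
    simpa using (boundary_eq_zero R).symm
  simpa [sub_eq_zero, eq_comm (a := (0 : ℂ)), eq_comm (b := ∫ x : ℝ, f x)] using this

lemma intervalIntegral_add_mul_I_eq_of_periodic {f : ℂ → ℂ} (hf : Differentiable ℂ f) {T : ℝ}
    (hT : Function.Periodic f T) (a c : ℝ) :
    ∫ x in a..a + T, f (x + c * Complex.I) = ∫ x in a..a + T, f x := by
  have boundary_eq_zero := Complex.integral_boundary_rect_eq_zero_of_differentiableOn f
    (a : ℂ) ((a + T : ℝ) + c * Complex.I) hf.differentiableOn
  have sides_eq (y : ℝ) : f (a + T + y * Complex.I) = f (a + y * Complex.I) := by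
    rw [add_right_comm, hT]
  simpa [sides_eq, sub_eq_zero, eq_comm (a := ∫ x in a..a + T, f x)] using boundary_eq_zero

lemma neg_mul_cosh_add_mul_I (ρ α u : ℝ) : -(ρ : ℂ) * Complex.cosh (u + α * Complex.I)
    = -(ρ * cos α * cosh u : ℝ) + (-(ρ * sin α) * sinh u : ℝ) * Complex.I := by
  rw [Complex.cosh_add, Complex.cosh_mul_I, Complex.sinh_mul_I]
  push_cast
  ring

lemma norm_cexp_neg_ofReal_add_ofReal_mul_I (p q : ℝ) :
    ‖Complex.exp (-(p : ℂ) + q * Complex.I)‖ = exp (-p) := by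
  simp [Complex.norm_exp]

lemma integrable_cexp_neg_mul_cosh_add_mul_sinh {x : ℝ} (hx : 0 < x) (y : ℝ) :
    Integrable fun u : ℝ ↦
      Complex.exp (-(x * cosh u : ℝ) + (y * sinh u : ℝ) * Complex.I) :=
  (integrable_exp_neg_mul_cosh hx).mono' (Continuous.aestronglyMeasurable (by fun_prop))
    (.of_forall fun _ ↦ (norm_cexp_neg_ofReal_add_ofReal_mul_I _ _).le)

lemma cos_le_cos_of_mem_uIoc {α y : ℝ} (hα : |α| ≤ π) (hy : y ∈ uIoc 0 α) : cos α ≤ cos y := by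
  have h_abs : |y| ≤ |α| := by
    simpa using abs_sub_left_of_mem_uIcc (uIoc_subset_uIcc hy)
  rw [← cos_abs α, ← cos_abs y]
  exact cos_le_cos_of_nonneg_of_le_pi (abs_nonneg _) hα h_abs

lemma norm_intervalIntegral_cexp_neg_mul_cosh_le {ρ α : ℝ} (hρ : 0 ≤ ρ) (hα : |α| ≤ π) (R : ℝ) :
    ‖∫ y in (0 : ℝ)..α, Complex.exp (-(ρ : ℂ) * Complex.cosh (R + y * Complex.I))‖
      ≤ exp (-(ρ * cos α * cosh R)) * |α| := by
  have h_norm : ∀ y ∈ uIoc 0 α, ‖Complex.exp (-(ρ : ℂ) * Complex.cosh (R + y * Complex.I))‖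
      ≤ exp (-(ρ * cos α * cosh R)) := fun y hy ↦ by
    rw [neg_mul_cosh_add_mul_I, norm_cexp_neg_ofReal_add_ofReal_mul_I]
    gcongr
    exact cos_le_cos_of_mem_uIoc hα hy
  simpa only [sub_zero] using intervalIntegral.norm_integral_le_of_norm_le_const h_norm

lemma tendsto_cosh_atTop : Tendsto cosh atTop atTop :=
  tendsto_atTop_mono (fun u ↦ by
    nlinarith [sq_div_four_le_cosh u, sq_nonneg (u - 2)] : ∀ u : ℝ, u - 1 ≤ cosh u)
    (tendsto_atTop_add_const_right _ (-1) tendsto_id)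

lemma tendsto_cosh_atBot : Tendsto cosh atBot atTop := by
  simpa [Function.comp_def] using tendsto_cosh_atTop.comp tendsto_neg_atBot_atTop

lemma tendsto_intervalIntegral_cexp_neg_mul_cosh {ρ α : ℝ} (hρ : 0 < ρ) (hα : |α| < π / 2)
    {l : Filter ℝ} (hl : Tendsto cosh l atTop) :
    Tendsto (fun R : ℝ ↦ ∫ y in (0 : ℝ)..α,
      Complex.exp (-(ρ : ℂ) * Complex.cosh (R + y * Complex.I))) l (𝓝 0) := by
  have hcos : 0 < cos α := cos_pos_of_mem_Ioo (abs_lt.1 hα)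
  have lim_bound : Tendsto (fun R ↦ exp (-(ρ * cos α * cosh R)) * |α|) l (𝓝 (0 * |α|)) :=
    (tendsto_exp_neg_atTop_nhds_zero.comp (hl.const_mul_atTop (by positivity))).mul_const _
  rw [zero_mul] at lim_bound
  exact squeeze_zero_norm
    (norm_intervalIntegral_cexp_neg_mul_cosh_le hρ.le (by linarith [pi_pos])) lim_bound

lemma integral_cexp_neg_mul_cosh_add_mul_I {ρ α : ℝ} (hρ : 0 < ρ) (hα : |α| < π / 2) :
    ∫ u : ℝ, Complex.exp (-(ρ : ℂ) * Complex.cosh (u + α * Complex.I)) = (2 * K0 ρ : ℝ) := by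
  have hcos : 0 < cos α := cos_pos_of_mem_Ioo (abs_lt.1 hα)
  have integrand_eq (u : ℝ) :
      Complex.exp (-(ρ : ℂ) * Complex.cosh u) = (exp (-(ρ * cosh u)) : ℝ) := by
    simp
  rw [integral_add_mul_I_eq_integral (f := fun z ↦ Complex.exp (-(ρ : ℂ) * Complex.cosh z))
    (by fun_prop) ?_ ?_ (tendsto_intervalIntegral_cexp_neg_mul_cosh hρ hα tendsto_cosh_atTop)
    (tendsto_intervalIntegral_cexp_neg_mul_cosh hρ hα tendsto_cosh_atBot)]
  · simp only [integrand_eq]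
    rw [integral_complex_ofReal, integral_exp_neg_mul_cosh]
  · simp only [integrand_eq]
    exact (integrable_exp_neg_mul_cosh hρ).ofReal
  · simpa only [neg_mul_cosh_add_mul_I] using
      integrable_cexp_neg_mul_cosh_add_mul_sinh (mul_pos hρ hcos) _

lemma integral_cexp_neg_mul_cosh_add_mul_sinh {x : ℝ} (hx : 0 < x) (y : ℝ) :
    ∫ u : ℝ, Complex.exp (-(x * cosh u : ℝ) + (y * sinh u : ℝ) * Complex.I)
      = (2 * K0 (√(x ^ 2 + y ^ 2)) : ℝ) := by
  have norm_eq : ‖(⟨x, -y⟩ : ℂ)‖ = √(x ^ 2 + y ^ 2) := by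
    rw [Complex.norm_eq_sqrt_sq_add_sq, neg_sq]
  have cos_eq := Complex.norm_mul_cos_arg ⟨x, -y⟩
  have sin_eq := Complex.norm_mul_sin_arg ⟨x, -y⟩
  have := integral_cexp_neg_mul_cosh_add_mul_I (ρ := ‖(⟨x, -y⟩ : ℂ)‖) (α := (⟨x, -y⟩ : ℂ).arg)
    (by rw [norm_eq]; positivity) (Complex.abs_arg_lt_pi_div_two_iff.2 (.inl hx))
  simp only [neg_mul_cosh_add_mul_I, cos_eq, sin_eq, neg_neg] at this
  rw [this, norm_eq]

lemma intervalIntegral_exp_mul_cos (b : ℝ) :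
    ∫ θ in (-π)..π, exp (b * cos θ) = 2 * π * I0 b := by
  have h_cont : Continuous fun θ ↦ exp (b * cos θ) := by fun_prop
  have h_even := intervalIntegral.integral_comp_neg (a := 0) (b := π) fun θ ↦ exp (b * cos θ)
  simp only [cos_neg, neg_zero] at h_even
  rw [← intervalIntegral.integral_add_adjacent_intervals (b := 0)
    (h_cont.intervalIntegrable _ _) (h_cont.intervalIntegrable _ _), ← h_even, I0]
  field_simp
  ring

lemma mul_cos_sub_mul_I (b θ u : ℝ) : (b : ℂ) * Complex.cos (θ - u * Complex.I)
    = (b * cos θ * cosh u : ℝ) + (b * sin θ * sinh u : ℝ) * Complex.I := by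
  rw [Complex.cos_sub, Complex.cos_mul_I, Complex.sin_mul_I]
  push_cast
  ring

lemma intervalIntegral_cexp_mul_cos_add_mul_sin (b u : ℝ) :
    ∫ θ in (-π)..π, Complex.exp
        ((b * cos θ * cosh u : ℝ) + (b * sin θ * sinh u : ℝ) * Complex.I)
      = (2 * π * I0 b : ℝ) := by
  have h_periodic : Function.Periodic (fun z ↦ Complex.exp (b * Complex.cos z)) (2 * π : ℝ) :=
    fun z ↦ by simp only [Complex.ofReal_mul, Complex.ofReal_ofNat, Complex.cos_add_two_pi]
  have h_shift := intervalIntegral_add_mul_I_eq_of_periodic (by fun_prop) h_periodic (-π) (-u)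
  rw [show -π + 2 * π = π by ring] at h_shift
  simp only [Complex.ofReal_neg, neg_mul, ← sub_eq_add_neg, mul_cos_sub_mul_I] at h_shift
  rw [h_shift, ← intervalIntegral_exp_mul_cos, ← intervalIntegral.integral_ofReal]
  simp

/-- Integrating `grafKernel a b` over `u ∈ ℝ` gives `2 K₀(√(a² + b² - 2ab cos θ))`, integrating it
over a period in `θ` gives `2π I₀(b) exp(-a cosh u)`. -/
noncomputable def grafKernel (a b u θ : ℝ) : ℂ :=
  Complex.exp (-((a - b * cos θ) * cosh u : ℝ) + (b * sin θ * sinh u : ℝ) * Complex.I)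

lemma sqrt_pi_div_mul_cosh_le {c : ℝ} (hc : 0 < c) (u : ℝ) :
    √(π / (c * cosh u)) ≤ √(2 * π / c) * exp (-(1 / 2 * |u|)) := by
  rw [show π / (c * cosh u) = 2 * π / c * (1 / (2 * cosh u)) by field_simp,
    sqrt_mul (by positivity)]
  gcongr
  rw [sqrt_le_left (exp_pos _).le, ← exp_nat_mul, ← cosh_abs, cosh_eq,
    show ((2 : ℕ) : ℝ) * -(1 / 2 * |u|) = -|u| by push_cast; ring, exp_neg, one_div]
  refine inv_anti₀ (exp_pos _) ?_
  linarith [inv_pos.2 (exp_pos |u|)]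

lemma setLIntegral_exp_neg_mul_one_sub_cos_le {c : ℝ} (hc : 0 < c) :
    ∫⁻ θ in Ioc (-π) π, ENNReal.ofReal (exp (-(c * (1 - cos θ))))
      ≤ ENNReal.ofReal (√(π / (2 / π ^ 2 * c))) := by
  rw [← lintegral_exp_neg_mul_sub_sq (c := 2 / π ^ 2 * c) (by positivity) 0]
  refine (setLIntegral_mono' measurableSet_Ioc fun θ hθ ↦ ?_).trans (setLIntegral_le_lintegral _ _)
  have h_cos := cos_le_one_sub_mul_cos_sq (x := θ) (abs_le.2 ⟨hθ.1.le, hθ.2⟩)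
  refine ENNReal.ofReal_le_ofReal (exp_le_exp.2 ?_)
  nlinarith

lemma lintegral_exp_neg_mul_one_sub_cos_mul_cosh_lt_top {b : ℝ} (hb : 0 < b) :
    ∫⁻ u, ∫⁻ θ in Ioc (-π) π, ENNReal.ofReal (exp (-(b * cosh u * (1 - cos θ)))) < ⊤ := by
  have inner_le (u : ℝ) :
      ∫⁻ θ in Ioc (-π) π, ENNReal.ofReal (exp (-(b * cosh u * (1 - cos θ))))
        ≤ ENNReal.ofReal (√(2 * π / (2 / π ^ 2 * b)) * exp (-(1 / 2 * |u|))) := by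
    refine (setLIntegral_exp_neg_mul_one_sub_cos_le (by positivity)).trans ?_
    rw [← mul_assoc]
    exact ENNReal.ofReal_le_ofReal (sqrt_pi_div_mul_cosh_le (by positivity) u)
  refine (lintegral_mono inner_le).trans_lt ?_
  rw [lintegral_of_even (by simp), setLIntegral_congr_fun measurableSet_Ioi
    (fun u (hu : 0 < u) ↦ by rw [abs_of_pos hu]), ← ofReal_mul_lintegral_ofReal (by positivity),
    setLIntegral_exp_neg_mul (by norm_num)]
  finiteness

lemma integrable_grafKernel {a b : ℝ} (hb : 0 < b) (hab : b ≤ a) :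
    Integrable (Function.uncurry (grafKernel a b))
      (volume.prod (volume.restrict (Ioc (-π) π))) := by
  have h_cont : Continuous (Function.uncurry (grafKernel a b)) := by
    unfold Function.uncurry grafKernel
    fun_prop
  refine ⟨h_cont.aestronglyMeasurable, ?_⟩
  rw [HasFiniteIntegral, lintegral_prod _ (by fun_prop)]
  refine (lintegral_mono fun u ↦ lintegral_mono fun θ ↦ ?_).trans_lt
    (lintegral_exp_neg_mul_one_sub_cos_mul_cosh_lt_top hb)
  rw [← ofReal_norm, Function.uncurry, grafKernel, norm_cexp_neg_ofReal_add_ofReal_mul_I]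
  refine ENNReal.ofReal_le_ofReal (exp_le_exp.2 ?_)
  nlinarith [cosh_pos u]

lemma integral_grafKernel {a b θ : ℝ} (h : b * cos θ < a) :
    ∫ u, grafKernel a b u θ = (2 * K0 (√(a ^ 2 + b ^ 2 - 2 * a * b * cos θ)) : ℝ) := by
  simp only [grafKernel]
  rw [integral_cexp_neg_mul_cosh_add_mul_sinh (sub_pos.2 h)]
  congr 4
  linear_combination b ^ 2 * sin_sq_add_cos_sq θ

lemma setIntegral_grafKernel (a b u : ℝ) :
    ∫ θ in Ioc (-π) π, grafKernel a b u θ = (2 * π * I0 b * exp (-(a * cosh u)) : ℝ) := by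
  rw [Complex.ofReal_mul, ← intervalIntegral_cexp_mul_cos_add_mul_sin b u,
    ← intervalIntegral.integral_of_le (by linarith [pi_pos]),
    ← intervalIntegral.integral_mul_const]
  congr 1 with θ
  rw [grafKernel, Complex.ofReal_exp, ← Complex.exp_add]
  push_cast
  ring_nf

lemma integral_setIntegral_grafKernel (a b : ℝ) :
    ∫ u, ∫ θ in Ioc (-π) π, grafKernel a b u θ = (4 * π * (K0 a * I0 b) : ℝ) := by
  simp only [setIntegral_grafKernel]
  rw [integral_complex_ofReal, integral_const_mul, integral_exp_neg_mul_cosh]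
  congr 1
  ring

lemma ae_integral_grafKernel {a b : ℝ} (hb : 0 < b) (hab : b ≤ a) :
    ∀ᵐ θ ∂volume.restrict (Ioc (-π) π), ∫ u, grafKernel a b u θ
      = (2 * K0 (√(a ^ 2 + b ^ 2 - 2 * a * b * cos θ)) : ℝ) := by
  rw [ae_restrict_iff' measurableSet_Ioc]
  filter_upwards [Measure.ae_ne volume 0] with θ h0 hθ
  refine integral_grafKernel ?_
  have hcos : cos θ < 1 := (cos_le_one θ).lt_of_ne fun h ↦
    h0 ((cos_eq_one_iff_of_lt_of_lt (by linarith [hθ.1, pi_pos]) (by linarith [hθ.2, pi_pos])).1 h)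
  nlinarith

lemma integrableOn_K0_sqrt {a b : ℝ} (hb : 0 < b) (hab : b ≤ a) :
    IntegrableOn (fun θ ↦ 2 * K0 (√(a ^ 2 + b ^ 2 - 2 * a * b * cos θ))) (Ioc (-π) π) := by
  simpa only [Complex.ofReal_re, RCLike.re_to_complex, IntegrableOn] using
    ((integrable_grafKernel hb hab).integral_prod_right.congr (ae_integral_grafKernel hb hab)).re

lemma setIntegral_K0_sqrt {a b : ℝ} (hb : 0 < b) (hab : b ≤ a) :
    ∫ θ in Ioc (-π) π, 2 * K0 (√(a ^ 2 + b ^ 2 - 2 * a * b * cos θ))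
      = 4 * π * (K0 a * I0 b) := by
  have h_swap := integral_integral_swap (integrable_grafKernel hb hab)
  rw [integral_setIntegral_grafKernel, integral_congr_ae (ae_integral_grafKernel hb hab),
    integral_complex_ofReal] at h_swap
  exact (Complex.ofReal_injective h_swap).symm

theorem ofReal_K0_mul_I0 {a b : ℝ} (hb : 0 < b) (hab : b ≤ a) :
    ENNReal.ofReal (K0 a * I0 b) = ENNReal.ofReal (1 / π) *
      ∫⁻ θ in Ioo (0 : ℝ) π, ENNReal.ofReal (K0 (√(a ^ 2 + b ^ 2 - 2 * a * b * cos θ))) := by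
  have h4 : ENNReal.ofReal (4 * π * (K0 a * I0 b)) = ENNReal.ofReal 4 *
      ∫⁻ θ in Ioo (0 : ℝ) π, ENNReal.ofReal (K0 (√(a ^ 2 + b ^ 2 - 2 * a * b * cos θ))) := by
    rw [← setIntegral_K0_sqrt hb hab, ← setLIntegral_ofReal_eq_ofReal_setIntegral measurableSet_Ioc
      (integrableOn_K0_sqrt hb hab) fun θ _ ↦ mul_nonneg zero_le_two (K0_nonneg _),
      setLIntegral_congr Ioo_ae_eq_Ioc.symm, setLIntegral_Ioo_neg_self_of_even π (by simp),
      ← ofReal_mul_lintegral_ofReal zero_le_two, ← mul_assoc]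
    norm_num
  have h_pi : K0 a * I0 b = 1 / (4 * π) * (4 * π * (K0 a * I0 b)) := by field_simp
  rw [h_pi, ENNReal.ofReal_mul (by positivity), h4, ← mul_assoc,
    ← ENNReal.ofReal_mul (by positivity)]
  congr 2
  field_simp

end Graf

/-! ### Momentum-space representations of Bessel moments -/

section BesselMoments

lemma lintegral_lintegral_exp_neg_mul_add_sq_add_mul {p : ℝ} (hp : 0 < p) (q : ℝ) :
    ∫⁻ x, ∫⁻ y, ENNReal.ofReal (exp (-(p * (x ^ 2 + y ^ 2)) + q * x))
      = ENNReal.ofReal (π / p * exp (q ^ 2 / (4 * p))) := by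
  have complete_square (x y : ℝ) : exp (-(p * (x ^ 2 + y ^ 2)) + q * x) =
      exp (q ^ 2 / (4 * p)) * (exp (-(p * (x - q / (2 * p)) ^ 2)) * exp (-(p * (y - 0) ^ 2))) := by
    rw [← exp_add, ← exp_add]
    congr 1
    field_simp
    ring
  simp only [complete_square, ENNReal.ofReal_mul (exp_nonneg _),
    lintegral_const_mul' _ _ ENNReal.ofReal_ne_top, lintegral_exp_neg_mul_sub_sq hp]
  rw [lintegral_mul_const' _ _ ENNReal.ofReal_ne_top, lintegral_exp_neg_mul_sub_sq hp,
    ← ENNReal.ofReal_mul (by positivity), mul_self_sqrt (by positivity),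
    ← ENNReal.ofReal_mul (by positivity), mul_comm]

lemma setLIntegral_angle_exp_neg_mul_add_sq_add_mul (p q : ℝ) {r : ℝ} (hr : 0 < r) :
    ∫⁻ θ in Ioo (-π) π, ENNReal.ofReal r *
        ENNReal.ofReal (exp (-(p * ((r * cos θ) ^ 2 + (r * sin θ) ^ 2)) + q * (r * cos θ)))
      = ENNReal.ofReal (2 * π * (r * exp (-(p * r ^ 2)) * I0 (q * r))) := by
  have exponent_eq (θ : ℝ) : -(p * ((r * cos θ) ^ 2 + (r * sin θ) ^ 2)) + q * (r * cos θ)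
      = -(p * r ^ 2) + q * r * cos θ := by
    linear_combination (-p * r ^ 2) * sin_sq_add_cos_sq θ
  rw [setLIntegral_Ioo_neg_self_of_even π (by simp), ← mul_assoc,
    ENNReal.ofReal_mul (by positivity), ofReal_I0]
  simp only [exponent_eq, exp_add]
  rw [← mul_assoc, ← ENNReal.ofReal_mul (by positivity),
    ofReal_mul_lintegral_ofReal (by positivity), show (2 : ℝ≥0∞) = ENNReal.ofReal 2 by norm_num]
  simp only [← ENNReal.ofReal_mul hr.le]
  rw [ofReal_mul_lintegral_ofReal zero_le_two]
  congr! 3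
  field_simp

theorem setLIntegral_mul_exp_neg_mul_sq_mul_I0 {p : ℝ} (hp : 0 < p) (q : ℝ) :
    ∫⁻ k in Ioi (0 : ℝ), ENNReal.ofReal (k * exp (-(p * k ^ 2)) * I0 (q * k))
      = ENNReal.ofReal (1 / (2 * p) * exp (q ^ 2 / (4 * p))) := by
  have h := lintegral_lintegral_exp_neg_mul_add_sq_add_mul hp q
  rw [lintegral_lintegral_eq_polar (by fun_prop), setLIntegral_congr_fun measurableSet_Ioi
    fun r hr ↦ setLIntegral_angle_exp_neg_mul_add_sq_add_mul p q hr,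
    ← ofReal_mul_lintegral_ofReal (by positivity),
    show π / p * exp (q ^ 2 / (4 * p)) = 2 * π * (1 / (2 * p) * exp (q ^ 2 / (4 * p))) by
      field_simp, ENNReal.ofReal_mul (p := 2 * π) (by positivity)] at h
  exact (ENNReal.mul_right_inj (by simp [pi_pos]) ENNReal.ofReal_ne_top).1 h

lemma setLIntegral_setLIntegral_exp_neg_mul {r p q : ℝ} (hr : 0 ≤ r) (hp : 0 < p) (hq : 0 < q) :
    ∫⁻ α in Ioi (0 : ℝ), ∫⁻ β in Ioi (0 : ℝ),
        ENNReal.ofReal (r * (exp (-(p * α)) * exp (-(q * β))))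
      = ENNReal.ofReal (r * (1 / p * (1 / q))) := by
  simp only [ENNReal.ofReal_mul hr, lintegral_const_mul' _ _ ENNReal.ofReal_ne_top]
  rw [← setLIntegral_ofReal_mul_lintegral_ofReal measurableSet_Ioi (by fun_prop)
    fun _ _ ↦ (exp_pos _).le, setLIntegral_exp_neg_mul hp, setLIntegral_exp_neg_mul hq,
    ← ENNReal.ofReal_mul (by positivity)]

lemma setLIntegral_setLIntegral_setLIntegral_exp_neg_mul {r p q s : ℝ} (hr : 0 ≤ r) (hp : 0 < p)
    (hq : 0 < q) (hs : 0 < s) :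
    ∫⁻ α in Ioi (0 : ℝ), ∫⁻ β in Ioi (0 : ℝ), ∫⁻ γ in Ioi (0 : ℝ),
        ENNReal.ofReal (r * (exp (-(p * α)) * (exp (-(q * β)) * exp (-(s * γ)))))
      = ENNReal.ofReal (r * (1 / p * (1 / q * (1 / s)))) := by
  simp only [ENNReal.ofReal_mul hr, lintegral_const_mul' _ _ ENNReal.ofReal_ne_top]
  rw [← setLIntegral_ofReal_mul_mul measurableSet_Ioi measurableSet_Ioi (by fun_prop)
    (by fun_prop) (fun _ _ ↦ (exp_pos _).le) fun _ _ ↦ (exp_pos _).le,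
    setLIntegral_exp_neg_mul hp, setLIntegral_exp_neg_mul hq, setLIntegral_exp_neg_mul hs,
    ← ENNReal.ofReal_mul (by positivity), ← ENNReal.ofReal_mul (by positivity)]

lemma four_mul_ofReal_mul_K0_mul_K0 {a b t : ℝ} (ha : 0 < a) (hb : 0 < b) (ht : 0 < t) :
    4 * ENNReal.ofReal (t * (K0 (a * t) * K0 (b * t)))
      = ∫⁻ α in Ioi (0 : ℝ), ∫⁻ β in Ioi (0 : ℝ),
        ENNReal.ofReal (t * (schwingerKernel a t α * schwingerKernel b t β)) := by
  have h_distrib : 4 * ENNReal.ofReal (t * (K0 (a * t) * K0 (b * t))) = ENNReal.ofReal t *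
      ((2 * ENNReal.ofReal (K0 (a * t))) * (2 * ENNReal.ofReal (K0 (b * t)))) := by
    rw [ENNReal.ofReal_mul ht.le, ENNReal.ofReal_mul (K0_nonneg _)]
    ring
  rw [h_distrib, two_mul_ofReal_K0_mul ha ht, two_mul_ofReal_K0_mul hb ht,
    setLIntegral_ofReal_mul_lintegral_ofReal measurableSet_Ioi
      (by unfold schwingerKernel; fun_prop) fun _ hα ↦ schwingerKernel_nonneg a t hα]
  simp only [ENNReal.ofReal_mul ht.le, lintegral_const_mul' _ _ ENNReal.ofReal_ne_top]

lemma eight_mul_ofReal_mul_K0_mul_K0_mul_K0 {a b c t : ℝ} (ha : 0 < a) (hb : 0 < b) (hc : 0 < c)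
    (ht : 0 < t) :
    8 * ENNReal.ofReal (t * (K0 (a * t) * (K0 (b * t) * K0 (c * t))))
      = ∫⁻ α in Ioi (0 : ℝ), ∫⁻ β in Ioi (0 : ℝ), ∫⁻ γ in Ioi (0 : ℝ), ENNReal.ofReal
        (t * (schwingerKernel a t α * (schwingerKernel b t β * schwingerKernel c t γ))) := by
  have h_distrib : 8 * ENNReal.ofReal (t * (K0 (a * t) * (K0 (b * t) * K0 (c * t))))
      = ENNReal.ofReal t * ((2 * ENNReal.ofReal (K0 (a * t))) *
        ((2 * ENNReal.ofReal (K0 (b * t))) * (2 * ENNReal.ofReal (K0 (c * t))))) := by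
    rw [ENNReal.ofReal_mul ht.le, ENNReal.ofReal_mul (K0_nonneg _),
      ENNReal.ofReal_mul (K0_nonneg _)]
    ring
  rw [h_distrib, two_mul_ofReal_K0_mul ha ht, two_mul_ofReal_K0_mul hb ht,
    two_mul_ofReal_K0_mul hc ht, setLIntegral_ofReal_mul_mul measurableSet_Ioi measurableSet_Ioi
      (by unfold schwingerKernel; fun_prop) (by unfold schwingerKernel; fun_prop)
      (fun _ hα ↦ schwingerKernel_nonneg a t hα) fun _ hβ ↦ schwingerKernel_nonneg b t hβ]
  simp only [ENNReal.ofReal_mul ht.le, lintegral_const_mul' _ _ ENNReal.ofReal_ne_top]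

lemma setLIntegral_mul_schwingerKernel_mul (a b : ℝ) {α β : ℝ} (hα : 0 < α) (hβ : 0 < β) :
    ∫⁻ t in Ioi (0 : ℝ), ENNReal.ofReal (t * (schwingerKernel a t α * schwingerKernel b t β))
      = ∫⁻ s in Ioi (0 : ℝ),
        ENNReal.ofReal (4 * s * (exp (-((s ^ 2 + a ^ 2) * α)) * exp (-((s ^ 2 + b ^ 2) * β)))) := by
  have position_eq (t : ℝ) : t * (schwingerKernel a t α * schwingerKernel b t β)
      = α⁻¹ * β⁻¹ * exp (-(α * a ^ 2 + β * b ^ 2)) *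
        (t * exp (-((α + β) / (4 * α * β) * t ^ 2))) := by
    have : exp (-(α * a ^ 2 + t ^ 2 / (4 * α))) * exp (-(β * b ^ 2 + t ^ 2 / (4 * β)))
        = exp (-(α * a ^ 2 + β * b ^ 2)) * exp (-((α + β) / (4 * α * β) * t ^ 2)) := by
      rw [← exp_add, ← exp_add]
      congr 1
      field_simp
      ring
    simp only [schwingerKernel]
    linear_combination (t * α⁻¹ * β⁻¹) * this
  have momentum_eq (s : ℝ) :
      4 * s * (exp (-((s ^ 2 + a ^ 2) * α)) * exp (-((s ^ 2 + b ^ 2) * β)))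
        = 4 * exp (-(α * a ^ 2 + β * b ^ 2)) * (s * exp (-((α + β) * s ^ 2))) := by
    have : exp (-((s ^ 2 + a ^ 2) * α)) * exp (-((s ^ 2 + b ^ 2) * β))
        = exp (-(α * a ^ 2 + β * b ^ 2)) * exp (-((α + β) * s ^ 2)) := by
      rw [← exp_add, ← exp_add]
      ring_nf
    linear_combination (4 * s) * this
  simp only [position_eq, momentum_eq]
  rw [← ofReal_mul_lintegral_ofReal (by positivity), ← ofReal_mul_lintegral_ofReal (by positivity),
    setLIntegral_mul_exp_neg_mul_sq (by positivity),
    setLIntegral_mul_exp_neg_mul_sq (by positivity),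
    ← ENNReal.ofReal_mul (by positivity), ← ENNReal.ofReal_mul (by positivity)]
  congr 1
  field_simp

theorem setLIntegral_mul_K0_mul_K0 {a b : ℝ} (ha : 0 < a) (hb : 0 < b) :
    ∫⁻ t in Ioi (0 : ℝ), ENNReal.ofReal (t * (K0 (a * t) * K0 (b * t)))
      = ∫⁻ s in Ioi (0 : ℝ), ENNReal.ofReal (s / ((s ^ 2 + a ^ 2) * (s ^ 2 + b ^ 2))) := by
  refine (ENNReal.mul_right_inj (a := 4) (by norm_num) (by norm_num)).1 ?_
  calc 4 * ∫⁻ t in Ioi (0 : ℝ), ENNReal.ofReal (t * (K0 (a * t) * K0 (b * t)))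
      = ∫⁻ t in Ioi (0 : ℝ), ∫⁻ α in Ioi (0 : ℝ), ∫⁻ β in Ioi (0 : ℝ),
          ENNReal.ofReal (t * (schwingerKernel a t α * schwingerKernel b t β)) := by
        rw [← lintegral_const_mul' _ _ (by norm_num)]
        exact setLIntegral_congr_fun measurableSet_Ioi fun t ht ↦
          four_mul_ofReal_mul_K0_mul_K0 ha hb ht
    _ = ∫⁻ α in Ioi (0 : ℝ), ∫⁻ β in Ioi (0 : ℝ), ∫⁻ t in Ioi (0 : ℝ),
          ENNReal.ofReal (t * (schwingerKernel a t α * schwingerKernel b t β)) :=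
        lintegral_rotate₃ _ (by unfold schwingerKernel; fun_prop)
    _ = ∫⁻ α in Ioi (0 : ℝ), ∫⁻ β in Ioi (0 : ℝ), ∫⁻ s in Ioi (0 : ℝ), ENNReal.ofReal
          (4 * s * (exp (-((s ^ 2 + a ^ 2) * α)) * exp (-((s ^ 2 + b ^ 2) * β)))) :=
        setLIntegral_congr_fun measurableSet_Ioi fun α hα ↦
          setLIntegral_congr_fun measurableSet_Ioi fun β hβ ↦
            setLIntegral_mul_schwingerKernel_mul a b hα hβ
    _ = ∫⁻ s in Ioi (0 : ℝ), ∫⁻ α in Ioi (0 : ℝ), ∫⁻ β in Ioi (0 : ℝ), ENNReal.ofReal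
          (4 * s * (exp (-((s ^ 2 + a ^ 2) * α)) * exp (-((s ^ 2 + b ^ 2) * β)))) :=
        (lintegral_rotate₃ _ (by fun_prop)).symm
    _ = 4 * ∫⁻ s in Ioi (0 : ℝ), ENNReal.ofReal (s / ((s ^ 2 + a ^ 2) * (s ^ 2 + b ^ 2))) := by
        rw [← lintegral_const_mul' _ _ (by norm_num)]
        refine setLIntegral_congr_fun measurableSet_Ioi fun s (hs : 0 < s) ↦ ?_
        rw [setLIntegral_setLIntegral_exp_neg_mul (by positivity) (by positivity) (by positivity),
          show (4 : ℝ≥0∞) = ENNReal.ofReal 4 by norm_num, ← ENNReal.ofReal_mul (by positivity)]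
        congr 1
        field_simp

lemma setLIntegral_mul_exp_neg_quadratic {α γ : ℝ} (hαγ : 0 < α + γ) (β : ℝ) {k : ℝ}
    (hk : 0 < k) :
    ∫⁻ l in Ioi (0 : ℝ), ∫⁻ ψ in Ioo (0 : ℝ) π, ENNReal.ofReal (k * l / π *
        exp (-(β * k ^ 2 + γ * l ^ 2 + α * (k ^ 2 + l ^ 2 - 2 * k * l * cos ψ))))
      = ENNReal.ofReal (1 / (2 * (α + γ)) *
        (k * exp (-((α * β + β * γ + γ * α) / (α + γ) * k ^ 2)))) := by
  have angle_integral : ∀ l ∈ Ioi (0 : ℝ), ∫⁻ ψ in Ioo (0 : ℝ) π, ENNReal.ofReal (k * l / π *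
        exp (-(β * k ^ 2 + γ * l ^ 2 + α * (k ^ 2 + l ^ 2 - 2 * k * l * cos ψ))))
      = ENNReal.ofReal (k * exp (-((α + β) * k ^ 2)) *
        (l * exp (-((α + γ) * l ^ 2)) * I0 (2 * α * k * l))) := by
    intro l (hl : 0 < l)
    rw [← mul_assoc, ENNReal.ofReal_mul (by positivity), ofReal_I0, ← mul_assoc,
      ← ENNReal.ofReal_mul (by positivity), ofReal_mul_lintegral_ofReal (by positivity)]
    congr! 3 with ψ
    rw [show -(β * k ^ 2 + γ * l ^ 2 + α * (k ^ 2 + l ^ 2 - 2 * k * l * cos ψ))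
      = -((α + β) * k ^ 2) + -((α + γ) * l ^ 2) + 2 * α * k * l * cos ψ by ring, exp_add, exp_add]
    field_simp
  rw [setLIntegral_congr_fun measurableSet_Ioi angle_integral,
    ← ofReal_mul_lintegral_ofReal (by positivity), setLIntegral_mul_exp_neg_mul_sq_mul_I0 hαγ,
    ← ENNReal.ofReal_mul (by positivity)]
  congr 1
  rw [show -((α * β + β * γ + γ * α) / (α + γ) * k ^ 2)
    = -((α + β) * k ^ 2) + (2 * α * k) ^ 2 / (4 * (α + γ)) by field_simp; ring, exp_add]
  ring

lemma setLIntegral_setLIntegral_mul_exp_neg_quadratic {α β γ : ℝ} (hα : 0 < α) (hβ : 0 < β)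
    (hγ : 0 < γ) :
    ∫⁻ k in Ioi (0 : ℝ), ∫⁻ l in Ioi (0 : ℝ), ∫⁻ ψ in Ioo (0 : ℝ) π, ENNReal.ofReal (k * l / π *
        exp (-(β * k ^ 2 + γ * l ^ 2 + α * (k ^ 2 + l ^ 2 - 2 * k * l * cos ψ))))
      = ENNReal.ofReal (1 / (4 * (α * β + β * γ + γ * α))) := by
  rw [setLIntegral_congr_fun measurableSet_Ioi fun k hk ↦
      setLIntegral_mul_exp_neg_quadratic (add_pos hα hγ) β hk,
    ← ofReal_mul_lintegral_ofReal (by positivity), setLIntegral_mul_exp_neg_mul_sq (by positivity),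
    ← ENNReal.ofReal_mul (by positivity)]
  congr 1
  field_simp
  norm_num

lemma setLIntegral_mul_schwingerKernel_mul_mul (a b c : ℝ) {α β γ : ℝ} (hα : 0 < α) (hβ : 0 < β)
    (hγ : 0 < γ) :
    ∫⁻ t in Ioi (0 : ℝ), ENNReal.ofReal
        (t * (schwingerKernel a t α * (schwingerKernel b t β * schwingerKernel c t γ)))
      = ∫⁻ k in Ioi (0 : ℝ), ∫⁻ l in Ioi (0 : ℝ), ∫⁻ ψ in Ioo (0 : ℝ) π, ENNReal.ofReal
        (8 * exp (-(α * a ^ 2 + β * b ^ 2 + γ * c ^ 2)) * (k * l / π *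
          exp (-(β * k ^ 2 + γ * l ^ 2 + α * (k ^ 2 + l ^ 2 - 2 * k * l * cos ψ))))) := by
  have position_eq (t : ℝ) :
      t * (schwingerKernel a t α * (schwingerKernel b t β * schwingerKernel c t γ))
        = α⁻¹ * β⁻¹ * γ⁻¹ * exp (-(α * a ^ 2 + β * b ^ 2 + γ * c ^ 2)) *
          (t * exp (-((α * β + β * γ + γ * α) / (4 * α * β * γ) * t ^ 2))) := by
    have : exp (-(α * a ^ 2 + t ^ 2 / (4 * α))) * (exp (-(β * b ^ 2 + t ^ 2 / (4 * β))) *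
          exp (-(γ * c ^ 2 + t ^ 2 / (4 * γ))))
        = exp (-(α * a ^ 2 + β * b ^ 2 + γ * c ^ 2)) *
          exp (-((α * β + β * γ + γ * α) / (4 * α * β * γ) * t ^ 2)) := by
      rw [← exp_add, ← exp_add, ← exp_add]
      congr 1
      field_simp
      ring
    simp only [schwingerKernel]
    linear_combination (t * α⁻¹ * β⁻¹ * γ⁻¹) * this
  have h_pos : 0 ≤ 8 * exp (-(α * a ^ 2 + β * b ^ 2 + γ * c ^ 2)) := by positivity
  simp only [position_eq, ENNReal.ofReal_mul h_pos,
    lintegral_const_mul' _ _ ENNReal.ofReal_ne_top]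
  rw [setLIntegral_setLIntegral_mul_exp_neg_quadratic hα hβ hγ,
    ← ofReal_mul_lintegral_ofReal (by positivity), setLIntegral_mul_exp_neg_mul_sq (by positivity),
    ← ENNReal.ofReal_mul (by positivity), ← ENNReal.ofReal_mul (by positivity)]
  congr 1
  field_simp
  norm_num

lemma setLIntegral_exp_neg_eq_ofReal_propagators {a b c k l : ℝ} (ha : 0 < a) (hb : 0 < b)
    (hc : 0 < c) (hk : 0 < k) (hl : 0 < l) (ψ : ℝ) :
    ∫⁻ α in Ioi (0 : ℝ), ∫⁻ β in Ioi (0 : ℝ), ∫⁻ γ in Ioi (0 : ℝ), ENNReal.ofReal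
        (8 * exp (-(α * a ^ 2 + β * b ^ 2 + γ * c ^ 2)) * (k * l / π *
          exp (-(β * k ^ 2 + γ * l ^ 2 + α * (k ^ 2 + l ^ 2 - 2 * k * l * cos ψ)))))
      = 8 * ENNReal.ofReal (k * l / π * (1 / (a ^ 2 + k ^ 2 + l ^ 2 - 2 * k * l * cos ψ) *
          (1 / (b ^ 2 + k ^ 2) * (1 / (c ^ 2 + l ^ 2))))) := by
  have h_pos : 0 < a ^ 2 + k ^ 2 + l ^ 2 - 2 * k * l * cos ψ := by
    nlinarith [sq_nonneg (k - l), cos_le_one ψ, mul_pos hk hl, pow_pos ha 2]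
  have integrand_eq (α β γ : ℝ) : 8 * exp (-(α * a ^ 2 + β * b ^ 2 + γ * c ^ 2)) * (k * l / π *
          exp (-(β * k ^ 2 + γ * l ^ 2 + α * (k ^ 2 + l ^ 2 - 2 * k * l * cos ψ))))
      = 8 * k * l / π * (exp (-((a ^ 2 + k ^ 2 + l ^ 2 - 2 * k * l * cos ψ) * α)) *
          (exp (-((b ^ 2 + k ^ 2) * β)) * exp (-((c ^ 2 + l ^ 2) * γ)))) := by
    have : exp (-(α * a ^ 2 + β * b ^ 2 + γ * c ^ 2)) *
          exp (-(β * k ^ 2 + γ * l ^ 2 + α * (k ^ 2 + l ^ 2 - 2 * k * l * cos ψ)))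
        = exp (-((a ^ 2 + k ^ 2 + l ^ 2 - 2 * k * l * cos ψ) * α)) *
          (exp (-((b ^ 2 + k ^ 2) * β)) * exp (-((c ^ 2 + l ^ 2) * γ))) := by
      rw [← exp_add, ← exp_add, ← exp_add]
      ring_nf
    linear_combination (8 * (k * l / π)) * this
  simp only [integrand_eq]
  rw [setLIntegral_setLIntegral_setLIntegral_exp_neg_mul (by positivity) h_pos (by positivity)
    (by positivity), show (8 : ℝ≥0∞) = ENNReal.ofReal 8 by norm_num,
    ← ENNReal.ofReal_mul (by positivity)]
  ring_nf

theorem setLIntegral_mul_K0_mul_K0_mul_K0 {a b c : ℝ} (ha : 0 < a) (hb : 0 < b) (hc : 0 < c) :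
    ∫⁻ t in Ioi (0 : ℝ), ENNReal.ofReal (t * (K0 (a * t) * (K0 (b * t) * K0 (c * t))))
      = ∫⁻ k in Ioi (0 : ℝ), ∫⁻ l in Ioi (0 : ℝ), ∫⁻ ψ in Ioo (0 : ℝ) π,
        ENNReal.ofReal (k * l / π * (1 / (a ^ 2 + k ^ 2 + l ^ 2 - 2 * k * l * cos ψ) *
          (1 / (b ^ 2 + k ^ 2) * (1 / (c ^ 2 + l ^ 2))))) := by
  refine (ENNReal.mul_right_inj (a := 8) (by norm_num) (by norm_num)).1 ?_
  simp only [← lintegral_const_mul' (8 : ℝ≥0∞) _ (by norm_num)]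
  calc ∫⁻ t in Ioi (0 : ℝ), 8 * ENNReal.ofReal (t * (K0 (a * t) * (K0 (b * t) * K0 (c * t))))
      = ∫⁻ t in Ioi (0 : ℝ), ∫⁻ α in Ioi (0 : ℝ), ∫⁻ β in Ioi (0 : ℝ), ∫⁻ γ in Ioi (0 : ℝ),
          ENNReal.ofReal
            (t * (schwingerKernel a t α * (schwingerKernel b t β * schwingerKernel c t γ))) :=
        setLIntegral_congr_fun measurableSet_Ioi fun t ht ↦
          eight_mul_ofReal_mul_K0_mul_K0_mul_K0 ha hb hc ht
    _ = ∫⁻ α in Ioi (0 : ℝ), ∫⁻ β in Ioi (0 : ℝ), ∫⁻ γ in Ioi (0 : ℝ), ∫⁻ t in Ioi (0 : ℝ),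
          ENNReal.ofReal
            (t * (schwingerKernel a t α * (schwingerKernel b t β * schwingerKernel c t γ))) :=
        lintegral_rotate₄ _ (by unfold schwingerKernel; fun_prop)
    _ = ∫⁻ α in Ioi (0 : ℝ), ∫⁻ β in Ioi (0 : ℝ), ∫⁻ γ in Ioi (0 : ℝ),
          ∫⁻ k in Ioi (0 : ℝ), ∫⁻ l in Ioi (0 : ℝ), ∫⁻ ψ in Ioo (0 : ℝ) π, ENNReal.ofReal
            (8 * exp (-(α * a ^ 2 + β * b ^ 2 + γ * c ^ 2)) * (k * l / π *
              exp (-(β * k ^ 2 + γ * l ^ 2 + α * (k ^ 2 + l ^ 2 - 2 * k * l * cos ψ))))) :=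
        setLIntegral_congr_fun measurableSet_Ioi fun α hα ↦
          setLIntegral_congr_fun measurableSet_Ioi fun β hβ ↦
            setLIntegral_congr_fun measurableSet_Ioi fun γ hγ ↦
              setLIntegral_mul_schwingerKernel_mul_mul a b c hα hβ hγ
    _ = ∫⁻ k in Ioi (0 : ℝ), ∫⁻ l in Ioi (0 : ℝ), ∫⁻ ψ in Ioo (0 : ℝ) π,
          ∫⁻ α in Ioi (0 : ℝ), ∫⁻ β in Ioi (0 : ℝ), ∫⁻ γ in Ioi (0 : ℝ), ENNReal.ofReal
            (8 * exp (-(α * a ^ 2 + β * b ^ 2 + γ * c ^ 2)) * (k * l / π *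
              exp (-(β * k ^ 2 + γ * l ^ 2 + α * (k ^ 2 + l ^ 2 - 2 * k * l * cos ψ))))) :=
        lintegral_swap_three_three _ (by fun_prop)
    _ = ∫⁻ k in Ioi (0 : ℝ), ∫⁻ l in Ioi (0 : ℝ), ∫⁻ ψ in Ioo (0 : ℝ) π, 8 * ENNReal.ofReal
          (k * l / π * (1 / (a ^ 2 + k ^ 2 + l ^ 2 - 2 * k * l * cos ψ) *
            (1 / (b ^ 2 + k ^ 2) * (1 / (c ^ 2 + l ^ 2))))) :=
        setLIntegral_congr_fun measurableSet_Ioi fun k hk ↦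
          setLIntegral_congr_fun measurableSet_Ioi fun l hl ↦
            lintegral_congr fun ψ ↦ setLIntegral_exp_neg_eq_ofReal_propagators ha hb hc hk hl ψ

end BesselMoments

/-! ### Bessel moments as double integrals of algebraic functions -/

lemma add_sub_mul_cos_pos {a b θ : ℝ} (hb : 0 < b) (hab : b ≤ a) (hθ : θ ∈ Ioo 0 π) :
    0 < a ^ 2 + b ^ 2 - 2 * a * b * cos θ := by
  have : 0 < a * b * (1 - cos θ) :=
    mul_pos (mul_pos (hb.trans_le hab) hb) (sub_pos.2 (cos_lt_one_of_mem_Ioo hθ))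
  linarith [sq_nonneg (a - b)]

lemma ofReal_K0_mul_I0_comp_mul {a b t : ℝ} (hb : 0 < b) (hab : b ≤ a) (ht : 0 < t) :
    ENNReal.ofReal (K0 (a * t) * I0 (b * t)) = ENNReal.ofReal (1 / π) *
      ∫⁻ θ in Ioo (0 : ℝ) π, ENNReal.ofReal (K0 (√(a ^ 2 + b ^ 2 - 2 * a * b * cos θ) * t)) := by
  rw [ofReal_K0_mul_I0 (by positivity) (by gcongr)]
  congr 1
  refine setLIntegral_congr_fun measurableSet_Ioo fun θ hθ ↦ ?_
  rw [show (a * t) ^ 2 + (b * t) ^ 2 - 2 * (a * t) * (b * t) * cos θ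
    = (a ^ 2 + b ^ 2 - 2 * a * b * cos θ) * t ^ 2 by ring,
    sqrt_mul (add_sub_mul_cos_pos hb hab hθ).le, sqrt_sq ht.le]

section FourBessel

variable {a b c d : ℝ}

lemma ofReal_mul_K0_mul_I0_mul_K0_mul_I0 (hb : 0 < b) (hab : b ≤ a) (hd : 0 < d) (hcd : d ≤ c)
    {t w : ℝ} (ht : 0 < t) (hw : 0 ≤ w) :
    ENNReal.ofReal (w * (K0 (a * t) * I0 (b * t) * (K0 (c * t) * I0 (d * t))))
      = ∫⁻ θ in Ioo (0 : ℝ) π, ∫⁻ ψ in Ioo (0 : ℝ) π, ENNReal.ofReal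
          (1 / π ^ 2 * (w * (K0 (√(a ^ 2 + b ^ 2 - 2 * a * b * cos θ) * t) *
            K0 (√(c ^ 2 + d ^ 2 - 2 * c * d * cos ψ) * t)))) := by
  have mK := measurable_K0
  rw [ENNReal.ofReal_mul hw, ENNReal.ofReal_mul (mul_nonneg (K0_nonneg _) (I0_nonneg _)),
    ofReal_K0_mul_I0_comp_mul hb hab ht, ofReal_K0_mul_I0_comp_mul hd hcd ht,
    mul_mul_mul_comm, setLIntegral_ofReal_mul_lintegral_ofReal measurableSet_Ioo
      (by fun_prop) fun _ _ ↦ K0_nonneg _]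
  simp only [← mul_assoc (1 / π ^ 2), ENNReal.ofReal_mul (show 0 ≤ 1 / π ^ 2 * w by positivity),
    lintegral_const_mul' _ _ ENNReal.ofReal_ne_top]
  rw [← mul_assoc, ← ENNReal.ofReal_mul (by positivity), ← ENNReal.ofReal_mul hw]
  congr 2
  ring

lemma setLIntegral_mul_one_div_mul_one_div_sub_mul_cos (hb : 0 < b) (hab : b ≤ a) (hd : 0 < d)
    (hcd : d ≤ c) {s : ℝ} (hs : 0 < s) :
    ∫⁻ θ in Ioo (0 : ℝ) π, ∫⁻ ψ in Ioo (0 : ℝ) π, ENNReal.ofReal (1 / π ^ 2 * s *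
        (1 / (s ^ 2 + a ^ 2 + b ^ 2 - 2 * a * b * cos θ) *
          (1 / (s ^ 2 + c ^ 2 + d ^ 2 - 2 * c * d * cos ψ))))
      = ENNReal.ofReal (s * (1 / √((s ^ 2 + a ^ 2 + b ^ 2) ^ 2 - (2 * a * b) ^ 2) *
          (1 / √((s ^ 2 + c ^ 2 + d ^ 2) ^ 2 - (2 * c * d) ^ 2)))) := by
  have ha := hb.trans_le hab
  have hc := hd.trans_le hcd
  have s_sq_pos : 0 < s ^ 2 := by positivity
  simp only [ENNReal.ofReal_mul (show 0 ≤ 1 / π ^ 2 * s by positivity),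
    lintegral_const_mul' _ _ ENNReal.ofReal_ne_top]
  rw [← setLIntegral_ofReal_mul_lintegral_ofReal measurableSet_Ioo (by fun_prop) fun θ hθ ↦ by
      have := add_sub_mul_cos_pos hb hab hθ
      exact one_div_nonneg.2 (by linarith),
    setLIntegral_one_div_sub_mul_cos (by positivity) (by linarith [sq_nonneg (a - b)]),
    setLIntegral_one_div_sub_mul_cos (by positivity) (by linarith [sq_nonneg (c - d)]),
    ← ENNReal.ofReal_mul (by positivity), ← ENNReal.ofReal_mul (by positivity)]
  congr 1
  field_simp

lemma setLIntegral_mul_K0_mul_I0_mul_K0_mul_I0 (hb : 0 < b) (hab : b ≤ a) (hd : 0 < d)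
    (hcd : d ≤ c) :
    ∫⁻ t in Ioi (0 : ℝ), ENNReal.ofReal (t * (K0 (a * t) * I0 (b * t) *
        (K0 (c * t) * I0 (d * t))))
      = ∫⁻ s in Ioi (0 : ℝ), ENNReal.ofReal (s *
          (1 / √((s ^ 2 + a ^ 2 + b ^ 2) ^ 2 - (2 * a * b) ^ 2) *
            (1 / √((s ^ 2 + c ^ 2 + d ^ 2) ^ 2 - (2 * c * d) ^ 2)))) := by
  have mK := measurable_K0
  calc
    _ = ∫⁻ t in Ioi (0 : ℝ), ∫⁻ θ in Ioo (0 : ℝ) π, ∫⁻ ψ in Ioo (0 : ℝ) π, ENNReal.ofReal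
          (1 / π ^ 2 * (t * (K0 (√(a ^ 2 + b ^ 2 - 2 * a * b * cos θ) * t) *
            K0 (√(c ^ 2 + d ^ 2 - 2 * c * d * cos ψ) * t)))) :=
        setLIntegral_congr_fun measurableSet_Ioi fun t ht ↦
          ofReal_mul_K0_mul_I0_mul_K0_mul_I0 hb hab hd hcd ht (le_of_lt ht)
    _ = ∫⁻ θ in Ioo (0 : ℝ) π, ∫⁻ ψ in Ioo (0 : ℝ) π, ∫⁻ t in Ioi (0 : ℝ), ENNReal.ofReal
          (1 / π ^ 2 * (t * (K0 (√(a ^ 2 + b ^ 2 - 2 * a * b * cos θ) * t) *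
            K0 (√(c ^ 2 + d ^ 2 - 2 * c * d * cos ψ) * t)))) :=
        lintegral_rotate₃ _ (by fun_prop)
    _ = ∫⁻ θ in Ioo (0 : ℝ) π, ∫⁻ ψ in Ioo (0 : ℝ) π, ∫⁻ s in Ioi (0 : ℝ), ENNReal.ofReal
          (1 / π ^ 2 * s * (1 / (s ^ 2 + a ^ 2 + b ^ 2 - 2 * a * b * cos θ) *
            (1 / (s ^ 2 + c ^ 2 + d ^ 2 - 2 * c * d * cos ψ)))) := by
        refine setLIntegral_congr_fun measurableSet_Ioo fun θ hθ ↦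
          setLIntegral_congr_fun measurableSet_Ioo fun ψ hψ ↦ ?_
        have hθ0 := add_sub_mul_cos_pos hb hab hθ
        have hψ0 := add_sub_mul_cos_pos hd hcd hψ
        rw [← ofReal_mul_lintegral_ofReal (by positivity),
          setLIntegral_mul_K0_mul_K0 (sqrt_pos.2 hθ0) (sqrt_pos.2 hψ0),
          ofReal_mul_lintegral_ofReal (by positivity), sq_sqrt hθ0.le, sq_sqrt hψ0.le]
        congr! 3 with s
        rw [one_div_mul_one_div, mul_assoc (1 / π ^ 2), mul_one_div s]
        congr 3 <;> ring
    _ = ∫⁻ s in Ioi (0 : ℝ), ∫⁻ θ in Ioo (0 : ℝ) π, ∫⁻ ψ in Ioo (0 : ℝ) π, ENNReal.ofReal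
          (1 / π ^ 2 * s * (1 / (s ^ 2 + a ^ 2 + b ^ 2 - 2 * a * b * cos θ) *
            (1 / (s ^ 2 + c ^ 2 + d ^ 2 - 2 * c * d * cos ψ)))) :=
        (lintegral_rotate₃ _ (by fun_prop)).symm
    _ = _ := setLIntegral_congr_fun measurableSet_Ioi fun s hs ↦
        setLIntegral_mul_one_div_mul_one_div_sub_mul_cos hb hab hd hcd hs

end FourBessel

lemma setLIntegral_eq_two_mul_sinh (f : ℝ → ℝ≥0∞) :
    ∫⁻ s in Ioi (0 : ℝ), f s
      = ∫⁻ u in Ioi (0 : ℝ), ENNReal.ofReal (2 * cosh u) * f (2 * sinh u) :=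
  setLIntegral_eq_of_invOn_of_deriv_nonneg (ψ := fun x ↦ arsinh (x / 2)) measurableSet_Ioi
    (fun x _ ↦ (hasDerivAt_sinh x).const_mul 2)
    (fun x _ ↦ mul_nonneg zero_le_two (cosh_pos x).le)
    (fun _ hx ↦ mul_pos two_pos (sinh_pos_iff.2 hx))
    (fun _ hx ↦ arsinh_pos_iff.2 (half_pos hx))
    ⟨fun x _ ↦ by simp, fun x _ ↦ by simp only [sinh_arsinh]; ring⟩ f

lemma four_mul_setLIntegral_mul_K0_mul_I0_mul_K0_mul_I0 {C : ℝ} (hC : 1 ≤ C) :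
    4 * ∫⁻ t in Ioi (0 : ℝ), ENNReal.ofReal (t * (K0 (1 * t) * I0 (1 * t) *
        (K0 (2 * C * t) * I0 (2 * t))))
      = ∫⁻ u in Ioi (0 : ℝ), ENNReal.ofReal (1 / √((cosh u ^ 2 + C ^ 2) ^ 2 - 4 * C ^ 2)) := by
  rw [setLIntegral_mul_K0_mul_I0_mul_K0_mul_I0 one_pos le_rfl two_pos (by linarith),
    setLIntegral_eq_two_mul_sinh, ← lintegral_const_mul' _ _ (by norm_num)]
  refine setLIntegral_congr_fun measurableSet_Ioi fun u (hu : 0 < u) ↦ ?_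
  have := sinh_pos_iff.2 hu
  rw [← ENNReal.ofReal_mul (by positivity), ← ENNReal.ofReal_ofNat 4,
    ← ENNReal.ofReal_mul (by norm_num),
    show ((2 * sinh u) ^ 2 + 1 ^ 2 + 1 ^ 2) ^ 2 - (2 * 1 * 1) ^ 2 = (4 * sinh u * cosh u) ^ 2 by
      linear_combination (-16 * sinh u ^ 2) * cosh_sq u,
    show ((2 * sinh u) ^ 2 + (2 * C) ^ 2 + 2 ^ 2) ^ 2 - (2 * (2 * C) * 2) ^ 2
      = 4 ^ 2 * ((cosh u ^ 2 + C ^ 2) ^ 2 - 4 * C ^ 2) by rw [cosh_sq u]; ring,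
    sqrt_sq (by positivity), sqrt_mul (by positivity), sqrt_sq (by norm_num)]
  congr 1
  field_simp
  norm_num

/-- `∫₀^∞ I₀(2t) I₀(t) K₀(t)³ t dt` as an extended nonnegative number, so that Tonelli's theorem
applies before convergence is known. -/
noncomputable def momentIIKKK : ℝ≥0∞ :=
  ∫⁻ t in Ioi (0 : ℝ), ENNReal.ofReal (I0 (2 * t) * I0 t * K0 t ^ 3 * t)

lemma momentIIKKK_eq_two_mul_setLIntegral_cosh :
    momentIIKKK = 2 * ∫⁻ v in Ioi (0 : ℝ), ∫⁻ t in Ioi (0 : ℝ), ENNReal.ofReal (t *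
      (K0 (1 * t) * I0 (1 * t) * (K0 (2 * cosh v * t) * I0 (2 * t)))) := by
  have mK := measurable_K0
  have mI := measurable_I0
  rw [momentIIKKK, lintegral_lintegral_swap (Measurable.aemeasurable (by fun_prop)),
    ← lintegral_const_mul' _ _ (by norm_num)]
  refine setLIntegral_congr_fun measurableSet_Ioi fun t (ht : 0 < t) ↦ ?_
  have hI := I0_nonneg t
  have hI2 := I0_nonneg (2 * t)
  have hK := K0_nonneg t
  rw [show I0 (2 * t) * I0 t * K0 t ^ 3 * t = t * I0 (2 * t) * (K0 t * I0 t) * K0 t ^ 2 by ring,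
    ENNReal.ofReal_mul (by positivity), ofReal_K0_sq ht, mul_left_comm,
    ofReal_mul_lintegral_ofReal (by positivity)]
  congr! 4 with v
  rw [one_mul, mul_right_comm 2 t]
  ring

lemma two_mul_momentIIKKK :
    2 * momentIIKKK = ∫⁻ v in Ioi (0 : ℝ), ∫⁻ u in Ioi (0 : ℝ),
      ENNReal.ofReal (1 / √((cosh u ^ 2 + cosh v ^ 2) ^ 2 - 4 * cosh v ^ 2)) := by
  simp only [← four_mul_setLIntegral_mul_K0_mul_I0_mul_K0_mul_I0 (one_le_cosh _)]
  rw [momentIIKKK_eq_two_mul_setLIntegral_cosh, lintegral_const_mul' _ _ (by norm_num), ← mul_assoc]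
  norm_num

lemma sinh_add_sinh_sq_add_sinh_sq_mul_sinh_sq (a b : ℝ) :
    (sinh (a + b) + sinh (a - b)) ^ 2 + sinh (a + b) ^ 2 * sinh (a - b) ^ 2
      = (cosh a ^ 2 + cosh b ^ 2) ^ 2 - 4 * cosh b ^ 2 := by
  have h_sum : sinh (a + b) + sinh (a - b) = 2 * sinh a * cosh b := by
    rw [sinh_add, sinh_sub]; ring
  have h_prod : sinh (a + b) * sinh (a - b) = cosh a ^ 2 - cosh b ^ 2 := by
    rw [sinh_add, sinh_sub, cosh_sq a, cosh_sq b]; ring_nf; rw [cosh_sq a, cosh_sq b]; ring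
  rw [← mul_pow, h_sum, h_prod]
  linear_combination (-4 * cosh b ^ 2) * cosh_sq a

lemma sixteen_mul_momentIIKKK :
    16 * momentIIKKK = ∫⁻ x : ℝ, ∫⁻ y : ℝ,
      ENNReal.ofReal (1 / √((sinh x + sinh y) ^ 2 + sinh x ^ 2 * sinh y ^ 2)) := by
  rw [lintegral_lintegral_eq_two_mul_comp_add_sub (by fun_prop)]
  simp only [sinh_add_sinh_sq_add_sinh_sq_mul_sinh_sq]
  rw [lintegral_lintegral_swap (Measurable.aemeasurable (by fun_prop)),
    lintegral_lintegral_of_even (by simp) (by simp), ← two_mul_momentIIKKK]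
  ring

lemma lintegral_eq_inv_sinh (f : ℝ → ℝ≥0∞) :
    ∫⁻ x, f x = ∫⁻ u, ENNReal.ofReal (cosh u / sinh u ^ 2) * f (sinh u)⁻¹ := by
  have h := setLIntegral_eq_of_invOn (φ := fun x ↦ (sinh x)⁻¹) (s := {0}ᶜ) (t := {0}ᶜ)
    (ψ := fun x ↦ arsinh x⁻¹) (measurableSet_singleton _).compl
    (fun x hx ↦ (hasDerivAt_sinh x).fun_inv (by simpa using hx)) (fun x hx ↦ by simpa using hx)
    (fun x hx ↦ by simpa using hx) ⟨fun x _ ↦ by simp, fun x _ ↦ by simp⟩ f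
  rw [restrict_compl_singleton] at h
  refine h.trans (lintegral_congr fun x ↦ ?_)
  rw [abs_div, abs_neg, abs_of_pos (cosh_pos x), abs_of_nonneg (sq_nonneg _)]

/-- The plane integral `∬ dT dU / √((1 + T²)(1 + U²)(1 + (T - U)²))`, to which both moments
reduce. -/
noncomputable def planePeriod : ℝ≥0∞ :=
  ∫⁻ T : ℝ, ∫⁻ U : ℝ, ENNReal.ofReal (1 / √((1 + T ^ 2) * (1 + U ^ 2) * (1 + (T - U) ^ 2)))

lemma inv_sinh_plane_integrand {x y : ℝ} (hx : x ≠ 0) (hy : y ≠ 0) :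
    cosh x / sinh x ^ 2 * (cosh y / sinh y ^ 2 * (1 / √((1 + (sinh x)⁻¹ ^ 2) *
        (1 + (-(sinh y)⁻¹) ^ 2) * (1 + ((sinh x)⁻¹ - -(sinh y)⁻¹) ^ 2))))
      = 1 / √((sinh x + sinh y) ^ 2 + sinh x ^ 2 * sinh y ^ 2) := by
  have hsx : sinh x ≠ 0 := by simpa using hx
  have hsy : sinh y ≠ 0 := by simpa using hy
  rw [show (1 + (sinh x)⁻¹ ^ 2) * (1 + (-(sinh y)⁻¹) ^ 2) * (1 + ((sinh x)⁻¹ - -(sinh y)⁻¹) ^ 2)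
    = (cosh x * cosh y / (sinh x ^ 2 * sinh y ^ 2)) ^ 2 *
      ((sinh x + sinh y) ^ 2 + sinh x ^ 2 * sinh y ^ 2) by
        field_simp
        rw [cosh_sq x, cosh_sq y]
        ring, sqrt_mul (by positivity), sqrt_sq (by positivity)]
  have : 0 < (sinh x + sinh y) ^ 2 + sinh x ^ 2 * sinh y ^ 2 := by positivity
  field_simp

theorem sixteen_mul_momentIIKKK_eq_planePeriod : 16 * momentIIKKK = planePeriod := by
  rw [sixteen_mul_momentIIKKK, planePeriod, eq_comm, lintegral_eq_inv_sinh]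
  refine lintegral_congr_ae ?_
  filter_upwards [Measure.ae_ne volume 0] with x hx
  rw [← lintegral_neg_eq_self, lintegral_eq_inv_sinh,
    ← lintegral_const_mul' _ _ ENNReal.ofReal_ne_top]
  refine lintegral_congr_ae ?_
  filter_upwards [Measure.ae_ne volume 0] with y hy
  rw [← ENNReal.ofReal_mul (by positivity), ← ENNReal.ofReal_mul (by positivity),
    inv_sinh_plane_integrand hx hy]

section FiveBessel

variable {a b c d e : ℝ}

lemma setLIntegral_mul_one_div_mul_one_div_mul_one_div_sub_mul_cos (hb : 0 < b) (hab : b ≤ a)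
    (hd : 0 < d) (hcd : d ≤ c) (he : 0 < e) {k l : ℝ} (hk : 0 < k) (hl : 0 < l) :
    ∫⁻ χ in Ioo (0 : ℝ) π, ∫⁻ θ in Ioo (0 : ℝ) π, ∫⁻ ψ in Ioo (0 : ℝ) π, ENNReal.ofReal
        (k * l / π ^ 3 * (1 / (e ^ 2 + k ^ 2 + l ^ 2 - 2 * k * l * cos χ) *
          (1 / (k ^ 2 + a ^ 2 + b ^ 2 - 2 * a * b * cos θ) *
            (1 / (l ^ 2 + c ^ 2 + d ^ 2 - 2 * c * d * cos ψ)))))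
      = ENNReal.ofReal (k * l * (1 / √((e ^ 2 + k ^ 2 + l ^ 2) ^ 2 - (2 * k * l) ^ 2) *
          (1 / √((k ^ 2 + a ^ 2 + b ^ 2) ^ 2 - (2 * a * b) ^ 2) *
            (1 / √((l ^ 2 + c ^ 2 + d ^ 2) ^ 2 - (2 * c * d) ^ 2))))) := by
  have ha := hb.trans_le hab
  have hc := hd.trans_le hcd
  have e_sq_pos : 0 < e ^ 2 := by positivity
  have k_sq_pos : 0 < k ^ 2 := by positivity
  have l_sq_pos : 0 < l ^ 2 := by positivity
  have denominator_pos (χ : ℝ) : 0 < e ^ 2 + k ^ 2 + l ^ 2 - 2 * k * l * cos χ := by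
    nlinarith [sq_nonneg (k - l), cos_le_one χ, mul_pos hk hl]
  simp only [ENNReal.ofReal_mul (show 0 ≤ k * l / π ^ 3 by positivity),
    lintegral_const_mul' _ _ ENNReal.ofReal_ne_top]
  rw [← setLIntegral_ofReal_mul_mul measurableSet_Ioo measurableSet_Ioo (by fun_prop)
      (by fun_prop) (fun χ _ ↦ one_div_nonneg.2 (denominator_pos χ).le) fun θ hθ ↦ by
        have := add_sub_mul_cos_pos hb hab hθ
        exact one_div_nonneg.2 (by linarith),
    setLIntegral_one_div_sub_mul_cos (by positivity) (by linarith [sq_nonneg (k - l)]),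
    setLIntegral_one_div_sub_mul_cos (by positivity) (by linarith [sq_nonneg (a - b)]),
    setLIntegral_one_div_sub_mul_cos (by positivity) (by linarith [sq_nonneg (c - d)]),
    ← ENNReal.ofReal_mul (by positivity), ← ENNReal.ofReal_mul (by positivity),
    ← ENNReal.ofReal_mul (by positivity)]
  congr 1
  field_simp

lemma setLIntegral_mul_K0_mul_K0_sqrt_mul_K0_sqrt (hb : 0 < b) (hab : b ≤ a) (hd : 0 < d)
    (hcd : d ≤ c) (he : 0 < e) {θ ψ : ℝ} (hθ : θ ∈ Ioo 0 π) (hψ : ψ ∈ Ioo 0 π) :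
    ∫⁻ t in Ioi (0 : ℝ), ENNReal.ofReal (1 / π ^ 2 * (t * K0 (e * t) *
        (K0 (√(a ^ 2 + b ^ 2 - 2 * a * b * cos θ) * t) *
          K0 (√(c ^ 2 + d ^ 2 - 2 * c * d * cos ψ) * t))))
      = ∫⁻ k in Ioi (0 : ℝ), ∫⁻ l in Ioi (0 : ℝ), ∫⁻ χ in Ioo (0 : ℝ) π, ENNReal.ofReal
          (k * l / π ^ 3 * (1 / (e ^ 2 + k ^ 2 + l ^ 2 - 2 * k * l * cos χ) *
            (1 / (k ^ 2 + a ^ 2 + b ^ 2 - 2 * a * b * cos θ) *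
              (1 / (l ^ 2 + c ^ 2 + d ^ 2 - 2 * c * d * cos ψ))))) := by
  have hθ0 := add_sub_mul_cos_pos hb hab hθ
  have hψ0 := add_sub_mul_cos_pos hd hcd hψ
  simp only [mul_assoc _ (K0 (e * _))]
  rw [← ofReal_mul_lintegral_ofReal (by positivity),
    setLIntegral_mul_K0_mul_K0_mul_K0 he (sqrt_pos.2 hθ0) (sqrt_pos.2 hψ0),
    sq_sqrt hθ0.le, sq_sqrt hψ0.le]
  simp only [← lintegral_const_mul' _ _ ENNReal.ofReal_ne_top,
    ← ENNReal.ofReal_mul (show 0 ≤ 1 / π ^ 2 by positivity)]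
  congr! 7 with k l χ
  rw [show a ^ 2 + b ^ 2 - 2 * a * b * cos θ + k ^ 2
      = k ^ 2 + a ^ 2 + b ^ 2 - 2 * a * b * cos θ by ring,
    show c ^ 2 + d ^ 2 - 2 * c * d * cos ψ + l ^ 2
      = l ^ 2 + c ^ 2 + d ^ 2 - 2 * c * d * cos ψ by ring]
  ring

lemma setLIntegral_mul_K0_mul_K0_mul_I0_mul_K0_mul_I0 (hb : 0 < b) (hab : b ≤ a) (hd : 0 < d)
    (hcd : d ≤ c) (he : 0 < e) :
    ∫⁻ t in Ioi (0 : ℝ), ENNReal.ofReal (t * K0 (e * t) * (K0 (a * t) * I0 (b * t) *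
        (K0 (c * t) * I0 (d * t))))
      = ∫⁻ k in Ioi (0 : ℝ), ∫⁻ l in Ioi (0 : ℝ), ENNReal.ofReal (k * l *
          (1 / √((e ^ 2 + k ^ 2 + l ^ 2) ^ 2 - (2 * k * l) ^ 2) *
            (1 / √((k ^ 2 + a ^ 2 + b ^ 2) ^ 2 - (2 * a * b) ^ 2) *
              (1 / √((l ^ 2 + c ^ 2 + d ^ 2) ^ 2 - (2 * c * d) ^ 2))))) := by
  have mK := measurable_K0
  calc
    _ = ∫⁻ t in Ioi (0 : ℝ), ∫⁻ θ in Ioo (0 : ℝ) π, ∫⁻ ψ in Ioo (0 : ℝ) π, ENNReal.ofReal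
          (1 / π ^ 2 * (t * K0 (e * t) * (K0 (√(a ^ 2 + b ^ 2 - 2 * a * b * cos θ) * t) *
            K0 (√(c ^ 2 + d ^ 2 - 2 * c * d * cos ψ) * t)))) :=
        setLIntegral_congr_fun measurableSet_Ioi fun t (ht : 0 < t) ↦
          ofReal_mul_K0_mul_I0_mul_K0_mul_I0 hb hab hd hcd ht (mul_nonneg ht.le (K0_nonneg _))
    _ = ∫⁻ θ in Ioo (0 : ℝ) π, ∫⁻ ψ in Ioo (0 : ℝ) π, ∫⁻ t in Ioi (0 : ℝ), ENNReal.ofReal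
          (1 / π ^ 2 * (t * K0 (e * t) * (K0 (√(a ^ 2 + b ^ 2 - 2 * a * b * cos θ) * t) *
            K0 (√(c ^ 2 + d ^ 2 - 2 * c * d * cos ψ) * t)))) :=
        lintegral_rotate₃ _ (by fun_prop)
    _ = ∫⁻ θ in Ioo (0 : ℝ) π, ∫⁻ ψ in Ioo (0 : ℝ) π,
          ∫⁻ k in Ioi (0 : ℝ), ∫⁻ l in Ioi (0 : ℝ), ∫⁻ χ in Ioo (0 : ℝ) π, ENNReal.ofReal
          (k * l / π ^ 3 * (1 / (e ^ 2 + k ^ 2 + l ^ 2 - 2 * k * l * cos χ) *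
            (1 / (k ^ 2 + a ^ 2 + b ^ 2 - 2 * a * b * cos θ) *
              (1 / (l ^ 2 + c ^ 2 + d ^ 2 - 2 * c * d * cos ψ))))) :=
        setLIntegral_congr_fun measurableSet_Ioo fun θ hθ ↦
          setLIntegral_congr_fun measurableSet_Ioo fun ψ hψ ↦
            setLIntegral_mul_K0_mul_K0_sqrt_mul_K0_sqrt hb hab hd hcd he hθ hψ
    _ = ∫⁻ k in Ioi (0 : ℝ), ∫⁻ l in Ioi (0 : ℝ), ∫⁻ χ in Ioo (0 : ℝ) π,
          ∫⁻ θ in Ioo (0 : ℝ) π, ∫⁻ ψ in Ioo (0 : ℝ) π, ENNReal.ofReal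
          (k * l / π ^ 3 * (1 / (e ^ 2 + k ^ 2 + l ^ 2 - 2 * k * l * cos χ) *
            (1 / (k ^ 2 + a ^ 2 + b ^ 2 - 2 * a * b * cos θ) *
              (1 / (l ^ 2 + c ^ 2 + d ^ 2 - 2 * c * d * cos ψ))))) :=
        lintegral_swap_two_three _ (by fun_prop)
    _ = _ := setLIntegral_congr_fun measurableSet_Ioi fun k hk ↦
        setLIntegral_congr_fun measurableSet_Ioi fun l hl ↦
          setLIntegral_mul_one_div_mul_one_div_mul_one_div_sub_mul_cos hb hab hd hcd he hk hl

end FiveBessel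

/-- `∫₀^∞ K₀(2t) I₀(t)² K₀(t)² t dt` as an extended nonnegative number. -/
noncomputable def momentKIIKK : ℝ≥0∞ :=
  ∫⁻ t in Ioi (0 : ℝ), ENNReal.ofReal (K0 (2 * t) * I0 t ^ 2 * K0 t ^ 2 * t)

lemma momentKIIKK_eq :
    momentKIIKK = ∫⁻ k in Ioi (0 : ℝ), ∫⁻ l in Ioi (0 : ℝ), ENNReal.ofReal (k * l *
      (1 / √((2 ^ 2 + k ^ 2 + l ^ 2) ^ 2 - (2 * k * l) ^ 2) *
        (1 / √((k ^ 2 + 1 ^ 2 + 1 ^ 2) ^ 2 - (2 * 1 * 1) ^ 2) *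
          (1 / √((l ^ 2 + 1 ^ 2 + 1 ^ 2) ^ 2 - (2 * 1 * 1) ^ 2))))) := by
  rw [← setLIntegral_mul_K0_mul_K0_mul_I0_mul_K0_mul_I0 one_pos le_rfl one_pos le_rfl two_pos,
    momentKIIKK]
  congr! 3 with t
  rw [one_mul]
  ring

lemma four_mul_momentKIIKK :
    4 * momentKIIKK = ∫⁻ v in Ioi (0 : ℝ), ∫⁻ u in Ioi (0 : ℝ), ENNReal.ofReal
      (1 / √((1 + sinh v ^ 2 + sinh u ^ 2) ^ 2 - 4 * sinh v ^ 2 * sinh u ^ 2)) := by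
  rw [momentKIIKK_eq, setLIntegral_eq_two_mul_sinh, ← lintegral_const_mul' _ _ (by norm_num)]
  refine setLIntegral_congr_fun measurableSet_Ioi fun v (hv : 0 < v) ↦ ?_
  rw [setLIntegral_eq_two_mul_sinh, ← lintegral_const_mul' _ _ ENNReal.ofReal_ne_top,
    ← lintegral_const_mul' _ _ (by norm_num)]
  refine setLIntegral_congr_fun measurableSet_Ioi fun u (hu : 0 < u) ↦ ?_
  have := sinh_pos_iff.2 hu
  have := sinh_pos_iff.2 hv
  have angular_eq (w : ℝ) : ((2 * sinh w) ^ 2 + 1 ^ 2 + 1 ^ 2) ^ 2 - (2 * 1 * 1) ^ 2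
      = (4 * sinh w * cosh w) ^ 2 := by
    linear_combination (-16 * sinh w ^ 2) * cosh_sq w
  rw [← ENNReal.ofReal_mul (by positivity), ← ENNReal.ofReal_mul (by positivity),
    ← ENNReal.ofReal_ofNat 4, ← ENNReal.ofReal_mul (by norm_num), angular_eq, angular_eq,
    show (2 ^ 2 + (2 * sinh v) ^ 2 + (2 * sinh u) ^ 2) ^ 2 - (2 * (2 * sinh v) * (2 * sinh u)) ^ 2
      = 4 ^ 2 * ((1 + sinh v ^ 2 + sinh u ^ 2) ^ 2 - 4 * sinh v ^ 2 * sinh u ^ 2) by ring,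
    sqrt_sq (by positivity), sqrt_sq (by positivity), sqrt_mul (by positivity),
    sqrt_sq (by norm_num)]
  congr 1
  field_simp
  norm_num

lemma cosh_sq_mul_cosh_sq_sub_cosh_sub_cosh_sq (a b : ℝ) :
    cosh (a + b) ^ 2 * cosh (a - b) ^ 2 - (cosh (a + b) - cosh (a - b)) ^ 2
      = (1 + sinh a ^ 2 + sinh b ^ 2) ^ 2 - 4 * sinh a ^ 2 * sinh b ^ 2 := by
  have h_diff : cosh (a + b) - cosh (a - b) = 2 * sinh a * sinh b := by
    rw [cosh_add, cosh_sub]; ring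
  have h_prod : cosh (a + b) * cosh (a - b) = 1 + sinh a ^ 2 + sinh b ^ 2 := by
    rw [cosh_add, cosh_sub]
    linear_combination cosh b ^ 2 * cosh_sq a + (1 + sinh a ^ 2) * cosh_sq b
  rw [← mul_pow, h_diff, h_prod]
  ring

lemma eight_mul_momentKIIKK_eq_setLIntegral_cosh :
    8 * momentKIIKK = ∫⁻ x in Ioi (0 : ℝ), ∫⁻ y in Ioi (0 : ℝ),
      ENNReal.ofReal (1 / √(cosh x ^ 2 * cosh y ^ 2 - (cosh x - cosh y) ^ 2)) := by
  refine (ENNReal.mul_right_inj (a := 4) (by norm_num) (by norm_num)).1 ?_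
  rw [← lintegral_lintegral_of_even (by simp) (by simp),
    lintegral_lintegral_eq_two_mul_comp_add_sub (by fun_prop)]
  simp only [cosh_sq_mul_cosh_sq_sub_cosh_sub_cosh_sq]
  rw [lintegral_lintegral_of_even (by simp) (by simp), ← four_mul_momentKIIKK]
  ring

lemma setLIntegral_Ioo_eq_inv_cosh (f : ℝ → ℝ≥0∞) :
    ∫⁻ x in Ioo (0 : ℝ) 1, f x
      = ∫⁻ u in Ioi (0 : ℝ), ENNReal.ofReal (sinh u / cosh u ^ 2) * f (cosh u)⁻¹ := by
  rw [setLIntegral_eq_of_invOn (t := Ioo 0 1) (ψ := fun x ↦ arcosh x⁻¹) measurableSet_Ioi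
    (fun x _ ↦ (hasDerivAt_cosh x).fun_inv (cosh_pos x).ne')
    (fun x hx ↦ ⟨by positivity, inv_lt_one_of_one_lt₀ (one_lt_cosh.2 (ne_of_gt hx))⟩)
    (fun x hx ↦ arcosh_pos ((one_lt_inv₀ hx.1).2 hx.2))
    ⟨fun x hx ↦ by simp only [inv_inv, arcosh_cosh (le_of_lt hx)],
      fun x hx ↦ by simp only [cosh_arcosh ((one_le_inv₀ hx.1).2 hx.2.le), inv_inv]⟩]
  refine setLIntegral_congr_fun measurableSet_Ioi fun x hx ↦ ?_
  rw [abs_div, abs_neg, abs_of_pos (sinh_pos_iff.2 hx), abs_of_nonneg (sq_nonneg _)]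

/-- The integrand `1 / √((1 - T²)(1 - U²)(1 - (T - U)²))`, positive on the hexagon
`|T|, |U|, |T - U| < 1`. -/
noncomputable def hexagonIntegrand (T U : ℝ) : ℝ :=
  1 / √((1 - T ^ 2) * (1 - U ^ 2) * (1 - (T - U) ^ 2))

lemma measurable_hexagonIntegrand : Measurable fun p : ℝ × ℝ ↦ hexagonIntegrand p.1 p.2 := by
  unfold hexagonIntegrand
  fun_prop

lemma inv_cosh_hexagonIntegrand {x y : ℝ} (hx : 0 < x) (hy : 0 < y) :
    sinh x / cosh x ^ 2 * (sinh y / cosh y ^ 2 * hexagonIntegrand (cosh x)⁻¹ (cosh y)⁻¹)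
      = 1 / √(cosh x ^ 2 * cosh y ^ 2 - (cosh x - cosh y) ^ 2) := by
  have := sinh_pos_iff.2 hx
  have := sinh_pos_iff.2 hy
  unfold hexagonIntegrand
  rw [show (1 - (cosh x)⁻¹ ^ 2) * (1 - (cosh y)⁻¹ ^ 2) * (1 - ((cosh x)⁻¹ - (cosh y)⁻¹) ^ 2)
    = (sinh x * sinh y / (cosh x ^ 2 * cosh y ^ 2)) ^ 2 *
      (cosh x ^ 2 * cosh y ^ 2 - (cosh x - cosh y) ^ 2) by
      rw [div_pow, mul_pow, sinh_sq x, sinh_sq y]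
      field_simp
      ring, sqrt_mul (by positivity), sqrt_sq (by positivity)]
  field_simp

lemma eight_mul_momentKIIKK :
    8 * momentKIIKK
      = ∫⁻ T in Ioo (0 : ℝ) 1, ∫⁻ U in Ioo (0 : ℝ) 1, ENNReal.ofReal (hexagonIntegrand T U) := by
  rw [eight_mul_momentKIIKK_eq_setLIntegral_cosh, eq_comm, setLIntegral_Ioo_eq_inv_cosh]
  refine setLIntegral_congr_fun measurableSet_Ioi fun x hx ↦ ?_
  rw [setLIntegral_Ioo_eq_inv_cosh, ← lintegral_const_mul' _ _ ENNReal.ofReal_ne_top]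
  refine setLIntegral_congr_fun measurableSet_Ioi fun y hy ↦ ?_
  have := sinh_pos_iff.2 hx
  have := sinh_pos_iff.2 hy
  rw [← ENNReal.ofReal_mul (by positivity), ← ENNReal.ofReal_mul (by positivity),
    inv_cosh_hexagonIntegrand hx hy]

/-! ### The hexagon -/

/-- The integral of `hexagonIntegrand` over the triangle `0 < U < T < 1`, one of six into which the
hexagon `|T|, |U|, |T - U| < 1` decomposes and over which the integrals agree. -/
noncomputable def hexagonTriangle : ℝ≥0∞ :=
  ∫⁻ T in Ioo (0 : ℝ) 1, ∫⁻ U in Ioo (0 : ℝ) T, ENNReal.ofReal (hexagonIntegrand T U)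

lemma hexagonIntegrand_comm (T U : ℝ) : hexagonIntegrand T U = hexagonIntegrand U T := by
  unfold hexagonIntegrand
  congr 2
  ring

lemma hexagonIntegrand_neg_right (T U : ℝ) :
    hexagonIntegrand T (-U) = hexagonIntegrand U (T + U) := by
  unfold hexagonIntegrand
  congr 2
  ring

lemma setLIntegral_square_hexagonIntegrand :
    ∫⁻ T in Ioo (0 : ℝ) 1, ∫⁻ U in Ioo (0 : ℝ) 1, ENNReal.ofReal (hexagonIntegrand T U)
      = 2 * hexagonTriangle :=
  setLIntegral_square_of_symm 0 1 measurable_hexagonIntegrand.ennreal_ofReal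
    fun T U ↦ by rw [hexagonIntegrand_comm]

lemma setLIntegral_lower_triangle_hexagonIntegrand :
    ∫⁻ T in Ioo (0 : ℝ) 1, ∫⁻ U in Ioo (T - 1) 0, ENNReal.ofReal (hexagonIntegrand T U)
      = hexagonTriangle := by
  have h_neg (T : ℝ) : ∫⁻ U in Ioo (T - 1) 0, ENNReal.ofReal (hexagonIntegrand T U)
      = ∫⁻ V in Ioo 0 (1 - T), ENNReal.ofReal (hexagonIntegrand V (T + V)) := by
    have := setLIntegral_Ioo_comp_neg 0 (1 - T) fun U ↦ ENNReal.ofReal (hexagonIntegrand T U)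
    simpa only [neg_sub, neg_zero, hexagonIntegrand_neg_right] using this.symm
  have h_shift (V : ℝ) : ∫⁻ T in Ioo 0 (1 - V), ENNReal.ofReal (hexagonIntegrand V (T + V))
      = ∫⁻ U in Ioo V 1, ENNReal.ofReal (hexagonIntegrand V U) := by
    simpa only [zero_add, sub_add_cancel] using
      setLIntegral_Ioo_comp_add_right 0 (1 - V) V fun U ↦ ENNReal.ofReal (hexagonIntegrand V U)
  simp only [h_neg]
  rw [setLIntegral_setLIntegral_swap (t := Ioo 0 1) (b := fun V ↦ Ioo 0 (1 - V))
    measurableSet_Ioo measurableSet_Ioo (fun _ ↦ measurableSet_Ioo) (fun _ ↦ measurableSet_Ioo)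
    (by simp only [mem_Ioo]; measurability) (fun x y ↦ by simp only [mem_Ioo]; grind)
    (measurable_hexagonIntegrand.ennreal_ofReal.comp
      (by fun_prop : Measurable fun p : ℝ × ℝ ↦ (p.2, p.1 + p.2)))]
  simp only [h_shift]
  rw [setLIntegral_triangle_swap 0 1 measurable_hexagonIntegrand.ennreal_ofReal]
  simp only [hexagonTriangle, hexagonIntegrand_comm]

lemma setLIntegral_half_hexagon_hexagonIntegrand :
    ∫⁻ T in Ioo (0 : ℝ) 1, ∫⁻ U in Ioo (T - 1) 1, ENNReal.ofReal (hexagonIntegrand T U)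
      = 3 * hexagonTriangle := by
  rw [show (3 : ℝ≥0∞) = 1 + 2 by norm_num, add_mul, one_mul,
    ← setLIntegral_square_hexagonIntegrand]
  nth_rw 1 [← setLIntegral_lower_triangle_hexagonIntegrand]
  rw [← lintegral_add_right _
    (Measurable.lintegral_prod_right' measurable_hexagonIntegrand.ennreal_ofReal)]
  exact setLIntegral_congr_fun measurableSet_Ioo fun T hT ↦
    (setLIntegral_Ioo_add_Ioo (by linarith [hT.2]) (by norm_num) _).symm

section QuarticSubstitution

variable {m M y : ℝ}

lemma sq_sub_sq_mul_sq_sub_sq_pos (hmM : m ≤ M) (hy : y ∈ Ioo 0 m) :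
    0 < (m ^ 2 - y ^ 2) * (M ^ 2 - y ^ 2) :=
  mul_pos (by nlinarith [hy.1, hy.2]) (by nlinarith [hy.1, hy.2])

lemma sq_lt_mul_of_mem_Ioo (hmM : m ≤ M) (hy : y ∈ Ioo 0 m) : y ^ 2 < m * M := by
  nlinarith [hy.1, hy.2]

lemma hasDerivAt_two_mul_div_sqrt_quartic (hmM : m ≤ M) (hy : y ∈ Ioo 0 m) :
    HasDerivAt (fun y ↦ 2 * y / √((m ^ 2 - y ^ 2) * (M ^ 2 - y ^ 2)))
      (2 * ((m * M) ^ 2 - y ^ 4) / (((m ^ 2 - y ^ 2) * (M ^ 2 - y ^ 2)) *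
        √((m ^ 2 - y ^ 2) * (M ^ 2 - y ^ 2)))) y := by
  have hQ := sq_sub_sq_mul_sq_sub_sq_pos hmM hy
  have h_quartic : HasDerivAt (fun y : ℝ ↦ (m ^ 2 - y ^ 2) * (M ^ 2 - y ^ 2))
      (-(2 * y) * (M ^ 2 - y ^ 2) + (m ^ 2 - y ^ 2) * -(2 * y)) y :=
    (((hasDerivAt_pow 2 y).const_sub (m ^ 2)).fun_mul
      ((hasDerivAt_pow 2 y).const_sub (M ^ 2))).congr_deriv (by norm_num)
  refine (((hasDerivAt_id' y).const_mul 2).fun_div (h_quartic.sqrt hQ.ne')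
    (sqrt_pos.2 hQ).ne').congr_deriv ?_
  have := sqrt_pos.2 hQ
  have h_sq := sq_sqrt hQ.le
  rw [h_sq]
  set w := √((m ^ 2 - y ^ 2) * (M ^ 2 - y ^ 2))
  rw [div_eq_div_iff (by positivity) (by positivity)]
  field_simp
  rw [h_sq]
  ring

lemma injOn_two_mul_div_sqrt_quartic (hmM : m ≤ M) :
    InjOn (fun y ↦ 2 * y / √((m ^ 2 - y ^ 2) * (M ^ 2 - y ^ 2))) (Ioo 0 m) := by
  intro y hy z hz h
  have hQy := sq_sub_sq_mul_sq_sub_sq_pos hmM hy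
  have hQz := sq_sub_sq_mul_sq_sub_sq_pos hmM hz
  have h_sq := congr_arg (· ^ 2) h
  simp only [div_pow, sq_sqrt hQy.le, sq_sqrt hQz.le] at h_sq
  rw [div_eq_div_iff hQy.ne' hQz.ne'] at h_sq
  have h_factor : (y - z) * ((y + z) * (m * M * (m * M) - y ^ 2 * z ^ 2)) = 0 := by linarith
  have h_lt : y ^ 2 * z ^ 2 < m * M * (m * M) :=
    mul_lt_mul'' (sq_lt_mul_of_mem_Ioo hmM hy) (sq_lt_mul_of_mem_Ioo hmM hz)
      (by positivity) (by positivity)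
  have h_pos : 0 < (y + z) * (m * M * (m * M) - y ^ 2 * z ^ 2) :=
    mul_pos (by linarith [hy.1, hz.1]) (by linarith)
  exact sub_eq_zero.1 ((mul_eq_zero.1 h_factor).resolve_right h_pos.ne')

lemma surjOn_two_mul_div_sqrt_quartic (hm : 0 < m) (hmM : m ≤ M) :
    SurjOn (fun y ↦ 2 * y / √((m ^ 2 - y ^ 2) * (M ^ 2 - y ^ 2))) (Ioo 0 m) (Ioi 0) := by
  intro t (ht : 0 < t)
  have := hm.trans_le hmM
  obtain ⟨y, hy, h_root⟩ : ∃ y ∈ Ioo 0 m,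
      4 * y ^ 2 - t ^ 2 * ((m ^ 2 - y ^ 2) * (M ^ 2 - y ^ 2)) = 0 := by
    refine intermediate_value_Ioo hm.le (f := fun y ↦ 4 * y ^ 2 - t ^ 2 *
      ((m ^ 2 - y ^ 2) * (M ^ 2 - y ^ 2))) (by fun_prop) ⟨?_, ?_⟩
    · simp only [ne_eq, OfNat.ofNat_ne_zero, not_false_eq_true, zero_pow, mul_zero, sub_zero,
        zero_sub, Left.neg_neg_iff]
      positivity
    · simp only [sub_self, zero_mul, mul_zero, sub_zero]
      positivity
  have hQ := sq_sub_sq_mul_sq_sub_sq_pos hmM hy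
  refine ⟨y, hy, (div_eq_iff (sqrt_pos.2 hQ).ne').2 ?_⟩
  rw [← sq_eq_sq₀ (by linarith [hy.1]) (by positivity), mul_pow, mul_pow, sq_sqrt hQ.le]
  linarith

lemma setLIntegral_Ioi_eq_two_mul_div_sqrt_quartic (hm : 0 < m) (hmM : m ≤ M) (f : ℝ → ℝ≥0∞) :
    ∫⁻ τ in Ioi (0 : ℝ), f τ = ∫⁻ y in Ioo 0 m, ENNReal.ofReal
      (2 * ((m * M) ^ 2 - y ^ 4) / (((m ^ 2 - y ^ 2) * (M ^ 2 - y ^ 2)) *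
        √((m ^ 2 - y ^ 2) * (M ^ 2 - y ^ 2)))) *
      f (2 * y / √((m ^ 2 - y ^ 2) * (M ^ 2 - y ^ 2))) := by
  have h_image : (fun y ↦ 2 * y / √((m ^ 2 - y ^ 2) * (M ^ 2 - y ^ 2))) '' Ioo 0 m = Ioi 0 := by
    refine Subset.antisymm (image_subset_iff.2 fun y hy ↦ ?_)
      (surjOn_two_mul_div_sqrt_quartic hm hmM)
    exact div_pos (by linarith [hy.1]) (sqrt_pos.2 (sq_sub_sq_mul_sq_sub_sq_pos hmM hy))
  rw [← h_image, lintegral_image_eq_lintegral_abs_deriv_mul measurableSet_Ioo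
    (fun y hy ↦ (hasDerivAt_two_mul_div_sqrt_quartic hmM hy).hasDerivWithinAt)
    (injOn_two_mul_div_sqrt_quartic hmM)]
  refine setLIntegral_congr_fun measurableSet_Ioo fun y hy ↦ ?_
  have := sq_sub_sq_mul_sq_sub_sq_pos hmM hy
  have : y ^ 4 ≤ (m * M) ^ 2 := by nlinarith [sq_lt_mul_of_mem_Ioo hmM hy, sq_nonneg y]
  rw [abs_of_nonneg (div_nonneg (by linarith) (by positivity))]

/-- With `m, M = 1 ∓ T / 2`, so that `m + M = 2`, both factors under the root become
squares. -/
lemma one_div_sqrt_quartic_eq {T : ℝ} (hmM : m ≤ M) (hy : y ∈ Ioo 0 m)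
    (hm : m = 1 - T / 2) (hM : M = 1 + T / 2) :
    2 * ((m * M) ^ 2 - y ^ 4) / (((m ^ 2 - y ^ 2) * (M ^ 2 - y ^ 2)) *
        √((m ^ 2 - y ^ 2) * (M ^ 2 - y ^ 2))) *
      (1 / √((1 + (2 * y / √((m ^ 2 - y ^ 2) * (M ^ 2 - y ^ 2))) ^ 2) *
        (4 + T ^ 2 * (2 * y / √((m ^ 2 - y ^ 2) * (M ^ 2 - y ^ 2))) ^ 2)))
      = 1 / √((m ^ 2 - y ^ 2) * (M ^ 2 - y ^ 2)) := by
  have hQ := sq_sub_sq_mul_sq_sub_sq_pos hmM hy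
  have := sqrt_pos.2 hQ
  have h_pos : 0 < (m * M) ^ 2 - y ^ 4 := by
    nlinarith [sq_lt_mul_of_mem_Ioo hmM hy, sq_nonneg y]
  set Q := (m ^ 2 - y ^ 2) * (M ^ 2 - y ^ 2) with hQ_def
  have h_add : Q + 2 ^ 2 * y ^ 2 = (m * M + y ^ 2) ^ 2 := by rw [hQ_def, hm, hM]; ring
  have h_sub : Q * 4 + 2 ^ 2 * y ^ 2 * T ^ 2 = 4 * (m * M - y ^ 2) ^ 2 := by
    rw [hQ_def, hm, hM]; ring
  have h_square : (1 + (2 * y / √Q) ^ 2) * (4 + T ^ 2 * (2 * y / √Q) ^ 2)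
      = (2 * ((m * M) ^ 2 - y ^ 4) / Q) ^ 2 := by
    rw [div_pow, sq_sqrt hQ.le, div_pow]
    field_simp
    rw [h_add, h_sub]
    ring
  rw [h_square, sqrt_sq (by positivity)]
  generalize (m * M) ^ 2 - y ^ 4 = w at h_pos
  field_simp

end QuarticSubstitution

lemma setLIntegral_Ioo_one_div_sqrt_eq {T : ℝ} (hT : T ∈ Ioo (0 : ℝ) 1) :
    ∫⁻ U in Ioo (T - 1) 1, ENNReal.ofReal (1 / √((1 - U ^ 2) * (1 - (T - U) ^ 2)))
      = 2 * ∫⁻ τ in Ioi (0 : ℝ), ENNReal.ofReal (1 / √((1 + τ ^ 2) * (4 + T ^ 2 * τ ^ 2))) := by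
  have h_shift := setLIntegral_Ioo_comp_add_right (-(1 - T / 2)) (1 - T / 2) (T / 2)
    fun U ↦ ENNReal.ofReal (1 / √((1 - U ^ 2) * (1 - (T - U) ^ 2)))
  rw [show -(1 - T / 2) + T / 2 = T - 1 by ring, sub_add_cancel] at h_shift
  rw [← h_shift, setLIntegral_Ioo_neg_self_of_even _ fun y ↦ by ring_nf]
  congr 1
  obtain ⟨hT₀, hT₁⟩ := hT
  have hmM : 1 - T / 2 ≤ 1 + T / 2 := by linarith
  rw [setLIntegral_Ioi_eq_two_mul_div_sqrt_quartic (by linarith) hmM]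
  refine setLIntegral_congr_fun measurableSet_Ioo fun y hy ↦ ?_
  have := sq_sub_sq_mul_sq_sub_sq_pos hmM hy
  have : y ^ 4 ≤ ((1 - T / 2) * (1 + T / 2)) ^ 2 := by
    nlinarith [sq_lt_mul_of_mem_Ioo hmM hy, sq_nonneg y]
  rw [← ENNReal.ofReal_mul (div_nonneg (by linarith) (by positivity)),
    one_div_sqrt_quartic_eq hmM hy rfl rfl]
  ring_nf

/-- The period through which the two moments are compared. In terms of the complementary
complete elliptic integral `K'` it is `½ ∫ K'(k/2) / √(1 - k²) dk` over `0 < k < 1`. -/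
noncomputable def ellipticPeriod : ℝ≥0∞ :=
  ∫⁻ k in Ioo (0 : ℝ) 1, ∫⁻ τ in Ioi (0 : ℝ),
    ENNReal.ofReal (1 / √(1 - k ^ 2) * (1 / √((1 + τ ^ 2) * (4 + k ^ 2 * τ ^ 2))))

lemma three_mul_hexagonTriangle : 3 * hexagonTriangle = 2 * ellipticPeriod := by
  rw [← setLIntegral_half_hexagon_hexagonIntegrand, ellipticPeriod,
    ← lintegral_const_mul' _ _ (by norm_num)]
  refine setLIntegral_congr_fun measurableSet_Ioo fun T hT ↦ ?_
  have h_pos : 0 < 1 - T ^ 2 := by nlinarith [hT.1, hT.2]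
  rw [← ofReal_mul_lintegral_ofReal (by positivity), mul_left_comm,
    ← setLIntegral_Ioo_one_div_sqrt_eq hT, ofReal_mul_lintegral_ofReal (by positivity)]
  refine lintegral_congr fun U ↦ ?_
  rw [hexagonIntegrand, mul_assoc, sqrt_mul h_pos.le, one_div_mul_one_div]

lemma six_mul_momentKIIKK : 6 * momentKIIKK = ellipticPeriod := by
  have h_eight := eight_mul_momentKIIKK.trans setLIntegral_square_hexagonIntegrand
  refine (ENNReal.mul_right_inj (a := 8) (by norm_num) (by norm_num)).1 ?_
  calc 8 * (6 * momentKIIKK) = 6 * (8 * momentKIIKK) := by ring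
    _ = 4 * (3 * hexagonTriangle) := by rw [h_eight]; ring
    _ = 8 * ellipticPeriod := by rw [three_mul_hexagonTriangle]; ring

/-! ### Comparison of the two periods -/

lemma lintegral_eq_sub_const_div {κ : ℝ} (hκ : 0 < κ) (f : ℝ → ℝ≥0∞) :
    ∫⁻ z, f z = ∫⁻ y in Ioi (0 : ℝ), ENNReal.ofReal (1 + κ / y ^ 2) * f (y - κ / y) := by
  have h_pos (z : ℝ) : 0 < z + √(z ^ 2 + 4 * κ) := by
    have : |z| < √(z ^ 2 + 4 * κ) := by
      rw [← sqrt_sq_eq_abs]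
      exact sqrt_lt_sqrt (by positivity) (by linarith)
    linarith [neg_abs_le z]
  rw [← setLIntegral_univ, setLIntegral_eq_of_invOn_of_deriv_nonneg (t := univ)
    (φ' := fun y ↦ 1 + κ / y ^ 2) (ψ := fun z ↦ (z + √(z ^ 2 + 4 * κ)) / 2) measurableSet_Ioi
    (fun y (hy : 0 < y) ↦ ((hasDerivAt_id' y).fun_sub
      ((hasDerivAt_inv hy.ne').const_mul κ)).congr_deriv (by field_simp; ring))
    (fun y _ ↦ by positivity) (mapsTo_univ _ _) (fun z _ ↦ half_pos (h_pos z)) ⟨?_, ?_⟩]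
  · rfl
  · intro y (hy : 0 < y)
    have h_sq : (y - κ / y) ^ 2 + 4 * κ = (y + κ / y) ^ 2 := by field_simp; ring
    change (y - κ / y + √((y - κ / y) ^ 2 + 4 * κ)) / 2 = y
    rw [h_sq, sqrt_sq (by positivity)]
    ring
  · intro z _
    have := h_pos z
    have := sq_sqrt (show 0 ≤ z ^ 2 + 4 * κ by positivity)
    simp only
    field_simp
    nlinarith

lemma lintegral_one_div_sqrt_eq (T : ℝ) :
    ∫⁻ U : ℝ, ENNReal.ofReal (1 / √((1 + U ^ 2) * (1 + (T - U) ^ 2)))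
      = 4 * ∫⁻ z in Ioi (0 : ℝ), ENNReal.ofReal (1 / √((z ^ 2 + 4) * (z ^ 2 + 4 + T ^ 2))) := by
  rw [← lintegral_add_right_eq_self _ (T / 2), lintegral_of_even fun y ↦ by ring_nf,
    show (4 : ℝ≥0∞) = 2 * 2 by norm_num, mul_assoc, ← lintegral_of_even
      (f := fun z ↦ ENNReal.ofReal (1 / √((z ^ 2 + 4) * (z ^ 2 + 4 + T ^ 2)))) fun z ↦ by ring_nf,
    lintegral_eq_sub_const_div (show 0 < 1 + T ^ 2 / 4 by positivity)]
  congr 1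
  refine setLIntegral_congr_fun measurableSet_Ioi fun y (hy : 0 < y) ↦ ?_
  rw [← ENNReal.ofReal_mul (by positivity)]
  congr 1
  set κ := 1 + T ^ 2 / 4 with hκ
  have h_four : (y - κ / y) ^ 2 + 4
      = (1 + (y + T / 2) ^ 2) * (1 + (T - (y + T / 2)) ^ 2) / y ^ 2 := by
    rw [hκ]; field_simp; ring
  have h_square : (y - κ / y) ^ 2 + 4 + T ^ 2 = (y * (1 + κ / y ^ 2)) ^ 2 := by
    rw [hκ]; field_simp; ring
  have : 0 < κ := by positivity
  have h_pos : 0 < (1 + (y + T / 2) ^ 2) * (1 + (T - (y + T / 2)) ^ 2) := by positivity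
  generalize (1 + (y + T / 2) ^ 2) * (1 + (T - (y + T / 2)) ^ 2) = Q at h_four h_pos
  rw [h_square, h_four, sqrt_mul (by positivity), sqrt_div (by positivity),
    sqrt_sq (by positivity), sqrt_sq (by positivity)]
  field_simp

lemma hasDerivAt_two_mul_sqrt_one_sub_sq_div {k : ℝ} (hk : k ∈ Ioo (0 : ℝ) 1) :
    HasDerivAt (fun k ↦ 2 * √(1 - k ^ 2) / k) (-(2 / (k ^ 2 * √(1 - k ^ 2)))) k := by
  have h_pos : 0 < 1 - k ^ 2 := by nlinarith [hk.1, hk.2]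
  have := hk.1
  refine (((((hasDerivAt_pow 2 k).const_sub 1).sqrt h_pos.ne').const_mul 2).fun_div
    (hasDerivAt_id' k) hk.1.ne').congr_deriv ?_
  have h_sq := sq_sqrt h_pos.le
  have := sqrt_pos.2 h_pos
  push_cast
  field_simp
  rw [h_sq]
  ring

lemma setLIntegral_Ioi_eq_two_mul_sqrt_one_sub_sq_div (f : ℝ → ℝ≥0∞) :
    ∫⁻ z in Ioi (0 : ℝ), f z = ∫⁻ k in Ioo (0 : ℝ) 1,
      ENNReal.ofReal (2 / (k ^ 2 * √(1 - k ^ 2))) * f (2 * √(1 - k ^ 2) / k) := by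
  have h_pos {k : ℝ} (hk : k ∈ Ioo (0 : ℝ) 1) : 0 < 1 - k ^ 2 := by nlinarith [hk.1, hk.2]
  rw [setLIntegral_eq_of_invOn (t := Ioi 0) (ψ := fun z ↦ 2 / √(z ^ 2 + 4)) measurableSet_Ioo
    (fun k hk ↦ hasDerivAt_two_mul_sqrt_one_sub_sq_div hk)
    (fun k hk ↦ div_pos (mul_pos two_pos (sqrt_pos.2 (h_pos hk))) hk.1) ?_ ⟨?_, ?_⟩]
  · refine setLIntegral_congr_fun measurableSet_Ioo fun k _ ↦ ?_
    rw [abs_neg, abs_of_nonneg (by positivity)]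
  · intro z (hz : 0 < z)
    exact ⟨by positivity, (div_lt_one (by positivity)).2 (lt_sqrt_of_sq_lt (by nlinarith))⟩
  · intro k hk
    have := hk.1
    have h_sq : (2 * √(1 - k ^ 2) / k) ^ 2 + 4 = (2 / k) ^ 2 := by
      rw [div_pow, mul_pow, sq_sqrt (h_pos hk).le]; field_simp; ring
    simp only [h_sq, sqrt_sq (show 0 ≤ 2 / k by positivity)]
    field_simp
  · intro z (hz : 0 < z)
    have h_sq : 1 - (2 / √(z ^ 2 + 4)) ^ 2 = z ^ 2 / (z ^ 2 + 4) := by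
      rw [div_pow, sq_sqrt (by positivity)]; field_simp; ring
    simp only [h_sq, sqrt_div (sq_nonneg z), sqrt_sq hz.le]
    field_simp

lemma two_mul_sqrt_one_sub_sq_div_integrand {k : ℝ} (hk : k ∈ Ioo (0 : ℝ) 1) (T : ℝ) :
    2 / (k ^ 2 * √(1 - k ^ 2)) * (1 / √(1 + T ^ 2) * (1 / √(((2 * √(1 - k ^ 2) / k) ^ 2 + 4) *
        ((2 * √(1 - k ^ 2) / k) ^ 2 + 4 + T ^ 2))))
      = 1 / √(1 - k ^ 2) * (1 / √((1 + T ^ 2) * (4 + k ^ 2 * T ^ 2))) := by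
  have hk₀ := hk.1
  have h_pos : 0 < 1 - k ^ 2 := by nlinarith [hk.1, hk.2]
  have := sqrt_pos.2 h_pos
  have h_four : (2 * √(1 - k ^ 2) / k) ^ 2 + 4 = (2 / k) ^ 2 := by
    rw [div_pow, mul_pow, sq_sqrt h_pos.le]; field_simp; ring
  have h_add : (2 / k) ^ 2 + T ^ 2 = (4 + k ^ 2 * T ^ 2) / k ^ 2 := by field_simp; ring
  rw [h_four, h_add, sqrt_mul (by positivity), sqrt_sq (by positivity), sqrt_mul (by positivity),
    sqrt_div (by positivity), sqrt_sq hk₀.le]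
  field_simp

theorem planePeriod_eq_eight_mul_ellipticPeriod : planePeriod = 8 * ellipticPeriod := by
  have h_even (T : ℝ) : ∫⁻ U : ℝ,
      ENNReal.ofReal (1 / √((1 + (-T) ^ 2) * (1 + U ^ 2) * (1 + (-T - U) ^ 2)))
      = ∫⁻ U : ℝ, ENNReal.ofReal (1 / √((1 + T ^ 2) * (1 + U ^ 2) * (1 + (T - U) ^ 2))) := by
    rw [← lintegral_neg_eq_self]
    refine lintegral_congr fun U ↦ ?_
    ring_nf
  have h_inner (T : ℝ) : ∫⁻ U : ℝ,
      ENNReal.ofReal (1 / √((1 + T ^ 2) * (1 + U ^ 2) * (1 + (T - U) ^ 2)))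
      = 4 * ∫⁻ z in Ioi (0 : ℝ), ENNReal.ofReal
        (1 / √(1 + T ^ 2) * (1 / √((z ^ 2 + 4) * (z ^ 2 + 4 + T ^ 2)))) := by
    rw [← ofReal_mul_lintegral_ofReal (by positivity), mul_left_comm,
      ← lintegral_one_div_sqrt_eq, ofReal_mul_lintegral_ofReal (by positivity)]
    refine lintegral_congr fun U ↦ ?_
    rw [mul_assoc, sqrt_mul (by positivity), one_div_mul_one_div]
  rw [planePeriod, lintegral_of_even h_even]
  simp only [h_inner]
  rw [lintegral_const_mul' _ _ (by norm_num), ← mul_assoc, show (2 * 4 : ℝ≥0∞) = 8 by norm_num,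
    lintegral_lintegral_swap (Measurable.aemeasurable (by fun_prop)),
    setLIntegral_Ioi_eq_two_mul_sqrt_one_sub_sq_div, ellipticPeriod]
  congr 1
  refine setLIntegral_congr_fun measurableSet_Ioo fun k hk ↦ ?_
  rw [ofReal_mul_lintegral_ofReal (by positivity)]
  exact lintegral_congr fun T ↦ by rw [two_mul_sqrt_one_sub_sq_div_integrand hk]

/-! ### Products of three quadratic forms -/

lemma setLIntegral_one_div_sqrt_mul_exp_neg_mul {w : ℝ} (hw : 0 < w) :
    ∫⁻ s in Ioi (0 : ℝ), ENNReal.ofReal (1 / √s * exp (-(s * w))) = ENNReal.ofReal (√π / √w) := by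
  have h_gamma := setLIntegral_rpow_sub_one_mul_exp_neg_mul (p := 1 / 2) (by norm_num) hw
  rw [Gamma_one_half_eq, rpow_neg hw.le, ← sqrt_eq_rpow] at h_gamma
  rw [div_eq_mul_inv, ← h_gamma]
  refine setLIntegral_congr_fun measurableSet_Ioi fun s (hs : 0 < s) ↦ ?_
  rw [show (1 / 2 - 1 : ℝ) = -(1 / 2) by norm_num, rpow_neg hs.le, ← sqrt_eq_rpow, one_div,
    mul_comm s w]

lemma ofReal_one_div_sqrt_mul_mul {a b c : ℝ} (ha : 0 < a) (hb : 0 < b) (hc : 0 < c) :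
    ENNReal.ofReal (1 / √(a * b * c))
      = ∫⁻ s₁ in Ioi (0 : ℝ), ∫⁻ s₂ in Ioi (0 : ℝ), ∫⁻ s₃ in Ioi (0 : ℝ), ENNReal.ofReal
        (1 / √π ^ 3 * (1 / (√s₁ * √s₂ * √s₃) * exp (-(s₁ * a + s₂ * b + s₃ * c)))) := by
  calc ENNReal.ofReal (1 / √(a * b * c))
      = ENNReal.ofReal (1 / √π ^ 3) * (ENNReal.ofReal (√π / √a) *
          (ENNReal.ofReal (√π / √b) * ENNReal.ofReal (√π / √c))) := by
        repeat rw [← ENNReal.ofReal_mul (by positivity)]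
        rw [sqrt_mul (by positivity), sqrt_mul (by positivity)]
        field_simp
    _ = _ := by
        simp only [← setLIntegral_one_div_sqrt_mul_exp_neg_mul, ha, hb, hc]
        rw [setLIntegral_ofReal_mul_mul measurableSet_Ioi measurableSet_Ioi (by fun_prop)
          (by fun_prop) (fun s _ ↦ by positivity) (fun s _ ↦ by positivity)]
        simp only [← lintegral_const_mul' _ _ ENNReal.ofReal_ne_top]
        congr! with s₁ s₂ s₃
        rw [← ENNReal.ofReal_mul (by positivity), neg_add, neg_add, exp_add, exp_add]
        congr 1
        field_simp

lemma setLIntegral_three_eq_projective {F : ℝ → ℝ → ℝ → ℝ≥0∞}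
    (hF : Measurable fun p : ℝ × ℝ × ℝ ↦ F p.1 p.2.1 p.2.2) :
    ∫⁻ s₁ in Ioi (0 : ℝ), ∫⁻ s₂ in Ioi (0 : ℝ), ∫⁻ s₃ in Ioi (0 : ℝ), F s₁ s₂ s₃
      = ∫⁻ X in Ioi (0 : ℝ), ∫⁻ Y in Ioi (0 : ℝ), ∫⁻ l in Ioi (0 : ℝ),
        ENNReal.ofReal (l ^ 2) * F (l * X) (l * Y) l := by
  rw [← lintegral_rotate₃ (fun l X Y ↦ F X Y l)
      (hF.comp (by fun_prop : Measurable fun p : ℝ × ℝ × ℝ ↦ (p.2.1, p.2.2, p.1))),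
    ← lintegral_rotate₃ (fun l X Y ↦ ENNReal.ofReal (l ^ 2) * F (l * X) (l * Y) l)
      (Measurable.mul (by fun_prop) (hF.comp
        (by fun_prop : Measurable fun p : ℝ × ℝ × ℝ ↦ (p.1 * p.2.1, p.1 * p.2.2, p.1))))]
  refine setLIntegral_congr_fun measurableSet_Ioi fun l (hl : 0 < l) ↦ ?_
  rw [setLIntegral_Ioi_eq_ofReal_mul_comp_mul_left hl,
    ← lintegral_const_mul' _ _ ENNReal.ofReal_ne_top]
  refine lintegral_congr fun X ↦ ?_
  rw [setLIntegral_Ioi_eq_ofReal_mul_comp_mul_left hl, ← mul_assoc, ← ENNReal.ofReal_mul hl.le,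
    ← sq, lintegral_const_mul' _ _ ENNReal.ofReal_ne_top]

lemma setLIntegral_radial {X Y w d : ℝ} (hX : 0 < X) (hY : 0 < Y) (hw : 0 < w) (hd : 0 < d) :
    ∫⁻ l in Ioi (0 : ℝ), ENNReal.ofReal (l ^ 2) *
        (ENNReal.ofReal (1 / √π ^ 3 * (1 / (√(l * X) * √(l * Y) * √l))) *
          ENNReal.ofReal (exp (-(l * w)) * (π / (l * d))))
      = ENNReal.ofReal (1 / (√X * √Y * d * √w)) := by
  have h_pi : √π ^ 3 = π * √π := by rw [pow_succ, sq_sqrt pi_pos.le]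
  calc _ = ∫⁻ l in Ioi (0 : ℝ), ENNReal.ofReal
        (1 / (√π * √X * √Y * d) * (1 / √l * exp (-(l * w)))) := by
        refine setLIntegral_congr_fun measurableSet_Ioi fun l (hl : 0 < l) ↦ ?_
        rw [← ENNReal.ofReal_mul (by positivity), ← ENNReal.ofReal_mul (by positivity),
          sqrt_mul hl.le, sqrt_mul hl.le, h_pi]
        congr 1
        have h_sq := sq_sqrt hl.le
        have := sqrt_pos.2 hl
        set r := √l
        rw [← h_sq]
        field_simp
    _ = _ := by
        rw [← ofReal_mul_lintegral_ofReal (by positivity),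
          setLIntegral_one_div_sqrt_mul_exp_neg_mul hw, ← ENNReal.ofReal_mul (by positivity)]
        congr 1
        field_simp

/-- Schwinger parametrisation in projective coordinates: the overall scale `l` of the three
parameters integrates out. -/
lemma lintegral_one_div_sqrt_mul_mul_eq {α : Type*} [MeasurableSpace α] {μ : Measure α}
    [SFinite μ] {q₁ q₂ q₃ : α → ℝ} {w d : ℝ → ℝ → ℝ} (hq₁ : Measurable q₁) (hq₂ : Measurable q₂)
    (hq₃ : Measurable q₃) (hpos : ∀ᵐ p ∂μ, 0 < q₁ p ∧ 0 < q₂ p ∧ 0 < q₃ p)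
    (hw : ∀ X Y, 0 < X → 0 < Y → 0 < w X Y) (hd : ∀ X Y, 0 < X → 0 < Y → 0 < d X Y)
    (h : ∀ X Y l, 0 < X → 0 < Y → 0 < l →
      ∫⁻ p, ENNReal.ofReal (exp (-(l * X * q₁ p + l * Y * q₂ p + l * q₃ p))) ∂μ
        = ENNReal.ofReal (exp (-(l * w X Y)) * (π / (l * d X Y)))) :
    ∫⁻ p, ENNReal.ofReal (1 / √(q₁ p * q₂ p * q₃ p)) ∂μ
      = ∫⁻ X in Ioi (0 : ℝ), ∫⁻ Y in Ioi (0 : ℝ),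
        ENNReal.ofReal (1 / (√X * √Y * d X Y * √(w X Y))) := by
  rw [lintegral_congr_ae (hpos.mono fun p hp ↦ ofReal_one_div_sqrt_mul_mul hp.1 hp.2.1 hp.2.2),
    lintegral_rotate₄ _ (by fun_prop), setLIntegral_three_eq_projective (by fun_prop)]
  refine setLIntegral_congr_fun measurableSet_Ioi fun X (hX : 0 < X) ↦
    setLIntegral_congr_fun measurableSet_Ioi fun Y (hY : 0 < Y) ↦ ?_
  rw [← setLIntegral_radial hX hY (hw X Y hX hY) (hd X Y hX hY)]
  refine setLIntegral_congr_fun measurableSet_Ioi fun l (hl : 0 < l) ↦ ?_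
  rw [← h X Y l hX hY hl]
  congr 1
  rw [ofReal_mul_lintegral_ofReal (by positivity)]
  simp only [mul_assoc]

lemma lintegral_lintegral_exp_neg_add_sq_add_sq {a b : ℝ} (ha : 0 < a) (hb : 0 < b) (e d : ℝ)
    (g : ℝ → ℝ) :
    ∫⁻ x : ℝ, ∫⁻ y : ℝ, ENNReal.ofReal (exp (-(e + a * (x - d) ^ 2 + b * (y - g x) ^ 2)))
      = ENNReal.ofReal (exp (-e) * (π / √(a * b))) := by
  have h_pi : √(π / a) * √(π / b) = π / √(a * b) := by
    rw [← sqrt_mul (by positivity), div_mul_div_comm, sqrt_div (by positivity),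
      sqrt_mul_self pi_pos.le]
  simp only [neg_add, exp_add, mul_assoc, ENNReal.ofReal_mul (exp_nonneg _),
    lintegral_const_mul' _ _ ENNReal.ofReal_ne_top, lintegral_exp_neg_mul_sub_sq hb]
  rw [lintegral_mul_const' _ _ ENNReal.ofReal_ne_top, lintegral_exp_neg_mul_sub_sq ha,
    ← ENNReal.ofReal_mul (by positivity), h_pi]

/-- The symmetric form `∬ dX dY / √(X Y (1 + X + Y) (X + Y + X Y))` over the positive quadrant,
common to `planePeriod` and `cubeRootsPeriod`. -/
noncomputable def quadrantPeriod : ℝ≥0∞ :=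
  ∫⁻ X in Ioi (0 : ℝ), ∫⁻ Y in Ioi (0 : ℝ),
    ENNReal.ofReal (1 / √(X * Y * (1 + X + Y) * (X + Y + X * Y)))

lemma lintegral_exp_neg_plane_forms {a b c : ℝ} (ha : 0 < a) (hb : 0 < b) (hc : 0 < c) :
    ∫⁻ T : ℝ, ∫⁻ U : ℝ, ENNReal.ofReal
        (exp (-(a * (1 + T ^ 2) + b * (1 + U ^ 2) + c * (1 + (T - U) ^ 2))))
      = ENNReal.ofReal (exp (-(a + b + c)) * (π / √(a * b + a * c + b * c))) := by
  have h_det : a * b + a * c + b * c = (a + b * c / (b + c)) * (b + c) := by field_simp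
  rw [h_det, ← lintegral_lintegral_exp_neg_add_sq_add_sq (by positivity) (by positivity) _ 0
    fun T ↦ c * T / (b + c)]
  refine lintegral_congr fun T ↦ lintegral_congr fun U ↦ ?_
  congr 3
  field_simp
  ring

lemma planePeriod_eq_quadrantPeriod : planePeriod = quadrantPeriod := by
  have h_schwinger := lintegral_one_div_sqrt_mul_mul_eq (μ := (volume : Measure ℝ).prod volume)
    (q₁ := fun p ↦ 1 + p.1 ^ 2) (q₂ := fun p ↦ 1 + p.2 ^ 2) (q₃ := fun p ↦ 1 + (p.1 - p.2) ^ 2)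
    (w := fun X Y ↦ 1 + X + Y) (d := fun X Y ↦ √(X + Y + X * Y))
    (by fun_prop) (by fun_prop) (by fun_prop)
    (Filter.Eventually.of_forall fun p ↦ ⟨by positivity, by positivity, by positivity⟩)
    (fun X Y _ _ ↦ by positivity) (fun X Y _ _ ↦ by positivity) fun X Y l hX hY hl ↦ by
      have h_det : l * X * (l * Y) + l * X * l + l * Y * l = l ^ 2 * (X + Y + X * Y) := by ring
      rw [lintegral_prod _ (Measurable.aemeasurable (by fun_prop)), lintegral_exp_neg_plane_forms
        (by positivity) (by positivity) hl, h_det, sqrt_mul (by positivity), sqrt_sq hl.le]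
      ring_nf
  rw [lintegral_prod _ (Measurable.aemeasurable (by fun_prop))] at h_schwinger
  refine h_schwinger.trans <| setLIntegral_congr_fun measurableSet_Ioi fun X (hX : 0 < X) ↦
    setLIntegral_congr_fun measurableSet_Ioi fun Y (hY : 0 < Y) ↦ ?_
  rw [sqrt_mul (by positivity), sqrt_mul (by positivity), sqrt_mul hX.le, mul_right_comm]

/-- The integral over `ℂ = ℝ²` of `1 / |z³ - 1|`, the inverse of the product of the distances to
the cube roots of unity. -/
noncomputable def cubeRootsPeriod : ℝ≥0∞ :=
  ∫⁻ x : ℝ, ∫⁻ y : ℝ, ENNReal.ofReal (1 / √(((x - 1) ^ 2 + y ^ 2) *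
    ((x + 1 / 2) ^ 2 + (y - √3 / 2) ^ 2) * ((x + 1 / 2) ^ 2 + (y + √3 / 2) ^ 2)))

lemma lintegral_exp_neg_cubeRoots_forms {a b c : ℝ} (ha : 0 < a) (hb : 0 < b) (hc : 0 < c) :
    ∫⁻ x : ℝ, ∫⁻ y : ℝ, ENNReal.ofReal (exp (-(a * ((x - 1) ^ 2 + y ^ 2) +
        b * ((x + 1 / 2) ^ 2 + (y - √3 / 2) ^ 2) + c * ((x + 1 / 2) ^ 2 + (y + √3 / 2) ^ 2))))
      = ENNReal.ofReal
        (exp (-(3 * (a * b + a * c + b * c) / (a + b + c))) * (π / (a + b + c))) := by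
  have h_three : √3 ^ 2 = 3 := sq_sqrt (by norm_num)
  have h_sqrt : π / (a + b + c) = π / √((a + b + c) * (a + b + c)) := by
    rw [sqrt_mul_self (by positivity)]
  rw [h_sqrt, ← lintegral_lintegral_exp_neg_add_sq_add_sq (by positivity) (by positivity) _
    ((a - b / 2 - c / 2) / (a + b + c)) fun _ ↦ √3 / 2 * (b - c) / (a + b + c)]
  refine lintegral_congr fun x ↦ lintegral_congr fun y ↦ ?_
  congr 3
  field_simp
  ring_nf
  rw [h_three]
  ring

lemma cubeRootsPeriod_eq : cubeRootsPeriod = ENNReal.ofReal (1 / √3) * quadrantPeriod := by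
  have h_schwinger := lintegral_one_div_sqrt_mul_mul_eq (μ := (volume : Measure ℝ).prod volume)
    (q₁ := fun p ↦ (p.1 - 1) ^ 2 + p.2 ^ 2)
    (q₂ := fun p ↦ (p.1 + 1 / 2) ^ 2 + (p.2 - √3 / 2) ^ 2)
    (q₃ := fun p ↦ (p.1 + 1 / 2) ^ 2 + (p.2 + √3 / 2) ^ 2)
    (w := fun X Y ↦ 3 * (X + Y + X * Y) / (1 + X + Y)) (d := fun X Y ↦ 1 + X + Y)
    (by fun_prop) (by fun_prop) (by fun_prop) (by
      filter_upwards [Measure.quasiMeasurePreserving_fst.ae (Measure.ae_ne volume 1),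
        Measure.quasiMeasurePreserving_fst.ae (Measure.ae_ne volume (-(1 / 2)))] with p h₁ h₂
      have : p.1 - 1 ≠ 0 := sub_ne_zero.2 h₁
      have : p.1 + 1 / 2 ≠ 0 := fun h ↦ h₂ (eq_neg_of_add_eq_zero_left h)
      exact ⟨by positivity, by positivity, by positivity⟩)
    (fun X Y _ _ ↦ by positivity) (fun X Y _ _ ↦ by positivity) fun X Y l hX hY hl ↦ by
      have h_sum : l * X + l * Y + l = l * (1 + X + Y) := by ring
      have h_det : 3 * (l * X * (l * Y) + l * X * l + l * Y * l) / (l * (1 + X + Y))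
          = l * (3 * (X + Y + X * Y) / (1 + X + Y)) := by field_simp; ring
      rw [lintegral_prod _ (Measurable.aemeasurable (by fun_prop)),
        lintegral_exp_neg_cubeRoots_forms (by positivity) (by positivity) hl, h_sum, h_det]
  rw [lintegral_prod _ (Measurable.aemeasurable (by fun_prop))] at h_schwinger
  refine h_schwinger.trans ?_
  simp only [quadrantPeriod, ← lintegral_const_mul' _ _ ENNReal.ofReal_ne_top]
  refine setLIntegral_congr_fun measurableSet_Ioi fun X (hX : 0 < X) ↦
    setLIntegral_congr_fun measurableSet_Ioi fun Y (hY : 0 < Y) ↦ ?_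
  rw [← ENNReal.ofReal_mul (by positivity), sqrt_div (by positivity), sqrt_mul (by norm_num),
    sqrt_mul (by positivity), sqrt_mul (by positivity), sqrt_mul hX.le]
  congr 1
  have h_sq := sq_sqrt (show 0 ≤ 1 + X + Y by positivity)
  have := sqrt_pos.2 (show 0 < 1 + X + Y by positivity)
  set r := √(1 + X + Y)
  rw [← h_sq]
  field_simp

/-! ### The product of the distances to the cube roots of unity -/

lemma polar_sq (r θ : ℝ) : (r * cos θ) ^ 2 + (r * sin θ) ^ 2 = r ^ 2 := by
  rw [mul_pow, mul_pow, ← mul_add, cos_sq_add_sin_sq, mul_one]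

lemma polar_sub_one_sq (r θ : ℝ) :
    (r * cos θ - 1) ^ 2 + (r * sin θ) ^ 2 = r ^ 2 - 2 * r * cos θ + 1 := by
  rw [mul_pow, sin_sq]
  ring

lemma polar_cubeRoots (r θ : ℝ) :
    ((r * cos θ - 1) ^ 2 + (r * sin θ) ^ 2) *
        ((r * cos θ + 1 / 2) ^ 2 + (r * sin θ - √3 / 2) ^ 2) *
        ((r * cos θ + 1 / 2) ^ 2 + (r * sin θ + √3 / 2) ^ 2)
      = (r ^ 3) ^ 2 - 2 * r ^ 3 * cos (3 * θ) + 1 := by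
  have h_three : √3 ^ 2 = 3 := sq_sqrt (by norm_num)
  have h_pair : ((r * cos θ + 1 / 2) ^ 2 + (r * sin θ - √3 / 2) ^ 2) *
        ((r * cos θ + 1 / 2) ^ 2 + (r * sin θ + √3 / 2) ^ 2)
      = ((r * cos θ + 1 / 2) ^ 2 + r ^ 2 * sin θ ^ 2 + √3 ^ 2 / 4) ^ 2
        - r ^ 2 * √3 ^ 2 * sin θ ^ 2 := by ring
  rw [mul_assoc, h_pair, h_three, polar_sub_one_sq, sin_sq, cos_three_mul]
  ring

/-- Substitution along the threefold covering `z ↦ z³` of the plane. -/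
lemma three_mul_cubeRootsPeriod :
    3 * cubeRootsPeriod = ∫⁻ x : ℝ, ∫⁻ y : ℝ, ENNReal.ofReal
      ((x ^ 2 + y ^ 2) ^ (-(2 / 3) : ℝ) * ((x - 1) ^ 2 + y ^ 2) ^ (-(1 / 2) : ℝ)) := by
  rw [cubeRootsPeriod, lintegral_lintegral_eq_polar (by fun_prop),
    lintegral_lintegral_eq_polar (by fun_prop), ← lintegral_const_mul' _ _ (by norm_num)]
  conv_rhs => rw [setLIntegral_Ioi_eq_comp_pow three_ne_zero, Nat.cast_ofNat]
  refine setLIntegral_congr_fun measurableSet_Ioi fun r (hr : 0 < r) ↦ ?_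
  have h_periodic : Function.Periodic (fun θ ↦ ENNReal.ofReal r *
      ENNReal.ofReal (1 / √((r ^ 3) ^ 2 - 2 * r ^ 3 * cos θ + 1))) (2 * π) := fun θ ↦ by
    simp only [cos_add_two_pi]
  have h_triple := setLIntegral_Ioo_comp_nat_mul_of_periodic two_pi_pos h_periodic three_ne_zero
    (-π)
  rw [show -π + 2 * π = π by ring, Nat.cast_ofNat] at h_triple
  simp only [polar_cubeRoots, h_triple]
  simp only [polar_sub_one_sq, polar_sq, ← lintegral_const_mul' _ _ ENNReal.ofReal_ne_top,
    ← lintegral_const_mul' _ _ (ENNReal.ofNat_ne_top (n := 3))]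
  refine lintegral_congr fun θ ↦ ?_
  have h_radial : ((r ^ 3) ^ 2) ^ (-(2 / 3) : ℝ) = (r ^ 4)⁻¹ := by
    rw [← pow_mul, ← rpow_natCast, ← rpow_mul hr.le, ← rpow_natCast, ← rpow_neg hr.le]
    norm_num
  have h_nonneg : 0 ≤ (r ^ 3) ^ 2 - 2 * r ^ 3 * cos θ + 1 := by
    rw [← polar_sub_one_sq]
    positivity
  rw [h_radial, rpow_neg h_nonneg, ← sqrt_eq_rpow, ← ENNReal.ofReal_ofNat 3]
  repeat rw [← ENNReal.ofReal_mul (by positivity)]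
  congr 1
  field_simp

/-! ### Two-point integrals over the plane -/

lemma lintegral_exp_neg_two_point {s t : ℝ} (hs : 0 < s) (ht : 0 < t) :
    ∫⁻ x : ℝ, ∫⁻ y : ℝ, ENNReal.ofReal
        (exp (-(s * (x ^ 2 + y ^ 2) + t * ((x - 1) ^ 2 + y ^ 2))))
      = ENNReal.ofReal (exp (-(s * t / (s + t))) * (π / (s + t))) := by
  have h_sqrt : π / (s + t) = π / √((s + t) * (s + t)) := by rw [sqrt_mul_self (by positivity)]
  rw [h_sqrt, ← lintegral_lintegral_exp_neg_add_sq_add_sq (by positivity) (by positivity) _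
    (t / (s + t)) fun _ ↦ 0]
  refine lintegral_congr fun x ↦ lintegral_congr fun y ↦ ?_
  congr 3
  field_simp
  ring

lemma ofReal_Gamma_mul_Gamma_mul_lintegral_two_point {α β : ℝ} (hα : 0 < α) (hβ : 0 < β) :
    ENNReal.ofReal (Gamma α * Gamma β) * ∫⁻ x : ℝ, ∫⁻ y : ℝ, ENNReal.ofReal
        ((x ^ 2 + y ^ 2) ^ (-α) * ((x - 1) ^ 2 + y ^ 2) ^ (-β))
      = ∫⁻ s in Ioi (0 : ℝ), ∫⁻ t in Ioi (0 : ℝ), ENNReal.ofReal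
        (s ^ (α - 1) * t ^ (β - 1) * (exp (-(s * t / (s + t))) * (π / (s + t)))) := by
  have := Gamma_pos_of_pos hα
  have := Gamma_pos_of_pos hβ
  calc _ = ∫⁻ x : ℝ, ∫⁻ y : ℝ, ∫⁻ s in Ioi (0 : ℝ), ∫⁻ t in Ioi (0 : ℝ), ENNReal.ofReal
        ((s ^ (α - 1) * exp (-((x ^ 2 + y ^ 2) * s))) *
          (t ^ (β - 1) * exp (-(((x - 1) ^ 2 + y ^ 2) * t)))) := by
        rw [← lintegral_const_mul' _ _ ENNReal.ofReal_ne_top]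
        refine lintegral_congr_ae ?_
        filter_upwards [Measure.ae_ne volume 0, Measure.ae_ne volume 1] with x hx₀ hx₁
        have : x - 1 ≠ 0 := sub_ne_zero.2 hx₁
        rw [← lintegral_const_mul' _ _ ENNReal.ofReal_ne_top]
        refine lintegral_congr fun y ↦ ?_
        rw [← setLIntegral_ofReal_mul_lintegral_ofReal measurableSet_Ioi (by fun_prop)
            fun s (hs : 0 < s) ↦ by positivity,
          setLIntegral_rpow_sub_one_mul_exp_neg_mul hα (by positivity),
          setLIntegral_rpow_sub_one_mul_exp_neg_mul hβ (by positivity),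
          ← ENNReal.ofReal_mul (by positivity), ← ENNReal.ofReal_mul (by positivity),
          mul_mul_mul_comm]
    _ = ∫⁻ s in Ioi (0 : ℝ), ∫⁻ t in Ioi (0 : ℝ), ∫⁻ x : ℝ, ∫⁻ y : ℝ, ENNReal.ofReal
        ((s ^ (α - 1) * exp (-((x ^ 2 + y ^ 2) * s))) *
          (t ^ (β - 1) * exp (-(((x - 1) ^ 2 + y ^ 2) * t)))) := by
        rw [lintegral_rotate₄ _ (by fun_prop), lintegral_rotate₄ _ (by fun_prop)]
    _ = _ := by
        refine setLIntegral_congr_fun measurableSet_Ioi fun s (hs : 0 < s) ↦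
          setLIntegral_congr_fun measurableSet_Ioi fun t (ht : 0 < t) ↦ ?_
        rw [ENNReal.ofReal_mul (by positivity), ← lintegral_exp_neg_two_point hs ht,
          ← lintegral_const_mul' _ _ ENNReal.ofReal_ne_top]
        refine lintegral_congr fun x ↦ ?_
        rw [ofReal_mul_lintegral_ofReal (by positivity)]
        refine lintegral_congr fun y ↦ ?_
        rw [neg_add, exp_add, mul_comm s (x ^ 2 + y ^ 2), mul_comm t ((x - 1) ^ 2 + y ^ 2),
          mul_mul_mul_comm]

lemma setLIntegral_two_point_eq {α β : ℝ} (hαβ : 1 < α + β) :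
    ∫⁻ s in Ioi (0 : ℝ), ∫⁻ t in Ioi (0 : ℝ), ENNReal.ofReal
        (s ^ (α - 1) * t ^ (β - 1) * (exp (-(s * t / (s + t))) * (π / (s + t))))
      = ENNReal.ofReal (π * Gamma (α + β - 1)) * ∫⁻ X in Ioi (0 : ℝ), ENNReal.ofReal
        (X ^ (-α) * (1 + X) ^ (α + β - 2)) := by
  have := Gamma_pos_of_pos (sub_pos.2 hαβ)
  calc _ = ∫⁻ s in Ioi (0 : ℝ), ∫⁻ X in Ioi (0 : ℝ), ENNReal.ofReal
        (π * X ^ (β - 1) / (1 + X) * (s ^ (α + β - 1 - 1) * exp (-(X / (1 + X) * s)))) := by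
        refine setLIntegral_congr_fun measurableSet_Ioi fun s (hs : 0 < s) ↦ ?_
        rw [setLIntegral_Ioi_eq_ofReal_mul_comp_mul_left hs,
          ← lintegral_const_mul' _ _ ENNReal.ofReal_ne_top]
        refine setLIntegral_congr_fun measurableSet_Ioi fun X (hX : 0 < X) ↦ ?_
        have h_exponent : s * (s * X) / (s + s * X) = X / (1 + X) * s := by field_simp
        have h_rpow : s ^ (α + β - 1 - 1) = s ^ (α - 1) * s ^ (β - 1) := by
          rw [← rpow_add hs]; ring_nf
        rw [← ENNReal.ofReal_mul hs.le, h_exponent, h_rpow, mul_rpow hs.le hX.le]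
        congr 1
        field_simp
    _ = ∫⁻ X in Ioi (0 : ℝ), ∫⁻ s in Ioi (0 : ℝ), ENNReal.ofReal
        (π * X ^ (β - 1) / (1 + X) * (s ^ (α + β - 1 - 1) * exp (-(X / (1 + X) * s)))) :=
        lintegral_lintegral_swap (Measurable.aemeasurable (by fun_prop))
    _ = _ := by
        rw [ofReal_mul_lintegral_ofReal (by positivity)]
        refine setLIntegral_congr_fun measurableSet_Ioi fun X (hX : 0 < X) ↦ ?_
        have hX₁ : 0 < 1 + X := by positivity
        have h_rpow : X ^ (-α) = X ^ (β - 1) * X ^ (-(α + β - 1)) := by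
          rw [← rpow_add hX]; ring_nf
        have h_rpow_one_add : (1 + X) ^ (α + β - 2) = (1 + X) ^ (α + β - 1) / (1 + X) := by
          rw [← rpow_sub_one hX₁.ne']; ring_nf
        rw [← ofReal_mul_lintegral_ofReal (by positivity),
          setLIntegral_rpow_sub_one_mul_exp_neg_mul (sub_pos.2 hαβ) (by positivity),
          ← ENNReal.ofReal_mul (by positivity), div_rpow hX.le hX₁.le, rpow_neg hX₁.le, h_rpow,
          h_rpow_one_add]
        congr 1
        field_simp

lemma setLIntegral_rpow_sub_one_mul_one_add_rpow_neg {p q : ℝ} (hp : 0 < p) (hq : 0 < q) :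
    ∫⁻ X in Ioi (0 : ℝ), ENNReal.ofReal (X ^ (p - 1) * (1 + X) ^ (-(p + q)))
      = ENNReal.ofReal (Gamma p * Gamma q / Gamma (p + q)) := by
  have := Gamma_pos_of_pos hp
  have := Gamma_pos_of_pos hq
  have := Gamma_pos_of_pos (add_pos hp hq)
  calc _ = ∫⁻ X in Ioi (0 : ℝ), ∫⁻ u in Ioi (0 : ℝ), ENNReal.ofReal
        (u ^ (p + q - 1) * exp (-u) / Gamma (p + q) * (X ^ (p - 1) * exp (-(u * X)))) := by
        refine setLIntegral_congr_fun measurableSet_Ioi fun X (hX : 0 < X) ↦ ?_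
        have h_gamma := setLIntegral_rpow_sub_one_mul_exp_neg_mul (add_pos hp hq)
          (show 0 < 1 + X by positivity)
        have h_split (u : ℝ) : u ^ (p + q - 1) * exp (-u) / Gamma (p + q) *
            (X ^ (p - 1) * exp (-(u * X)))
            = X ^ (p - 1) / Gamma (p + q) * (u ^ (p + q - 1) * exp (-((1 + X) * u))) := by
          rw [show -((1 + X) * u) = -u + -(u * X) by ring, exp_add]
          ring
        simp only [h_split]
        rw [← ofReal_mul_lintegral_ofReal (by positivity), h_gamma,
          ← ENNReal.ofReal_mul (by positivity)]
        congr 1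
        field_simp
    _ = ∫⁻ u in Ioi (0 : ℝ), ∫⁻ X in Ioi (0 : ℝ), ENNReal.ofReal
        (u ^ (p + q - 1) * exp (-u) / Gamma (p + q) * (X ^ (p - 1) * exp (-(u * X)))) :=
        lintegral_lintegral_swap (Measurable.aemeasurable (by fun_prop))
    _ = ∫⁻ u in Ioi (0 : ℝ), ENNReal.ofReal
        (Gamma p / Gamma (p + q) * (u ^ (q - 1) * exp (-(1 * u)))) := by
        refine setLIntegral_congr_fun measurableSet_Ioi fun u (hu : 0 < u) ↦ ?_
        have h_rpow : u ^ (q - 1) = u ^ (p + q - 1) * u ^ (-p) := by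
          rw [← rpow_add hu]; ring_nf
        rw [← ofReal_mul_lintegral_ofReal (by positivity),
          setLIntegral_rpow_sub_one_mul_exp_neg_mul hp hu, ← ENNReal.ofReal_mul (by positivity),
          h_rpow, one_mul]
        congr 1
        field_simp
    _ = _ := by
        rw [← ofReal_mul_lintegral_ofReal (by positivity),
          setLIntegral_rpow_sub_one_mul_exp_neg_mul hq one_pos,
          ← ENNReal.ofReal_mul (by positivity), one_rpow, mul_one, div_mul_eq_mul_div]

theorem lintegral_rpow_neg_mul_sub_one_rpow_neg {α β : ℝ} (hα : α < 1) (hβ : β < 1)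
    (hαβ : 1 < α + β) :
    ∫⁻ x : ℝ, ∫⁻ y : ℝ, ENNReal.ofReal ((x ^ 2 + y ^ 2) ^ (-α) * ((x - 1) ^ 2 + y ^ 2) ^ (-β))
      = ENNReal.ofReal (π * (Gamma (1 - α) * Gamma (1 - β) * Gamma (α + β - 1)) /
        (Gamma α * Gamma β * Gamma (2 - α - β))) := by
  have hα₀ : 0 < α := by linarith
  have hβ₀ : 0 < β := by linarith
  have := Gamma_pos_of_pos hα₀
  have := Gamma_pos_of_pos hβ₀
  have := Gamma_pos_of_pos (sub_pos.2 hα)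
  have := Gamma_pos_of_pos (sub_pos.2 hβ)
  have := Gamma_pos_of_pos (sub_pos.2 hαβ)
  have := Gamma_pos_of_pos (show 0 < 2 - α - β by linarith)
  have h_beta := setLIntegral_rpow_sub_one_mul_one_add_rpow_neg (sub_pos.2 hα) (sub_pos.2 hβ)
  rw [show 1 - α - 1 = -α by ring, show -(1 - α + (1 - β)) = α + β - 2 by ring,
    show 1 - α + (1 - β) = 2 - α - β by ring] at h_beta
  rw [← ENNReal.mul_right_inj (a := ENNReal.ofReal (Gamma α * Gamma β))
      (by rw [Ne, ENNReal.ofReal_eq_zero, not_le]; positivity) ENNReal.ofReal_ne_top,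
    ofReal_Gamma_mul_Gamma_mul_lintegral_two_point hα₀ hβ₀, setLIntegral_two_point_eq hαβ, h_beta,
    ← ENNReal.ofReal_mul (by positivity), ← ENNReal.ofReal_mul (by positivity)]
  congr 1
  field_simp

/-! ### The closed forms -/

lemma Gamma_two_thirds_eq : Gamma (2 / 3) = 2 * π / (√3 * Gamma (1 / 3)) := by
  have := Gamma_pos_of_pos (show (0 : ℝ) < 1 / 3 by norm_num)
  have h_reflection := Real.Gamma_mul_Gamma_one_sub (1 / 3)
  rw [show (1 : ℝ) - 1 / 3 = 2 / 3 by norm_num, show π * (1 / 3) = π / 3 by ring,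
    sin_pi_div_three] at h_reflection
  field_simp at h_reflection ⊢
  linarith

lemma Gamma_one_sixth_eq :
    Gamma (1 / 6) = 2 ^ (2 / 3 : ℝ) * √π * Gamma (1 / 3) / Gamma (2 / 3) := by
  have := Gamma_pos_of_pos (show (0 : ℝ) < 2 / 3 by norm_num)
  have h_duplication := Real.Gamma_mul_Gamma_add_half (1 / 6)
  rw [show (1 / 6 : ℝ) + 1 / 2 = 2 / 3 by norm_num, show (2 : ℝ) * (1 / 6) = 1 / 3 by norm_num,
    show (1 : ℝ) - 1 / 3 = 2 / 3 by norm_num] at h_duplication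
  field_simp
  linarith

lemma Gamma_five_sixths_eq : Gamma (5 / 6) = 2 * π / Gamma (1 / 6) := by
  have := Gamma_pos_of_pos (show (0 : ℝ) < 1 / 6 by norm_num)
  have h_reflection := Real.Gamma_mul_Gamma_one_sub (1 / 6)
  rw [show (1 : ℝ) - 1 / 6 = 5 / 6 by norm_num, show π * (1 / 6) = π / 6 by ring,
    sin_pi_div_six] at h_reflection
  field_simp at h_reflection ⊢
  linarith

lemma pi_mul_Gamma_one_third_mul_Gamma_one_sixth_div :
    π * (Gamma (1 / 3) * Gamma (1 / 6)) / (Gamma (2 / 3) * Gamma (5 / 6))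
      = √3 * (48 * (Gamma (1 / 3) ^ 6 / (2 ^ (20 / 3 : ℝ) * π ^ 2))) := by
  have := Gamma_pos_of_pos (show (0 : ℝ) < 1 / 3 by norm_num)
  have h_pow : (2 : ℝ) ^ (20 / 3 : ℝ) = 64 * 2 ^ (2 / 3 : ℝ) := by
    rw [show (20 / 3 : ℝ) = 6 + 2 / 3 by norm_num, rpow_add (by norm_num)]
    norm_num
  have h_cube : ((2 : ℝ) ^ (2 / 3 : ℝ)) ^ 3 = 4 := by
    rw [← rpow_natCast, ← rpow_mul (by norm_num)]
    norm_num
  have h_three : √3 ^ 2 = 3 := sq_sqrt (by norm_num)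
  have h_pi : √π ^ 2 = π := sq_sqrt pi_pos.le
  rw [h_pow, Gamma_five_sixths_eq, Gamma_one_sixth_eq, Gamma_two_thirds_eq]
  field_simp
  rw [h_cube, h_three, h_pi]
  ring

lemma quadrantPeriod_eq_Gamma :
    quadrantPeriod = ENNReal.ofReal (48 * (Gamma (1 / 3) ^ 6 / (2 ^ (20 / 3 : ℝ) * π ^ 2))) := by
  have h_two_point := lintegral_rpow_neg_mul_sub_one_rpow_neg (α := 2 / 3) (β := 1 / 2)
    (by norm_num) (by norm_num) (by norm_num)
  have := Gamma_pos_of_pos (show (0 : ℝ) < 1 / 3 by norm_num)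
  have h_const : π * (Gamma (1 - 2 / 3) * Gamma (1 - 1 / 2) * Gamma (2 / 3 + 1 / 2 - 1)) /
      (Gamma (2 / 3) * Gamma (1 / 2) * Gamma (2 - 2 / 3 - 1 / 2))
      = √3 * (48 * (Gamma (1 / 3) ^ 6 / (2 ^ (20 / 3 : ℝ) * π ^ 2))) := by
    have := Gamma_pos_of_pos (show (0 : ℝ) < 1 / 2 by norm_num)
    rw [← pi_mul_Gamma_one_third_mul_Gamma_one_sixth_div, show (1 : ℝ) - 2 / 3 = 1 / 3 by norm_num,
      show (1 : ℝ) - 1 / 2 = 1 / 2 by norm_num, show (2 / 3 : ℝ) + 1 / 2 - 1 = 1 / 6 by norm_num,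
      show (2 : ℝ) - 2 / 3 - 1 / 2 = 5 / 6 by norm_num]
    field_simp
  have h_sqrt : 3 * (1 / √3) = √3 := by rw [mul_one_div, div_sqrt]
  rw [← three_mul_cubeRootsPeriod, cubeRootsPeriod_eq, ← ENNReal.ofReal_ofNat 3, ← mul_assoc,
    ← ENNReal.ofReal_mul (by norm_num), h_sqrt, h_const, ENNReal.ofReal_mul (by positivity)]
    at h_two_point
  exact (ENNReal.mul_right_inj (by rw [Ne, ENNReal.ofReal_eq_zero, not_le]; positivity)
    ENNReal.ofReal_ne_top).1 h_two_point

lemma momentIIKKK_eq_Gamma :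
    momentIIKKK = ENNReal.ofReal (3 * (Gamma (1 / 3) ^ 6 / (2 ^ (20 / 3 : ℝ) * π ^ 2))) := by
  refine (ENNReal.mul_right_inj (a := 16) (by norm_num) (by norm_num)).1 ?_
  rw [sixteen_mul_momentIIKKK_eq_planePeriod, planePeriod_eq_quadrantPeriod,
    quadrantPeriod_eq_Gamma, ← ENNReal.ofReal_ofNat 16, ← ENNReal.ofReal_mul (by norm_num),
    ← mul_assoc]
  norm_num

lemma momentKIIKK_eq_Gamma :
    momentKIIKK = ENNReal.ofReal (Gamma (1 / 3) ^ 6 / (2 ^ (20 / 3 : ℝ) * π ^ 2)) := by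
  have h_const : (8 * 6 : ℝ≥0∞) = ENNReal.ofReal 48 := by norm_num
  refine (ENNReal.mul_right_inj (a := 8 * 6) (by norm_num)
    (ENNReal.mul_ne_top (by norm_num) (by norm_num))).1 ?_
  rw [mul_assoc, six_mul_momentKIIKK, ← planePeriod_eq_eight_mul_ellipticPeriod,
    planePeriod_eq_quadrantPeriod, quadrantPeriod_eq_Gamma, h_const,
    ENNReal.ofReal_mul (by norm_num)]

lemma integral_IIKKK_eq_toReal :
    ∫ t in Ioi (0 : ℝ), I0 (2 * t) * I0 t * K0 t ^ 3 * t = momentIIKKK.toReal := by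
  have h_meas := measurable_I0.comp (measurable_const_mul (2 : ℝ))
  refine integral_eq_lintegral_of_nonneg_ae ?_ (Measurable.aestronglyMeasurable
    (((h_meas.mul measurable_I0).mul (measurable_K0.pow_const 3)).mul measurable_id))
  filter_upwards [ae_restrict_mem measurableSet_Ioi] with t (ht : 0 < t)
  have := I0_nonneg (2 * t)
  have := I0_nonneg t
  have := K0_nonneg t
  simp only [Pi.zero_apply]
  positivity

lemma integral_KIIKK_eq_toReal :
    ∫ t in Ioi (0 : ℝ), K0 (2 * t) * I0 t ^ 2 * K0 t ^ 2 * t = momentKIIKK.toReal := by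
  have h_meas := measurable_K0.comp (measurable_const_mul (2 : ℝ))
  refine integral_eq_lintegral_of_nonneg_ae ?_ (Measurable.aestronglyMeasurable
    (((h_meas.mul (measurable_I0.pow_const 2)).mul (measurable_K0.pow_const 2)).mul
      measurable_id))
  filter_upwards [ae_restrict_mem measurableSet_Ioi] with t (ht : 0 < t)
  have := K0_nonneg (2 * t)
  simp only [Pi.zero_apply]
  positivity

theorem broadhurst_2008_identity :
    (∫ t in Ioi (0:ℝ), I0 (2*t) * I0 t * (K0 t)^3 * t)
      = 3 * ∫ t in Ioi (0:ℝ), K0 (2*t) * (I0 t)^2 * (K0 t)^2 * t ∧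
    (∫ t in Ioi (0:ℝ), I0 (2*t) * I0 t * (K0 t)^3 * t)
      = (3 * π / (2 : ℝ) ^ ((20:ℝ)/3)) * (Gamma (1/3) / Real.sqrt π)^6 ∧
    (∫ t in Ioi (0:ℝ), K0 (2*t) * (I0 t)^2 * (K0 t)^2 * t)
      = (π / (2 : ℝ) ^ ((20:ℝ)/3)) * (Gamma (1/3) / Real.sqrt π)^6 := by
  have := Gamma_pos_of_pos (show (0 : ℝ) < 1 / 3 by norm_num)
  have h_pow : (Gamma (1 / 3) / √π) ^ 6 = Gamma (1 / 3) ^ 6 / π ^ 3 := by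
    rw [div_pow, show √π ^ 6 = (√π ^ 2) ^ 3 by ring, sq_sqrt pi_pos.le]
  rw [integral_IIKKK_eq_toReal, integral_KIIKK_eq_toReal, momentIIKKK_eq_Gamma,
    momentKIIKK_eq_Gamma, ENNReal.toReal_ofReal (by positivity),
    ENNReal.toReal_ofReal (by positivity), h_pow]
  refine ⟨rfl, by field_simp, by field_simp⟩
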